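/- Let R be an associative ring with identity and Q a left rooted quiver. Then (PGF(Q), Rep(Q, PGF(R)^⊥)) is a complete hereditary cotorsion pair in Rep(Q,R), and PGF(Q) ∩ Rep(Q, PGF(R)^⊥) = Prj(Q), the class of projective representations. -/

import Mathlib

open CategoryTheory CategoryTheory.Limits Opposite
open scoped DirectSum

universe w v u

namespace QuiverGF


section Cat

variable {A : Type u} [Category.{v} A] [Abelian A]

/-- `Ext¹(X,Y) = 0`, expressed as: every short exact sequence `0 → Y → E → X → 0` splits. -/
def ext1Zero (X Y : A) : Prop :=
  ∀ (E : A) (f : Y ⟶ E) (g : E ⟶ X) (w : f ≫ g = 0),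
    (ShortComplex.mk f g w).ShortExact → ∃ s : X ⟶ E, s ≫ g = 𝟙 X

/-- `extHigherZero n X Y` encodes `Ext^{n+1}(X,Y) = 0`, defined by dimension shifting along
short exact sequences `0 → Y → I → Z → 0` with `I` injective. -/
def extHigherZero : ℕ → A → A → Prop
  | 0 => fun X Y => ext1Zero X Y
  | n + 1 => fun X Y => ∀ (I Z : A) (f : Y ⟶ I) (g : I ⟶ Z) (w : f ≫ g = 0),
      Injective I → (ShortComplex.mk f g w).ShortExact → extHigherZero n X Z

/-- The right `Ext¹`-orthogonal class. -/
def rightPerp (S : Set A) : Set A := {Y | ∀ X ∈ S, ext1Zero X Y}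

/-- The left `Ext¹`-orthogonal class. -/
def leftPerp (S : Set A) : Set A := {X | ∀ Y ∈ S, ext1Zero X Y}

/-- `(X, Y)` is a cotorsion pair. -/
structure IsCotorsionPair (X Y : Set A) : Prop where
  right_eq : Y = rightPerp X
  left_eq : X = leftPerp Y

/-- Completeness of a pair of classes: every object admits approximation sequences. -/
def IsCompleteCP (X Y : Set A) : Prop :=
  (∀ M : A, ∃ (YM XM : A) (f : M ⟶ YM) (g : YM ⟶ XM) (w : f ≫ g = 0),
     (ShortComplex.mk f g w).ShortExact ∧ YM ∈ Y ∧ XM ∈ X) ∧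
  (∀ M : A, ∃ (YM XM : A) (f : YM ⟶ XM) (g : XM ⟶ M) (w : f ≫ g = 0),
     (ShortComplex.mk f g w).ShortExact ∧ YM ∈ Y ∧ XM ∈ X)

/-- Heredity: `Ext^i(X,Y) = 0` for all `i ≥ 1`. -/
def IsHereditaryCP (X Y : Set A) : Prop :=
  ∀ M ∈ X, ∀ N ∈ Y, ∀ n : ℕ, extHigherZero n M N

/-- A thick class of objects. -/
structure IsThick (W : Set A) : Prop where
  summand : ∀ Z ∈ W, ∀ (X : A) (i : X ⟶ Z) (r : Z ⟶ X), i ≫ r = 𝟙 X → X ∈ W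
  ext_closed : ∀ (S : ShortComplex A), S.ShortExact → S.X₁ ∈ W → S.X₃ ∈ W → S.X₂ ∈ W
  ker_epi : ∀ (S : ShortComplex A), S.ShortExact → S.X₂ ∈ W → S.X₃ ∈ W → S.X₁ ∈ W
  coker_mono : ∀ (S : ShortComplex A), S.ShortExact → S.X₁ ∈ W → S.X₂ ∈ W → S.X₃ ∈ W

/-- A Hovey triple. -/
structure IsHoveyTriple (C W F : Set A) : Prop where
  thick : IsThick W
  cp1 : IsCotorsionPair C (W ∩ F)
  cp1_complete : IsCompleteCP C (W ∩ F)
  cp2 : IsCotorsionPair (C ∩ W) F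
  cp2_complete : IsCompleteCP (C ∩ W) F

/-- A hereditary Hovey triple. -/
structure IsHereditaryHoveyTriple (C W F : Set A) extends IsHoveyTriple C W F : Prop where
  cp1_hereditary : IsHereditaryCP C (W ∩ F)
  cp2_hereditary : IsHereditaryCP (C ∩ W) F

/-- `f : C ⟶ M` is an `S`-cover of `M`. -/
def IsCover (S : Set A) {C M : A} (f : C ⟶ M) : Prop :=
  C ∈ S ∧ (∀ C' ∈ S, ∀ g : C' ⟶ M, ∃ h : C' ⟶ C, h ≫ f = g) ∧
    (∀ h : C ⟶ C, h ≫ f = f → IsIso h)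

/-- `f : M ⟶ E` is an `S`-envelope of `M`. -/
def IsEnvelope (S : Set A) {M E : A} (f : M ⟶ E) : Prop :=
  E ∈ S ∧ (∀ E' ∈ S, ∀ g : M ⟶ E', ∃ h : E ⟶ E', f ≫ h = g) ∧
    (∀ h : E ⟶ E, f ≫ h = f → IsIso h)

/-- A perfect pair of classes: X-covers and Y-envelopes always exist. -/
def IsPerfectCP (X Y : Set A) : Prop :=
  (∀ M : A, ∃ (C : A) (f : C ⟶ M), IsCover X f) ∧
  (∀ M : A, ∃ (E : A) (f : M ⟶ E), IsEnvelope Y f)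

/-- `W` is a cogenerator for `X`. -/
def IsCogenerator (W X : Set A) : Prop :=
  W ⊆ X ∧ ∀ M ∈ X, ∃ (W' X' : A) (f : M ⟶ W') (g : W' ⟶ X') (w : f ≫ g = 0),
    (ShortComplex.mk f g w).ShortExact ∧ W' ∈ W ∧ X' ∈ X

end Cat

section Quiver

variable (V : Type w) [Quiver.{w} V]

/-- A quiver is left rooted if it has no infinite sequence of arrows `• → • → • → ⋯`. -/
def LeftRooted : Prop := ¬ ∃ f : ℕ → V, ∀ n : ℕ, Nonempty (f n ⟶ f (n + 1))

variable {V}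
variable {A : Type u} [Category.{v} A]

/-- A vertex of `V`, seen as an object of the path category. -/
abbrev vtx (i : V) : Paths V := i

section Phi

variable [Abelian A] [HasCoproducts.{w} A]

/-- The canonical morphism `φᵢˣ : ⊕_{a : j ⟶ i} X(j) ⟶ X(i)`. -/
noncomputable def phi (X : Paths V ⥤ A) (i : V) :
    (∐ fun p : Σ j : V, j ⟶ i => X.obj (vtx p.1)) ⟶ X.obj (vtx i) :=
  Sigma.desc fun p => X.map p.2.toPath

/-- The class `Φ(S)` of representations. -/
noncomputable def PhiClass (S : Set A) : Set (Paths V ⥤ A) :=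
  {X | ∀ i : V, Mono (phi X i) ∧ X.obj (vtx i) ∈ S ∧ cokernel (phi X i) ∈ S}

end Phi

/-- The class of representations with all vertex values in `S`. -/
def RepClass (S : Set A) : Set (Paths V ⥤ A) := {X | ∀ i : V, X.obj (vtx i) ∈ S}

section Psi

variable [Abelian A] [HasProducts.{w} A]

/-- The canonical morphism `ψᵢʸ : Y(i) ⟶ Π_{a : i ⟶ j} Y(j)`. -/
noncomputable def psi (Y : Paths V ⥤ A) (i : V) :
    Y.obj (vtx i) ⟶ ∏ᶜ fun p : Σ j : V, i ⟶ j => Y.obj (vtx p.1) :=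
  Pi.lift fun p => Y.map p.2.toPath

/-- The class `Ψ(S)` of representations. -/
noncomputable def PsiClass (S : Set A) : Set (Paths V ⥤ A) :=
  {Y | ∀ i : V, Epi (psi Y i) ∧ Y.obj (vtx i) ∈ S ∧ kernel (psi Y i) ∈ S}

end Psi

end Quiver




section NcTensor

variable (R : Type u) [Ring R]

variable (E : Type u) [AddCommGroup E] [Module Rᵐᵒᵖ E]
variable (M : Type u) [AddCommGroup M] [Module R M]

/-- The defining relations of the tensor product `E ⊗_R M` of a right `R`-module `E`
and a left `R`-module `M` over a (possibly noncommutative) ring `R`. -/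
def ncRel : Submodule ℤ (TensorProduct ℤ E M) :=
  Submodule.span ℤ {z | ∃ (e : E) (r : R) (m : M),
    z = (MulOpposite.op r • e) ⊗ₜ[ℤ] m - e ⊗ₜ[ℤ] (r • m)}

/-- The tensor product `E ⊗_R M` of a right `R`-module `E` and a left `R`-module `M`. -/
abbrev NcTensor := TensorProduct ℤ E M ⧸ ncRel R E M

/-- The canonical generator `e ⊗ m` of `E ⊗_R M`. -/
noncomputable def NcTensor.tmul (e : E) (m : M) : NcTensor R E M :=
  Submodule.Quotient.mk (e ⊗ₜ[ℤ] m)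

variable {E M}
variable {E' : Type u} [AddCommGroup E'] [Module Rᵐᵒᵖ E']
variable {M' : Type u} [AddCommGroup M'] [Module R M']

/-- Functoriality of the tensor product. -/
noncomputable def NcTensor.map (f : E →ₗ[Rᵐᵒᵖ] E') (g : M →ₗ[R] M') :
    NcTensor R E M →ₗ[ℤ] NcTensor R E' M' :=
  Submodule.mapQ _ _
    (TensorProduct.map f.toAddMonoidHom.toIntLinearMap g.toAddMonoidHom.toIntLinearMap)
    (by
      refine Submodule.span_le.2 ?_
      rintro z ⟨e, r, m, rfl⟩
      refine Submodule.mem_comap.2 (Submodule.subset_span ?_)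
      exact ⟨f e, r, g m, by
        refine (map_sub (TensorProduct.map f.toAddMonoidHom.toIntLinearMap
          g.toAddMonoidHom.toIntLinearMap) _ _).trans ?_
        rw [TensorProduct.map_tmul, TensorProduct.map_tmul]
        simp [map_smul]⟩)

@[simp] lemma NcTensor.map_tmul (f : E →ₗ[Rᵐᵒᵖ] E') (g : M →ₗ[R] M') (e : E) (m : M) :
    NcTensor.map R f g (NcTensor.tmul R E M e m) = NcTensor.tmul R E' M' (f e) (g m) := by
  rfl

end NcTensor

section ModuleClasses

variable (R : Type u) [Ring R]

/-- A left `R`-module is flat if tensoring with it preserves injections of right `R`-modules. -/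
def IsFlatModule (M : ModuleCat.{u} R) : Prop :=
  ∀ (E E' : ModuleCat.{u} Rᵐᵒᵖ) (f : E ⟶ E'), Function.Injective f →
    Function.Injective (NcTensor.map R (f.hom : ↑E →ₗ[Rᵐᵒᵖ] ↑E') (LinearMap.id (M := ↑M)))

/-- Gorenstein flat left `R`-modules: cycles of exact complexes of flat modules which stay
exact after tensoring with any injective right `R`-module. -/
def IsGorensteinFlatModule (M : ModuleCat.{u} R) : Prop :=
  ∃ (F : ℤ → ModuleCat.{u} R) (d : ∀ n : ℤ, F n ⟶ F (n + 1)),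
    (∀ n, IsFlatModule R (F n)) ∧
    (∀ n, Function.Exact (d n) (d (n + 1))) ∧
    Nonempty (↑M ≃ₗ[R] ↥(LinearMap.ker ((d 0).hom : ↑(F 0) →ₗ[R] ↑(F (0 + 1))))) ∧
    ∀ (E : ModuleCat.{u} Rᵐᵒᵖ), Injective E → ∀ n : ℤ,
      Function.Exact (NcTensor.map R (LinearMap.id (M := ↑E)) ((d n).hom : ↑(F n) →ₗ[R] ↑(F (n + 1))))
        (NcTensor.map R (LinearMap.id (M := ↑E)) ((d (n + 1)).hom : ↑(F (n + 1)) →ₗ[R] ↑(F (n + 1 + 1))))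

/-- Projectively coresolved Gorenstein flat left `R`-modules. -/
def IsPGFModule (M : ModuleCat.{u} R) : Prop :=
  ∃ (P : ℤ → ModuleCat.{u} R) (d : ∀ n : ℤ, P n ⟶ P (n + 1)),
    (∀ n, Projective (P n)) ∧
    (∀ n, Function.Exact (d n) (d (n + 1))) ∧
    Nonempty (↑M ≃ₗ[R] ↥(LinearMap.ker ((d 0).hom : ↑(P 0) →ₗ[R] ↑(P (0 + 1))))) ∧
    ∀ (E : ModuleCat.{u} Rᵐᵒᵖ), Injective E → ∀ n : ℤ,
      Function.Exact (NcTensor.map R (LinearMap.id (M := ↑E)) ((d n).hom : ↑(P n) →ₗ[R] ↑(P (n + 1))))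
        (NcTensor.map R (LinearMap.id (M := ↑E)) ((d (n + 1)).hom : ↑(P (n + 1)) →ₗ[R] ↑(P (n + 1 + 1))))

/-- Gorenstein injective objects of an abelian category. -/
def IsGorensteinInjective {A : Type*} [Category A] [Abelian A] (M : A) : Prop :=
  ∃ (I : ℤ → A) (d : ∀ n : ℤ, I n ⟶ I (n + 1)),
    (∀ n, Injective (I n)) ∧
    (∀ n, ∃ w : d n ≫ d (n + 1) = 0, (ShortComplex.mk (d n) (d (n + 1)) w).Exact) ∧
    Nonempty (M ≅ kernel (d 0)) ∧
    ∀ (E : A), Injective E → ∀ n : ℤ,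
      Function.Exact (fun f : E ⟶ I n => f ≫ d n) (fun f : E ⟶ I (n + 1) => f ≫ d (n + 1))

end ModuleClasses



section Char

variable (R : Type u) [Ring R] (G : Type u) [AddCommGroup G]

section Left
variable (M : Type u) [AddCommGroup M] [Module R M]

/-- Right `R`-action on `Hom_ℤ(M, G)` for a left `R`-module `M`. -/
instance : SMul Rᵐᵒᵖ (M →+ G) :=
  ⟨fun r f => f.comp (DistribMulAction.toAddMonoidHom M r.unop)⟩

@[simp] lemma op_smul_addHom_apply (r : Rᵐᵒᵖ) (f : M →+ G) (m : M) :
    (r • f) m = f (r.unop • m) := rfl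

instance charRight : Module Rᵐᵒᵖ (M →+ G) where
  one_smul f := AddMonoidHom.ext fun m => by simp
  mul_smul r s f := AddMonoidHom.ext fun m => by simp [mul_smul]
  smul_zero r := AddMonoidHom.ext fun m => rfl
  smul_add r f g := AddMonoidHom.ext fun m => rfl
  add_smul r s f := AddMonoidHom.ext fun m => by simp [add_smul]
  zero_smul f := AddMonoidHom.ext fun m => by simp

end Left

section Right
variable (N : Type u) [AddCommGroup N] [Module Rᵐᵒᵖ N]

/-- Left `R`-action on `Hom_ℤ(N, G)` for a right `R`-module `N`. -/
instance : SMul R (N →+ G) :=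
  ⟨fun r f => f.comp (DistribMulAction.toAddMonoidHom N (MulOpposite.op r))⟩

@[simp] lemma smul_addHom_apply (r : R) (f : N →+ G) (n : N) :
    (r • f) n = f (MulOpposite.op r • n) := rfl

instance charLeft : Module R (N →+ G) where
  one_smul f := AddMonoidHom.ext fun n => by simp
  mul_smul r s f := AddMonoidHom.ext fun n => by simp [MulOpposite.op_mul, mul_smul]
  smul_zero r := AddMonoidHom.ext fun n => rfl
  smul_add r f g := AddMonoidHom.ext fun n => rfl
  add_smul r s f := AddMonoidHom.ext fun n => by simp [add_smul]
  zero_smul f := AddMonoidHom.ext fun n => by simp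

end Right

section Precomp

variable {R G}
variable {M N : Type u} [AddCommGroup M] [AddCommGroup N] [Module R M] [Module R N]

/-- Precomposition, as an `Rᵐᵒᵖ`-linear map between character modules. -/
def precompHom (h : M →ₗ[R] N) : (N →+ G) →ₗ[Rᵐᵒᵖ] (M →+ G) where
  toFun f := f.comp h.toAddMonoidHom
  map_add' f g := rfl
  map_smul' r f := AddMonoidHom.ext fun m => by simp [map_smul]

variable {P Q : Type u} [AddCommGroup P] [AddCommGroup Q] [Module Rᵐᵒᵖ P] [Module Rᵐᵒᵖ Q]

/-- Precomposition, as an `R`-linear map between character modules of right modules. -/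
def precompHomOp (h : P →ₗ[Rᵐᵒᵖ] Q) : (Q →+ G) →ₗ[R] (P →+ G) where
  toFun f := f.comp h.toAddMonoidHom
  map_add' f g := rfl
  map_smul' r f := AddMonoidHom.ext fun p => by simp [map_smul]

end Precomp

end Char


section Reps

variable (V : Type u) [Quiver.{u} V] (R : Type u) [Ring R]

/-- The category of representations of the quiver `V` with values in left `R`-modules. -/
abbrev RepL := Paths V ⥤ ModuleCat.{u} R

/-- The category of representations of the opposite quiver with values in right `R`-modules. -/
abbrev RepR := Paths Vᵒᵖ ⥤ ModuleCat.{u} Rᵐᵒᵖ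

/-- A vertex of `V`, seen as an object of the path category. -/
abbrev vtx' {V : Type u} [Quiver.{u} V] (i : V) : Paths V := i

/-- The representation `Hom(X, G) ∈ Rep(Qᵒᵖ, Rᵒᵖ)`, given vertexwise by `Hom_ℤ(X(i), G)`. -/
noncomputable def HomRepObj (X : RepL V R) (G : Type u) [AddCommGroup G] : RepR V R :=
  Paths.lift
    { obj := fun x => ModuleCat.of Rᵐᵒᵖ (↑(X.obj (vtx' x.unop)) →+ G)
      map := fun {x y} a =>
        ModuleCat.ofHom (precompHom (G := G) ((X.map a.unop.toPath).hom : ↑(X.obj (vtx' y.unop)) →ₗ[R] ↑(X.obj (vtx' x.unop))) :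
          _ →ₗ[Rᵐᵒᵖ] _) }

/-- The representation `Hom(Y, G) ∈ Rep(Q, R)` for `Y ∈ Rep(Qᵒᵖ, Rᵒᵖ)`. -/
noncomputable def HomRepObjOp (Y : RepR V R) (G : Type u) [AddCommGroup G] : RepL V R :=
  Paths.lift
    { obj := fun i => ModuleCat.of R (↑(Y.obj (vtx' (op i))) →+ G)
      map := fun {i j} a =>
        ModuleCat.ofHom (precompHomOp (G := G) ((Y.map a.op.toPath).hom : ↑(Y.obj (vtx' (op j))) →ₗ[Rᵐᵒᵖ] ↑(Y.obj (vtx' (op i)))) :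
          _ →ₗ[R] _) }

/-- The character representation `X⁺ = Hom(X, ℚ/ℤ)`. -/
noncomputable def charRep (X : RepL V R) : RepR V R :=
  HomRepObj V R X (ULift.{u} (AddCircle (1 : ℚ)))

section Tensor

variable {V R}

/-- The underlying group of the tensor product of representations before dividing out
by the relations coming from arrows. -/
noncomputable abbrev repTensorBase (Y : RepR V R) (X : RepL V R) : Type u :=
  ⨁ (i : V), NcTensor R (↑(Y.obj (vtx' (op i)))) (↑(X.obj (vtx' i)))

/-- Shortcut, so that `Submodule ℤ (repTensorBase Y X)` is stated for the structure that
comes from the additive group. -/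
noncomputable instance (Y : RepR V R) (X : RepL V R) : AddCommMonoid (repTensorBase Y X) :=
  AddCommGroup.toAddCommMonoid

open scoped Classical in
/-- The relations defining the tensor product of representations. -/
noncomputable def repTensorRel (Y : RepR V R) (X : RepL V R) :
    Submodule ℤ (repTensorBase Y X) :=
  Submodule.span ℤ {z | ∃ (i j : V) (a : i ⟶ j) (y : ↑(Y.obj (vtx' (op j)))) (x : ↑(X.obj (vtx' i))),
    z = DirectSum.of _ i (NcTensor.tmul R _ _ (Y.map a.op.toPath y) x)
      - DirectSum.of _ j (NcTensor.tmul R _ _ y (X.map a.toPath x))}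

/-- The tensor product `Y ⊗_Q X` of representations, for `Y ∈ Rep(Qᵒᵖ, Rᵒᵖ)` and
`X ∈ Rep(Q, R)`. -/
noncomputable abbrev RepTensor (Y : RepR V R) (X : RepL V R) : Type u :=
  repTensorBase Y X ⧸ repTensorRel Y X

open scoped Classical in
/-- Functoriality of the tensor product of representations. -/
noncomputable def RepTensor.map {Y Y' : RepR V R} {X X' : RepL V R}
    (g : Y ⟶ Y') (f : X ⟶ X') : RepTensor Y X →ₗ[ℤ] RepTensor Y' X' :=
  Submodule.mapQ _ _
    (DirectSum.toModule ℤ V (repTensorBase Y' X') fun i =>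
      (DirectSum.lof ℤ V _ i).comp
        (NcTensor.map R ((g.app (vtx' (op i))).hom : _ →ₗ[Rᵐᵒᵖ] _) ((f.app (vtx' i)).hom : _ →ₗ[R] _)))
    (by
      refine Submodule.span_le.2 ?_
      rintro z ⟨i, j, a, y, x, rfl⟩
      refine Submodule.mem_comap.2 ?_
      refine Submodule.subset_span ?_
      refine ⟨i, j, a, g.app (vtx' (op j)) y, f.app (vtx' i) x, ?_⟩
      have hg : g.app (vtx' (op i)) (Y.map a.op.toPath y)
          = Y'.map a.op.toPath (g.app (vtx' (op j)) y) := by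
        have h := g.naturality (a.op.toPath : vtx' (op j) ⟶ vtx' (op i))
        exact LinearMap.congr_fun (congrArg ModuleCat.Hom.hom h) y
      have hf : f.app (vtx' j) (X.map a.toPath x)
          = X'.map a.toPath (f.app (vtx' i) x) := by
        have h := f.naturality (a.toPath : vtx' i ⟶ vtx' j)
        exact LinearMap.congr_fun (congrArg ModuleCat.Hom.hom h) x
      refine (LinearMap.map_sub _ _ _).trans (congrArg₂ (· - ·) ?_ ?_)
      · refine (DirectSum.toModule_lof ℤ (M := fun i : V =>
          NcTensor R (↑(Y.obj (vtx' (op i)))) (↑(X.obj (vtx' i)))) i _).trans ?_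
        rw [← hg]
        rfl
      · refine (DirectSum.toModule_lof ℤ (M := fun i : V =>
          NcTensor R (↑(Y.obj (vtx' (op i)))) (↑(X.obj (vtx' i)))) j _).trans ?_
        rw [← hf]
        rfl)

end Tensor

end Reps




section More

variable (V : Type u) [Quiver.{u} V] (R : Type u) [Ring R]

/-- Cotorsion left `R`-modules. -/
def IsCotorsionModule (M : ModuleCat.{u} R) : Prop :=
  ∀ F : ModuleCat.{u} R, IsFlatModule R F → ext1Zero F M

/-- A right coherent ring: every finitely generated right ideal is finitely presented. -/
def RightCoherent : Prop :=
  ∀ I : Submodule Rᵐᵒᵖ R, I.FG → Module.FinitePresentation Rᵐᵒᵖ ↥I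

/-- Flat representations: colimits of projective representations. -/
def IsFlatRep (Xr : RepL V R) : Prop :=
  ∃ (J : Cat.{u, u}) (D : ↥J ⥤ RepL V R) (c : Limits.Cocone D),
    (∀ j, Projective (D.obj j)) ∧ Nonempty (Limits.IsColimit c) ∧ Nonempty (c.pt ≅ Xr)

/-- Gorenstein flat representations. -/
def IsGorensteinFlatRep (Xr : RepL V R) : Prop :=
  ∃ (F : ℤ → RepL V R) (d : ∀ n : ℤ, F (n + 1) ⟶ F n),
    (∀ n, IsFlatRep V R (F n)) ∧
    (∀ n, ∃ w : d (n + 1) ≫ d n = 0, (ShortComplex.mk (d (n + 1)) (d n) w).Exact) ∧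
    Nonempty (Xr ≅ cokernel (d 0)) ∧
    ∀ (E : RepR V R), Injective E → ∀ n : ℤ,
      Function.Exact (RepTensor.map (𝟙 E) (d (n + 1))) (RepTensor.map (𝟙 E) (d n))

/-- Projectively coresolved Gorenstein flat representations. -/
def IsPGFRep (Xr : RepL V R) : Prop :=
  ∃ (P : ℤ → RepL V R) (d : ∀ n : ℤ, P (n + 1) ⟶ P n),
    (∀ n, Projective (P n)) ∧
    (∀ n, ∃ w : d (n + 1) ≫ d n = 0, (ShortComplex.mk (d (n + 1)) (d n) w).Exact) ∧
    Nonempty (Xr ≅ cokernel (d 0)) ∧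
    ∀ (E : RepR V R), Injective E → ∀ n : ℤ,
      Function.Exact (RepTensor.map (𝟙 E) (d (n + 1))) (RepTensor.map (𝟙 E) (d n))

end More

section Swap

variable (R : Type u) [Ring R]
variable (M : Type u) [AddCommGroup M] [Module R M]
variable (E : Type u) [AddCommGroup E] [Module Rᵐᵒᵖ E]

/-- Relations for the tensor product `M ⊗_{Rᵒᵖ} E` of a right `Rᵒᵖ`-module `M`
and a left `Rᵒᵖ`-module `E`. -/
def ncRel' : Submodule ℤ (TensorProduct ℤ M E) :=
  Submodule.span ℤ {z | ∃ (m : M) (r : R) (e : E),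
    z = (r • m) ⊗ₜ[ℤ] e - m ⊗ₜ[ℤ] (MulOpposite.op r • e)}

/-- The tensor product `M ⊗_{Rᵒᵖ} E`. -/
abbrev NcTensorSwap := TensorProduct ℤ M E ⧸ ncRel' R M E

variable {M E}

/-- The generator `m ⊗ e` of `M ⊗_{Rᵒᵖ} E`. -/
noncomputable def NcTensorSwap.tmul (m : M) (e : E) : NcTensorSwap R M E :=
  Submodule.Quotient.mk (m ⊗ₜ[ℤ] e)

variable (V : Type u) [Quiver.{u} V]

/-- The base of the tensor product `X ⊗_{Qᵒᵖ} Y`. -/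
noncomputable abbrev repTensorSwapBase (X : RepL V R) (Y : RepR V R) : Type u :=
  ⨁ (i : V), NcTensorSwap R (↑(X.obj i)) (↑(Y.obj (op i)))

/-- Shortcut, so that `Submodule ℤ (repTensorSwapBase R V X Y)` is stated for the structure that
comes from the additive group. -/
noncomputable instance (X : RepL V R) (Y : RepR V R) : AddCommMonoid (repTensorSwapBase R V X Y) :=
  AddCommGroup.toAddCommMonoid

open scoped Classical in
/-- The relations of the tensor product `X ⊗_{Qᵒᵖ} Y`. -/
noncomputable def repTensorSwapRel (X : RepL V R) (Y : RepR V R) :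
    Submodule ℤ (repTensorSwapBase R V X Y) :=
  Submodule.span ℤ {z | ∃ (j i : V) (a : j ⟶ i) (x : ↑(X.obj j)) (y : ↑(Y.obj (op i))),
    z = DirectSum.of _ i (NcTensorSwap.tmul R (X.map a.toPath x) y)
      - DirectSum.of _ j (NcTensorSwap.tmul R x (Y.map a.op.toPath y))}

/-- The tensor product `X ⊗_{Qᵒᵖ} Y` of representations, i.e. the tensor product over the
opposite quiver of the opposite ring. -/
noncomputable abbrev RepTensorSwap (X : RepL V R) (Y : RepR V R) : Type u :=
  repTensorSwapBase R V X Y ⧸ repTensorSwapRel R V X Y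

end Swap

section Eval

variable {V : Type u} [Quiver.{u} V] {R : Type u} [Ring R]

/-- Evaluation helper identifying the vertex value of `Hom(X, G)` with `Hom_ℤ(X(i), G)`. -/
def homRepEval (X : RepL V R) (G : Type u) [AddCommGroup G] {v : Vᵒᵖ}
    (s : ↑((HomRepObj V R X G).obj v)) : ↑(X.obj v.unop) →+ G := s

/-- Evaluation helper identifying the vertex value of `Hom(Y, G)` with `Hom_ℤ(Y(i), G)`. -/
def homRepOpEval (Y : RepR V R) (G : Type u) [AddCommGroup G] {i : V}
    (s : ↑((HomRepObjOp V R Y G).obj i)) : ↑(Y.obj (op i)) →+ G := s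

end Eval

end QuiverGF

namespace QuiverGF

section AbsCat

variable {A : Type u} [Category.{v} A] [Abelian A]

/-- Short exact sequences, as a proposition. -/
def SES {X Y Z : A} (f : X ⟶ Y) (g : Y ⟶ Z) : Prop :=
  ∃ w : f ≫ g = 0, (ShortComplex.mk f g w).ShortExact

lemma SES.w {X Y Z : A} {f : X ⟶ Y} {g : Y ⟶ Z} (h : SES f g) : f ≫ g = 0 := h.1

lemma SES.mono {X Y Z : A} {f : X ⟶ Y} {g : Y ⟶ Z} (h : SES f g) : Mono f := h.2.mono_f

lemma SES.epi {X Y Z : A} {f : X ⟶ Y} {g : Y ⟶ Z} (h : SES f g) : Epi g := h.2.epi_g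

lemma SES.lift {X Y Z T : A} {f : X ⟶ Y} {g : Y ⟶ Z} (h : SES f g) (k : T ⟶ Y)
    (hk : k ≫ g = 0) : ∃ l : T ⟶ X, l ≫ f = k := by
  obtain ⟨w, h⟩ := h
  have := h.mono_f
  exact ⟨h.exact.lift k hk, h.exact.lift_f k hk⟩

lemma SES.desc {X Y Z T : A} {f : X ⟶ Y} {g : Y ⟶ Z} (h : SES f g) (k : Y ⟶ T)
    (hk : f ≫ k = 0) : ∃ l : Z ⟶ T, g ≫ l = k := by
  obtain ⟨w, h⟩ := h
  have := h.epi_g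
  exact ⟨h.exact.desc k hk, h.exact.g_desc k hk⟩

lemma SES.of_ker {X Y Z : A} {f : X ⟶ Y} {g : Y ⟶ Z} (hf : Mono f) (hg : Epi g) (w : f ≫ g = 0)
    (h : ∀ (T : A) (k : T ⟶ Y), k ≫ g = 0 → ∃ l : T ⟶ X, l ≫ f = k) : SES f g := by
  refine ⟨w, { exact := ?_, mono_f := hf, epi_g := hg }⟩
  refine ShortComplex.exact_of_f_is_kernel _ (KernelFork.IsLimit.ofι' f w fun {T} k hk => ?_)
  exact ⟨(h T k hk).choose, (h T k hk).choose_spec⟩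

lemma SES.of_coker {X Y Z : A} {f : X ⟶ Y} {g : Y ⟶ Z} (hf : Mono f) (hg : Epi g) (w : f ≫ g = 0)
    (h : ∀ (T : A) (k : Y ⟶ T), f ≫ k = 0 → ∃ l : Z ⟶ T, g ≫ l = k) : SES f g := by
  refine ⟨w, { exact := ?_, mono_f := hf, epi_g := hg }⟩
  refine ShortComplex.exact_of_g_is_cokernel _ (CokernelCofork.IsColimit.ofπ' g w fun {T} k hk => ?_)
  exact ⟨(h T k hk).choose, (h T k hk).choose_spec⟩

lemma SES.coker {X Y : A} (f : X ⟶ Y) [hf : Mono f] : SES f (cokernel.π f) :=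
  SES.of_coker hf inferInstance (by simp) fun _ k hk => ⟨cokernel.desc f k hk, by simp⟩

lemma SES.ker {X Y : A} (f : X ⟶ Y) [hf : Epi f] : SES (kernel.ι f) f :=
  SES.of_ker inferInstance hf (by simp) fun _ k hk => ⟨kernel.lift f k hk, by simp⟩

lemma SES.pushout {K P X N E : A} {k : K ⟶ P} {p : P ⟶ X} (h : SES k p) {φ : K ⟶ N}
    {a : P ⟶ E} {b : N ⟶ E} (sq : IsPushout k φ a b) :
    ∃ q : E ⟶ X, a ≫ q = p ∧ SES b q := by
  have hb : Mono b :=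
    (MorphismProperty.monomorphisms A).of_isPushout sq.flip
      (MorphismProperty.monomorphisms.infer_property (hf := h.mono) k)
  have := h.epi
  let q := sq.desc p 0 (by simp [h.w])
  have h1 : a ≫ q = p := sq.inl_desc _ _ _
  have h2 : b ≫ q = 0 := sq.inr_desc _ _ _
  have h3 : Epi (a ≫ q) := by rw [h1]; infer_instance
  refine ⟨q, h1, SES.of_coker hb (epi_of_epi a q) h2 fun T t ht => ?_⟩
  obtain ⟨l, hl⟩ := h.desc (a ≫ t) (by rw [← Category.assoc, sq.w, Category.assoc, ht, comp_zero])
  refine ⟨l, sq.hom_ext ?_ ?_⟩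
  · rw [← Category.assoc, h1, hl]
  · rw [← Category.assoc, h2, ht, zero_comp]

lemma SES.pullback {K P X N E : A} {k : K ⟶ P} {p : P ⟶ X} (h : SES k p) {φ : N ⟶ X}
    {a : E ⟶ P} {b : E ⟶ N} (sq : IsPullback a b p φ) :
    ∃ q : K ⟶ E, q ≫ a = k ∧ SES q b := by
  have := h.mono
  have := h.epi
  have hb : Epi b := by
    have := Abelian.epi_pullback_of_epi_f p φ
    rw [← sq.isoPullback_hom_snd]
    infer_instance
  let q := sq.lift k 0 (by simp [h.w])
  have h1 : q ≫ a = k := sq.lift_fst _ _ _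
  have h2 : q ≫ b = 0 := sq.lift_snd _ _ _
  have h3 : Mono (q ≫ a) := by rw [h1]; infer_instance
  refine ⟨q, h1, SES.of_ker (mono_of_mono q a) hb h2 fun T t ht => ?_⟩
  obtain ⟨l, hl⟩ := h.lift (t ≫ a) (by rw [Category.assoc, sq.w, ← Category.assoc, ht, zero_comp])
  refine ⟨l, sq.hom_ext ?_ ?_⟩
  · rw [Category.assoc, h1, hl]
  · rw [Category.assoc, h2, ht, comp_zero]

lemma ext1Zero.lift {X N E B : A} (h : ext1Zero X N) {f : N ⟶ E} {g : E ⟶ B} (s : SES f g)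
    (φ : X ⟶ B) : ∃ l : X ⟶ E, l ≫ g = φ := by
  obtain ⟨q, hq, sq⟩ := s.pullback (IsPullback.of_hasPullback g φ)
  obtain ⟨t, ht⟩ := h _ _ _ sq.1 sq.2
  refine ⟨t ≫ pullback.fst g φ, ?_⟩
  rw [Category.assoc, pullback.condition, ← Category.assoc, ht, Category.id_comp]

lemma ext1Zero_of_lift {X N : A} (h : ∀ (E B : A) (f : N ⟶ E) (g : E ⟶ B), SES f g →
    ∀ φ : X ⟶ B, ∃ l : X ⟶ E, l ≫ g = φ) : ext1Zero X N :=
  fun E f g w s => h E X f g ⟨w, s⟩ (𝟙 X)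

lemma SES.retraction {K P X : A} {k : K ⟶ P} {p : P ⟶ X} (h : SES k p) {s : X ⟶ P}
    (hs : s ≫ p = 𝟙 X) : ∃ r : P ⟶ K, k ≫ r = 𝟙 K := by
  obtain ⟨r, hr⟩ := h.lift (𝟙 P - p ≫ s) (by simp [hs])
  have := h.mono
  refine ⟨r, ?_⟩
  rw [← cancel_mono k, Category.assoc, hr]
  simp [reassoc_of% h.w]

lemma ext1Zero.extend {X N K P : A} (h : ext1Zero X N) {k : K ⟶ P} {p : P ⟶ X} (s : SES k p)
    (φ : K ⟶ N) : ∃ ψ : P ⟶ N, k ≫ ψ = φ := by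
  obtain ⟨q, hq, sq⟩ := s.pushout (IsPushout.of_hasPushout k φ)
  obtain ⟨t, ht⟩ := h _ _ _ sq.1 sq.2
  obtain ⟨r, hr⟩ := sq.retraction ht
  refine ⟨pushout.inl k φ ≫ r, ?_⟩
  rw [← Category.assoc, pushout.condition, Category.assoc, hr, Category.comp_id]

lemma ext1Zero_of_extend {X N K P : A} [Projective P] {k : K ⟶ P} {p : P ⟶ X} (s : SES k p)
    (h : ∀ φ : K ⟶ N, ∃ ψ : P ⟶ N, k ≫ ψ = φ) : ext1Zero X N := by
  intro E f g w hE
  have se : SES f g := ⟨w, hE⟩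
  have := se.epi
  have := s.epi
  obtain ⟨φ, hφ⟩ := se.lift (k ≫ Projective.factorThru p g) (by simp [s.w])
  obtain ⟨ψ, hψ⟩ := h φ
  obtain ⟨t, ht⟩ := s.desc (Projective.factorThru p g - ψ ≫ f) (by
    rw [Preadditive.comp_sub, ← Category.assoc k ψ, hψ, hφ, sub_self])
  refine ⟨t, ?_⟩
  rw [← cancel_epi p, ← Category.assoc, ht]
  simp [w]

lemma ext1Zero_of_lift_inj {X N I C : A} [Injective I] {k : N ⟶ I} {p : I ⟶ C} (s : SES k p)
    (h : ∀ φ : X ⟶ C, ∃ ψ : X ⟶ I, ψ ≫ p = φ) : ext1Zero X N := by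
  intro E f g w hE
  have se : SES f g := ⟨w, hE⟩
  have := se.mono
  obtain ⟨φ, hφ⟩ := se.desc (Injective.factorThru k f ≫ p) (by
    rw [← Category.assoc]; simp [s.w])
  obtain ⟨ψ, hψ⟩ := h φ
  obtain ⟨r, hr⟩ := s.lift (Injective.factorThru k f - g ≫ ψ) (by simp [hψ, hφ])
  have hr' : f ≫ r = 𝟙 N := by
    have := s.mono
    rw [← cancel_mono k, Category.assoc, hr]
    simp [reassoc_of% w]
  obtain ⟨t, ht⟩ := se.desc (𝟙 E - r ≫ f) (by simp [reassoc_of% hr'])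
  refine ⟨t, ?_⟩
  have := se.epi
  rw [← cancel_epi g, ← Category.assoc, ht]
  simp [w]

lemma ext1Zero_projective (X N : A) [Projective X] : ext1Zero X N :=
  ext1Zero_of_lift fun _ _ _ _ s φ =>
    have := s.epi
    ⟨Projective.factorThru φ _, Projective.factorThru_comp _ _⟩

lemma ext1Zero_injective (X N : A) [Injective N] : ext1Zero X N := by
  intro E f g w hE
  have se : SES f g := ⟨w, hE⟩
  have := se.mono
  have := se.epi
  have hr : f ≫ Injective.factorThru (𝟙 N) f = 𝟙 N := by simp
  obtain ⟨t, ht⟩ := se.desc (𝟙 E - Injective.factorThru (𝟙 N) f ≫ f) (by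
    rw [Preadditive.comp_sub, ← Category.assoc, hr]; simp)
  refine ⟨t, ?_⟩
  rw [← cancel_epi g, ← Category.assoc, ht]
  simp [w]

lemma ext1Zero.retract {X X' N : A} (h : ext1Zero X' N) (i : X ⟶ X') (r : X' ⟶ X)
    (hir : i ≫ r = 𝟙 X) : ext1Zero X N :=
  ext1Zero_of_lift fun _ _ _ _ s φ => by
    obtain ⟨l, hl⟩ := h.lift s (r ≫ φ)
    exact ⟨i ≫ l, by rw [Category.assoc, hl, ← Category.assoc, hir, Category.id_comp]⟩

lemma ext1Zero.extension [EnoughInjectives A] {X Y Z N : A} {f : X ⟶ Y} {g : Y ⟶ Z} (s : SES f g)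
    (h1 : ext1Zero X N) (h3 : ext1Zero Z N) : ext1Zero Y N := by
  have t := SES.coker (Injective.ι N)
  have := s.mono
  refine ext1Zero_of_lift_inj t fun φ => ?_
  obtain ⟨l, hl⟩ := h1.lift t (f ≫ φ)
  obtain ⟨m, hm⟩ := s.desc (φ - Injective.factorThru l f ≫ cokernel.π (Injective.ι N)) (by
    rw [Preadditive.comp_sub, ← Category.assoc, Injective.comp_factorThru, hl, sub_self])
  obtain ⟨n, hn⟩ := h3.lift t m
  refine ⟨g ≫ n + Injective.factorThru l f, ?_⟩
  rw [Preadditive.add_comp, Category.assoc, hn, hm, sub_add_cancel]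

lemma ext1Zero_quot {X K P M N C : A} {k : K ⟶ P} {p : P ⟶ X} (s : SES k p) [Projective P]
    {f : M ⟶ N} {g : N ⟶ C} (t : SES f g) (h1 : ext1Zero K M) (h2 : ext1Zero X N) :
    ext1Zero X C :=
  ext1Zero_of_extend s fun φ => by
    obtain ⟨l, hl⟩ := h1.lift t φ
    obtain ⟨m, hm⟩ := h2.extend s l
    exact ⟨m ≫ g, by rw [← Category.assoc, hm, hl]⟩

lemma ext1Zero_sub [EnoughProjectives A] {X P X' M N C : A} {k : X ⟶ P} {p : P ⟶ X'} (s : SES k p)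
    [Projective P] {f : M ⟶ N} {g : N ⟶ C} (t : SES f g) (h1 : ext1Zero X N) (h2 : ext1Zero X' C) :
    ext1Zero X M := by
  have r := SES.ker (Projective.π X)
  refine ext1Zero_of_extend r fun a => ?_
  obtain ⟨b, hb⟩ := h1.extend r (a ≫ f)
  obtain ⟨c, hc⟩ := r.desc (b ≫ g) (by rw [← Category.assoc, hb, Category.assoc, t.w, comp_zero])
  obtain ⟨d, hd⟩ := h2.extend s c
  have := t.epi
  have := t.mono
  obtain ⟨e, he⟩ := t.lift (b - Projective.π X ≫ k ≫ Projective.factorThru d g) (by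
    simp [hd, hc])
  refine ⟨e, ?_⟩
  rw [← cancel_mono f, Category.assoc, he, Preadditive.comp_sub, hb]
  simp

/-- Every member is a syzygy and a cosyzygy of a member. -/
def IsTwoSided (L : Set A) : Prop :=
  ∀ X ∈ L, (∃ X' ∈ L, ∃ (P : A) (f : X ⟶ P) (g : P ⟶ X'), Projective P ∧ SES f g) ∧
    (∃ X' ∈ L, ∃ (P : A) (f : X' ⟶ P) (g : P ⟶ X), Projective P ∧ SES f g)

/-- Abstract projectively coresolved Gorenstein flat objects. -/
def AbsPGF (T : Set A) : Set A :=
  {X | ∃ L, IsTwoSided L ∧ X ∈ L ∧ ∀ Y ∈ L, ∀ N ∈ T, ext1Zero Y N}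

lemma absPGF_twoSided (T : Set A) : IsTwoSided (AbsPGF T) := by
  rintro X ⟨L, hL, hX, hT⟩
  obtain ⟨⟨Y, hY, P, f, g, h⟩, ⟨Z, hZ, P', f', g', h'⟩⟩ := hL X hX
  exact ⟨⟨Y, ⟨L, hL, hY, hT⟩, P, f, g, h⟩, ⟨Z, ⟨L, hL, hZ, hT⟩, P', f', g', h'⟩⟩

lemma absPGF_ext {T : Set A} {X N : A} (hX : X ∈ AbsPGF T) (hN : N ∈ T) : ext1Zero X N := by
  obtain ⟨L, hL, hX, hT⟩ := hX
  exact hT X hX N hN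

lemma perp_quot {G : Set A} (hG : IsTwoSided G) {M N C : A} {f : M ⟶ N} {g : N ⟶ C}
    (t : SES f g) (hM : M ∈ rightPerp G) (hN : N ∈ rightPerp G) : C ∈ rightPerp G := by
  intro X hX
  obtain ⟨_, ⟨Z, hZ, P', f', g', _, s⟩⟩ := hG X hX
  exact ext1Zero_quot s t (hM Z hZ) (hN X hX)

lemma perp_sub [EnoughProjectives A] {G : Set A} (hG : IsTwoSided G) {M N C : A} {f : M ⟶ N}
    {g : N ⟶ C} (t : SES f g) (hN : N ∈ rightPerp G) (hC : C ∈ rightPerp G) :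
    M ∈ rightPerp G := by
  intro X hX
  obtain ⟨⟨Z, hZ, P', f', g', _, s⟩, _⟩ := hG X hX
  exact ext1Zero_sub s t (hN X hX) (hC Z hZ)

lemma perp_hereditary {G : Set A} (hG : IsTwoSided G) {L : Set A}
    (hL : ∀ X ∈ L, ∀ N ∈ rightPerp G, ext1Zero X N) : IsHereditaryCP L (rightPerp G) := by
  intro X hX N hN n
  induction n generalizing N with
  | zero => exact hL X hX N hN
  | succ n ih =>
    intro I Z f g w hI s
    exact ih Z (perp_quot hG ⟨w, s⟩ hN fun X _ => ext1Zero_injective X I)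

lemma projective_of_retract {X P : A} [Projective P] (i : X ⟶ P) (r : P ⟶ X)
    (h : i ≫ r = 𝟙 X) : Projective X :=
  ⟨fun f e _ => ⟨i ≫ Projective.factorThru (r ≫ f) e, by
    rw [Category.assoc, Projective.factorThru_comp, ← Category.assoc, h, Category.id_comp]⟩⟩

theorem abs_main [EnoughProjectives A] [EnoughInjectives A] {G : Set A} (hG : IsTwoSided G)
    (hP : ∀ P : A, Projective P → P ∈ rightPerp G)
    (hpre : ∀ M : A, ∃ (Y X : A) (f : M ⟶ Y) (g : Y ⟶ X), SES f g ∧ Y ∈ rightPerp G ∧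
      X ∈ leftPerp (rightPerp G)) :
    IsTwoSided (leftPerp (rightPerp G)) ∧
    IsCompleteCP (leftPerp (rightPerp G)) (rightPerp G) := by
  have hprj : ∀ Y, Y ∈ leftPerp (rightPerp G) → Y ∈ rightPerp G → Projective Y := by
    intro Y h1 h2
    have s := SES.ker (Projective.π Y)
    obtain ⟨t, ht⟩ := h1 _ (perp_sub hG s (hP _ inferInstance) h2) _ _ _ s.1 s.2
    exact projective_of_retract t _ ht
  have hext : ∀ {X Y Z : A} {f : X ⟶ Y} {g : Y ⟶ Z}, SES f g → X ∈ leftPerp (rightPerp G) →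
      Z ∈ leftPerp (rightPerp G) → Y ∈ leftPerp (rightPerp G) := by
    intro X Y Z f g s h1 h3 N hN
    exact ext1Zero.extension s (h1 N hN) (h3 N hN)
  refine ⟨fun X hX => ⟨?_, ?_⟩, ?_, ?_⟩
  · obtain ⟨Y, X', f, g, s, hY, hX'⟩ := hpre X
    exact ⟨X', hX', Y, f, g, hprj Y (hext s hX hX') hY, s⟩
  · have s := SES.ker (Projective.π X)
    refine ⟨_, ?_, _, _, _, inferInstance, s⟩
    intro N hN
    have t := SES.coker (Injective.ι N)
    have := t.epi
    have hC : cokernel (Injective.ι N) ∈ rightPerp G :=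
      perp_quot hG t hN fun X _ => ext1Zero_injective X _
    refine ext1Zero_of_lift_inj t fun φ => ?_
    obtain ⟨ψ, hψ⟩ := (hX _ hC).extend s φ
    exact ⟨kernel.ι _ ≫ Projective.factorThru ψ (cokernel.π (Injective.ι N)), by simp [hψ]⟩
  · intro M
    obtain ⟨Y, X, f, g, s, hY, hX⟩ := hpre M
    exact ⟨Y, X, f, g, s.1, s.2, hY, hX⟩
  · intro M
    have s := SES.ker (Projective.π M)
    obtain ⟨Y, X, f, g, t, hY, hX⟩ := hpre (kernel (Projective.π M))
    have sq := IsPushout.of_hasPushout (kernel.ι (Projective.π M)) f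
    obtain ⟨q, -, s1⟩ := s.pushout sq
    obtain ⟨q', -, s2⟩ := t.pushout sq.flip
    exact ⟨Y, _, _, _, s1.1, s1.2, hY,
      hext s2 (fun N _ => ext1Zero_projective _ N) hX⟩

end AbsCat
end QuiverGF

namespace QuiverGF

lemma exists_int_seq {α : Type*} (r : α → α → Prop) (h1 : ∀ a, ∃ b, r a b) (h2 : ∀ a, ∃ b, r b a)
    (a : α) : ∃ x : ℤ → α, x 0 = a ∧ ∀ n, r (x n) (x (n + 1)) := by
  choose s hs using h1
  choose p hp using h2
  refine ⟨fun n => Int.rec (fun k => s^[k] a) (fun k => p^[k + 1] a) n, rfl, fun n => ?_⟩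
  rcases n with k | k
  · change r (s^[k] a) (s^[k + 1] a)
    rw [Function.iterate_succ_apply']; exact hs _
  · cases k with
    | zero => exact hp a
    | succ k =>
      have : Int.negSucc (k + 1) + 1 = Int.negSucc k := by omega
      rw [this]
      change r (p^[k + 1 + 1] a) (p^[k + 1] a)
      rw [Function.iterate_succ_apply' p (k + 1)]; exact hp _

section AbsCat

variable {A : Type u} [Category.{v} A] [Abelian A]

lemma SES.exact_comp {X P Y : A} {f : X ⟶ P} {g : P ⟶ Y}
    {Q W : A} {q : Q ⟶ X} {j : Y ⟶ W} [Epi q] [Mono j]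
    (s : SES f g) : ∃ w : (q ≫ f) ≫ (g ≫ j) = 0, (ShortComplex.mk (q ≫ f) (g ≫ j) w).Exact := by
  have w : (q ≫ f) ≫ (g ≫ j) = 0 := by simp [reassoc_of% s.w]
  refine ⟨w, ?_⟩
  obtain ⟨w0, s⟩ := s
  rw [ShortComplex.exact_iff_exact_up_to_refinements]
  intro T k hk
  have hk' : k ≫ g = 0 := by
    rw [← cancel_mono j]; simpa using hk
  obtain ⟨l, hl⟩ := SES.lift ⟨w0, s⟩ k hk'
  refine ⟨Limits.pullback l q, pullback.fst l q, inferInstance, pullback.snd l q, ?_⟩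
  rw [← hl, ← Category.assoc, pullback.condition, Category.assoc]

lemma hom_exact_iff {Q X P Y P' Z N : A} {q : Q ⟶ X} {f : X ⟶ P} {g : P ⟶ Y} {f' : Y ⟶ P'}
    {g' : P' ⟶ Z} [Epi q] [Projective P'] (s : SES f g) (s' : SES f' g') :
    (∀ β : P ⟶ N, (q ≫ f) ≫ β = 0 → ∃ γ : P' ⟶ N, (g ≫ f') ≫ γ = β) ↔ ext1Zero Z N := by
  have := s.epi
  refine ⟨fun h => ext1Zero_of_extend s' fun φ => ?_, fun h β hβ => ?_⟩
  · obtain ⟨γ, hγ⟩ := h (g ≫ φ) (by simp [reassoc_of% s.w])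
    exact ⟨γ, by rw [← cancel_epi g, ← hγ, Category.assoc]⟩
  · have : f ≫ β = 0 := by rw [← cancel_epi q]; simpa using hβ
    obtain ⟨l, hl⟩ := s.desc β this
    obtain ⟨γ, hγ⟩ := h.extend s' l
    exact ⟨γ, by rw [Category.assoc, hγ, hl]⟩

lemma absPGF_exists_desc {T : Set A} {X : A} (hX : X ∈ AbsPGF T) :
    ∃ (P : ℤ → A) (d : ∀ n : ℤ, P (n + 1) ⟶ P n), (∀ n, Projective (P n)) ∧
    (∀ n, ∃ w : d (n + 1) ≫ d n = 0, (ShortComplex.mk (d (n + 1)) (d n) w).Exact) ∧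
    Nonempty (X ≅ cokernel (d 0)) ∧ ∀ N ∈ T, ∀ (n : ℤ) (β : P (n + 1) ⟶ N),
      d (n + 1) ≫ β = 0 → ∃ γ : P n ⟶ N, d n ≫ γ = β := by
  obtain ⟨L, hL, hX, hT⟩ := hX
  obtain ⟨x, hx0, hx⟩ := exists_int_seq (α := L)
    (fun a b => ∃ (P : A) (f : b.1 ⟶ P) (g : P ⟶ a.1), Projective P ∧ SES f g)
    (fun a => by obtain ⟨Y, hY, h⟩ := (hL a.1 a.2).2; exact ⟨⟨Y, hY⟩, h⟩)
    (fun a => by obtain ⟨Y, hY, h⟩ := (hL a.1 a.2).1; exact ⟨⟨Y, hY⟩, h⟩) ⟨X, hX⟩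
  choose P f g hP s using hx
  have e : ∀ n, Epi (g n) := fun n => (s n).epi
  have m : ∀ n, Mono (f n) := fun n => (s n).mono
  refine ⟨P, fun n => g (n + 1) ≫ f n, hP, fun n => ?_, ?_, ?_⟩
  · exact SES.exact_comp (s (n + 1))
  · have hx0' : (x 0).1 = X := by rw [hx0]
    rw [← hx0']
    have : (s 0).2.exact = (s 0).2.exact := rfl
    refine ⟨(cokernelEpiComp _ _ ≪≫ ?_).symm⟩
    exact (cokernelIsCokernel (f 0)).coconePointUniqueUpToIso (s 0).2.gIsCokernel
  · intro N hN n β hβ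
    have := hP n
    exact (hom_exact_iff (s (n + 1)) (s n)).2 (hT _ (x n).2 N hN) β hβ

lemma absPGF_exists_asc {T : Set A} {X : A} (hX : X ∈ AbsPGF T) :
    ∃ (P : ℤ → A) (d : ∀ n : ℤ, P n ⟶ P (n + 1)), (∀ n, Projective (P n)) ∧
    (∀ n, ∃ w : d n ≫ d (n + 1) = 0, (ShortComplex.mk (d n) (d (n + 1)) w).Exact) ∧
    Nonempty (X ≅ kernel (d 0)) ∧ ∀ N ∈ T, ∀ (n : ℤ) (β : P (n + 1) ⟶ N),
      d n ≫ β = 0 → ∃ γ : P (n + 1 + 1) ⟶ N, d (n + 1) ≫ γ = β := by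
  obtain ⟨L, hL, hX, hT⟩ := hX
  obtain ⟨x, hx0, hx⟩ := exists_int_seq (α := L)
    (fun b a => ∃ (P : A) (f : b.1 ⟶ P) (g : P ⟶ a.1), Projective P ∧ SES f g)
    (fun a => by obtain ⟨Y, hY, h⟩ := (hL a.1 a.2).1; exact ⟨⟨Y, hY⟩, h⟩)
    (fun a => by obtain ⟨Y, hY, h⟩ := (hL a.1 a.2).2; exact ⟨⟨Y, hY⟩, h⟩) ⟨X, hX⟩
  choose P f g hP s using hx
  have e : ∀ n, Epi (g n) := fun n => (s n).epi
  have m : ∀ n, Mono (f n) := fun n => (s n).mono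
  refine ⟨P, fun n => g n ≫ f (n + 1), hP, fun n => ?_, ?_, ?_⟩
  · exact SES.exact_comp (s (n + 1))
  · have hx0' : (x 0).1 = X := by rw [hx0]
    rw [← hx0']
    refine ⟨(kernelCompMono _ _ ≪≫ ?_).symm⟩
    exact (kernelIsKernel (g 0)).conePointUniqueUpToIso (s 0).2.fIsKernel
  · intro N hN n β hβ
    have := hP (n + 1 + 1)
    exact (hom_exact_iff (s (n + 1)) (s (n + 1 + 1))).2 (hT _ (x (n + 1 + 1 + 1)).2 N hN) β hβ

lemma absPGF_iso {T : Set A} {X Y : A} (e : X ≅ Y) (hY : Y ∈ AbsPGF T) : X ∈ AbsPGF T := by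
  obtain ⟨⟨Z, hZ, P, f, g, hP, s⟩, ⟨Z', hZ', P', f', g', hP', s'⟩⟩ := absPGF_twoSided T Y hY
  have h1 : SES (e.hom ≫ f) g := by
    have := s.mono; have := s.epi
    refine SES.of_ker inferInstance inferInstance (by simp [s.w]) fun R k hk => ?_
    obtain ⟨l, hl⟩ := s.lift k hk
    exact ⟨l ≫ e.inv, by simpa using hl⟩
  have h2 : SES f' (g' ≫ e.inv) := by
    have := s'.mono; have := s'.epi
    refine SES.of_ker inferInstance inferInstance (by simp [reassoc_of% s'.w]) fun R k hk => ?_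
    refine s'.lift k ?_
    rw [← cancel_mono e.inv]; simpa using hk
  refine ⟨insert X (AbsPGF T), ?_, Set.mem_insert _ _, ?_⟩
  · rintro W (rfl | hW)
    · exact ⟨⟨Z, Or.inr hZ, P, _, g, hP, h1⟩, ⟨Z', Or.inr hZ', P', f', _, hP', h2⟩⟩
    · obtain ⟨⟨Z, hZ, h⟩, ⟨Z', hZ', h'⟩⟩ := absPGF_twoSided T W hW
      exact ⟨⟨Z, Or.inr hZ, h⟩, ⟨Z', Or.inr hZ', h'⟩⟩
  · rintro W (rfl | hW) N hN
    · exact (absPGF_ext hY hN).retract e.hom e.inv (by simp)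
    · exact absPGF_ext hW hN

lemma absPGF_of_seq {T : Set A} (x : ℤ → A) (P : ℤ → A) (f : ∀ n, x n ⟶ P n)
    (g : ∀ n, P n ⟶ x (n + 1)) (hP : ∀ n, Projective (P n)) (s : ∀ n, SES (f n) (g n))
    (h : ∀ N ∈ T, ∀ n, ext1Zero (x n) N) (n : ℤ) : x n ∈ AbsPGF T := by
  refine ⟨Set.range x, ?_, ⟨n, rfl⟩, ?_⟩
  · rintro _ ⟨n, rfl⟩
    refine ⟨⟨_, ⟨n + 1, rfl⟩, _, _, _, hP n, s n⟩, ?_⟩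
    obtain ⟨m, rfl⟩ : ∃ m, n = m + 1 := ⟨n - 1, by ring⟩
    exact ⟨_, ⟨m, rfl⟩, _, _, _, hP m, s m⟩
  · rintro _ ⟨n, rfl⟩ N hN
    exact h N hN n

lemma absPGF_of_asc {T : Set A} (P : ℤ → A) (d : ∀ n : ℤ, P n ⟶ P (n + 1))
    (hP : ∀ n, Projective (P n))
    (hd : ∀ n, ∃ w : d n ≫ d (n + 1) = 0, (ShortComplex.mk (d n) (d (n + 1)) w).Exact)
    (h : ∀ N ∈ T, ∀ (n : ℤ) (β : P (n + 1) ⟶ N),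
      d n ≫ β = 0 → ∃ γ : P (n + 1 + 1) ⟶ N, d (n + 1) ≫ γ = β) (n : ℤ) :
    kernel (d n) ∈ AbsPGF T := by
  have hw : ∀ n, d n ≫ d (n + 1) = 0 := fun n => (hd n).1
  have hg : ∀ n, Epi (kernel.lift (d (n + 1)) (d n) (hw n)) := fun n =>
    ((ShortComplex.mk (d n) (d (n + 1)) (hw n)).exact_iff_epi_kernel_lift).1 (hd n).2
  have s : ∀ n, SES (kernel.ι (d n)) (kernel.lift (d (n + 1)) (d n) (hw n)) := fun n => by
    refine SES.of_ker inferInstance (hg n) ?_ fun R k hk => ?_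
    · rw [← cancel_mono (kernel.ι (d (n + 1)))]; simp [kernel.condition]
    · refine ⟨kernel.lift (d n) k ?_, kernel.lift_ι _ _ _⟩
      have := congr($hk ≫ kernel.ι _); simpa using this
  refine absPGF_of_seq (fun n => kernel (d n)) P _ _ hP s (fun N hN n => ?_) n
  obtain ⟨m, rfl⟩ : ∃ m, n = m + 1 + 1 + 1 := ⟨n - 3, by ring⟩
  have := hP (m + 1 + 1)
  have := hg m
  refine (hom_exact_iff (q := kernel.lift (d (m + 1)) (d m) (hw m)) (s (m + 1)) (s (m + 1 + 1))).1 ?_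
  intro β hβ
  obtain ⟨γ, hγ⟩ := h N hN m β (by simpa using hβ)
  exact ⟨γ, by simpa using hγ⟩

lemma absPGF_of_desc {T : Set A} (P : ℤ → A) (d : ∀ n : ℤ, P (n + 1) ⟶ P n)
    (hP : ∀ n, Projective (P n))
    (hd : ∀ n, ∃ w : d (n + 1) ≫ d n = 0, (ShortComplex.mk (d (n + 1)) (d n) w).Exact)
    (h : ∀ N ∈ T, ∀ (n : ℤ) (β : P (n + 1) ⟶ N),
      d (n + 1) ≫ β = 0 → ∃ γ : P n ⟶ N, d n ≫ γ = β) (n : ℤ) :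
    cokernel (d n) ∈ AbsPGF T := by
  have hw : ∀ n, d (n + 1) ≫ d n = 0 := fun n => (hd n).1
  have hf : ∀ n, Mono (cokernel.desc (d (n + 1)) (d n) (hw n)) := fun n =>
    ((ShortComplex.mk (d (n + 1)) (d n) (hw n)).exact_iff_mono_cokernel_desc).1 (hd n).2
  have s : ∀ n, SES (cokernel.desc (d (n + 1)) (d n) (hw n)) (cokernel.π (d n)) := fun n => by
    refine SES.of_coker (hf n) inferInstance ?_ fun R k hk => ?_
    · rw [← cancel_epi (cokernel.π (d (n + 1)))]; simp [cokernel.condition]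
    · refine ⟨cokernel.desc (d n) k ?_, cokernel.π_desc _ _ _⟩
      have := congr(cokernel.π _ ≫ $hk); simpa using this
  have ext : ∀ N ∈ T, ∀ n, ext1Zero (cokernel (d n)) N := fun N hN n => by
    have := hP n
    refine (hom_exact_iff (q := cokernel.π (d (n + 1 + 1))) (s (n + 1)) (s n)).1 ?_
    intro β hβ
    obtain ⟨γ, hγ⟩ := h N hN n β (by simpa using hβ)
    exact ⟨γ, by simpa using hγ⟩
  refine ⟨Set.range fun n => cokernel (d n), ?_, ⟨n, rfl⟩, ?_⟩
  · rintro _ ⟨n, rfl⟩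
    refine ⟨?_, ⟨_, ⟨n + 1, rfl⟩, _, _, _, hP n, s n⟩⟩
    obtain ⟨m, rfl⟩ : ∃ m, n = m + 1 := ⟨n - 1, by ring⟩
    exact ⟨_, ⟨m, rfl⟩, _, _, _, hP m, s m⟩
  · rintro _ ⟨n, rfl⟩ N hN
    exact ext N hN n

end AbsCat
end QuiverGF

namespace QuiverGF

/-- The group `ℚ/ℤ` in universe `u`. -/
abbrev QZ : Type u := ULift.{u} (AddCircle (1 : ℚ))

section Chars

lemma char_extend {A B : Type u} [AddCommGroup A] [AddCommGroup B] (f : A →+ B)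
    (hf : Function.Injective f) (χ : A →+ QZ.{u}) : ∃ ξ : B →+ QZ.{u}, ∀ a, ξ (f a) = χ a := by
  obtain ⟨ξ, hξ⟩ := CharacterModule.dual_surjective_of_injective f.toIntLinearMap hf
    ((AddEquiv.ulift.toAddMonoidHom.comp χ : A →+ AddCircle (1 : ℚ)) : CharacterModule A)
  refine ⟨AddEquiv.ulift.symm.toAddMonoidHom.comp (ξ : B →+ AddCircle (1 : ℚ)), fun a => ?_⟩
  exact ULift.ext _ _ (DFunLike.congr_fun hξ a)

lemma char_sep {A : Type u} [AddCommGroup A] {a : A} (ha : a ≠ 0) :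
    ∃ χ : A →+ QZ.{u}, χ a ≠ 0 := by
  obtain ⟨c, hc⟩ := CharacterModule.exists_character_apply_ne_zero_of_ne_zero ha
  refine ⟨AddEquiv.ulift.symm.toAddMonoidHom.comp (c : A →+ AddCircle (1 : ℚ)), fun h => hc ?_⟩
  exact congrArg ULift.down h

lemma char_sep_mod {A : Type u} [AddCommGroup A] (S : AddSubgroup A) {a : A} (ha : a ∉ S) :
    ∃ χ : A →+ QZ.{u}, χ a ≠ 0 ∧ ∀ s ∈ S, χ s = 0 := by
  obtain ⟨χ, hχ⟩ := char_sep (A := A ⧸ S) (a := QuotientAddGroup.mk a) (by simpa using ha)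
  refine ⟨χ.comp (QuotientAddGroup.mk' S), hχ, fun s hs => ?_⟩
  have : (QuotientAddGroup.mk' S) s = 0 := by simpa using hs
  rw [AddMonoidHom.comp_apply, this, map_zero]

lemma char_factor {B C : Type u} [AddCommGroup B] [AddCommGroup C]
    (g : B →+ C) (χ : B →+ QZ.{u}) (h : ∀ b, g b = 0 → χ b = 0) :
    ∃ ξ : C →+ QZ.{u}, ∀ b, ξ (g b) = χ b := by
  obtain ⟨ξ, hξ⟩ := char_extend (QuotientAddGroup.kerLift g) (QuotientAddGroup.kerLift_injective g)
    (QuotientAddGroup.lift g.ker χ fun b hb => h b hb)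
  exact ⟨ξ, fun b => hξ (QuotientAddGroup.mk b)⟩

lemma exact_iff_char {A B C : Type u} [AddCommGroup A] [AddCommGroup B] [AddCommGroup C]
    (f : A →+ B) (g : B →+ C) (w : ∀ a, g (f a) = 0) : Function.Exact f g ↔
    ∀ χ : B →+ QZ.{u}, (∀ a, χ (f a) = 0) → ∃ ξ : C →+ QZ.{u}, ∀ b, ξ (g b) = χ b := by
  refine ⟨fun h χ hχ => char_factor g χ fun b hb => ?_, fun h b => ⟨fun hb => ?_, ?_⟩⟩
  · obtain ⟨a, rfl⟩ := (h b).1 hb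
    exact hχ a
  · by_contra hb'
    obtain ⟨χ, h1, h2⟩ := char_sep_mod f.range (a := b) (by simpa using hb')
    obtain ⟨ξ, hξ⟩ := h χ fun a => h2 _ ⟨a, rfl⟩
    exact h1 (by rw [← hξ, hb, map_zero])
  · rintro ⟨a, rfl⟩; exact w a

end Chars

section NcDual

variable {R : Type u} [Ring R] {E : Type u} [AddCommGroup E] [Module Rᵐᵒᵖ E]
variable {M : Type u} [AddCommGroup M] [Module R M] {G : Type u} [AddCommGroup G]

lemma NcTensor.induction {p : NcTensor R E M → Prop} (h0 : p 0)
    (h1 : ∀ e m, p (NcTensor.tmul R E M e m)) (h2 : ∀ x y, p x → p y → p (x + y)) (z) : p z := by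
  obtain ⟨z, rfl⟩ := Submodule.Quotient.mk_surjective _ z
  induction z using TensorProduct.induction_on with
  | zero => exact h0
  | tmul e m => exact h1 e m
  | add x y hx hy => exact h2 _ _ hx hy

/-- Maps out of the tensor product. -/
noncomputable def ncLift (β : M →ₗ[R] (E →+ G)) : NcTensor R E M →+ G :=
  (Submodule.liftQ (ncRel R E M) (TensorProduct.lift
    (LinearMap.mk₂ ℤ (fun e m => β m e) (fun a b c => by simp) (fun n a b => by simp)
      (fun a b c => by simp) (fun n a b => by simp))) (by
    refine Submodule.span_le.2 ?_
    rintro z ⟨e, r, m, rfl⟩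
    refine LinearMap.mem_ker.2 ((LinearMap.map_sub _ _ _).trans ?_)
    change β m (MulOpposite.op r • e) - β (r • m) e = 0
    rw [LinearMap.map_smul β, smul_addHom_apply, sub_self])).toAddMonoidHom

@[simp] lemma ncLift_tmul (β : M →ₗ[R] (E →+ G)) (e : E) (m : M) :
    ncLift β (NcTensor.tmul R E M e m) = β m e := rfl

lemma NcTensor.tmul_add (e : E) (m m' : M) : NcTensor.tmul R E M e (m + m') =
    NcTensor.tmul R E M e m + NcTensor.tmul R E M e m' := by
  simp only [NcTensor.tmul, TensorProduct.tmul_add, Submodule.Quotient.mk_add]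

lemma NcTensor.add_tmul (e e' : E) (m : M) : NcTensor.tmul R E M (e + e') m =
    NcTensor.tmul R E M e m + NcTensor.tmul R E M e' m := by
  simp only [NcTensor.tmul, TensorProduct.add_tmul, Submodule.Quotient.mk_add]

lemma NcTensor.smul_tmul (e : E) (r : R) (m : M) : NcTensor.tmul R E M (MulOpposite.op r • e) m =
    NcTensor.tmul R E M e (r • m) :=
  (Submodule.Quotient.eq _).2 (Submodule.subset_span ⟨e, r, m, rfl⟩)

/-- The linear map corresponding to a map out of the tensor product. -/
noncomputable def ncUnlift (χ : NcTensor R E M →+ G) : M →ₗ[R] (E →+ G) where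
  toFun m := AddMonoidHom.mk' (fun e => χ (NcTensor.tmul R E M e m)) fun a b => by
    rw [NcTensor.add_tmul, map_add]
  map_add' m m' := AddMonoidHom.ext fun e => by
    simp [NcTensor.tmul_add]
  map_smul' r m := AddMonoidHom.ext fun e => by
    simp [NcTensor.smul_tmul]

@[simp] lemma ncUnlift_apply (χ : NcTensor R E M →+ G) (e : E) (m : M) :
    ncUnlift χ m e = χ (NcTensor.tmul R E M e m) := rfl

lemma nc_hom_ext {f g : NcTensor R E M →+ G} (h : ∀ e m, f (NcTensor.tmul R E M e m) =
    g (NcTensor.tmul R E M e m)) (z) : f z = g z := by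
  induction z using NcTensor.induction with
  | h0 => simp
  | h1 e m => exact h e m
  | h2 x y hx hy => simp [hx, hy]

lemma nc_exact_iff {M₁ M₂ M₃ : Type u} [AddCommGroup M₁] [AddCommGroup M₂] [AddCommGroup M₃]
    [Module R M₁] [Module R M₂] [Module R M₃] (f : M₁ →ₗ[R] M₂) (g : M₂ →ₗ[R] M₃)
    (w : ∀ x, g (f x) = 0) :
    Function.Exact (NcTensor.map R (LinearMap.id (M := E)) f) (NcTensor.map R LinearMap.id g) ↔
    ∀ β : M₂ →ₗ[R] (E →+ QZ.{u}), β.comp f = 0 → ∃ γ : M₃ →ₗ[R] (E →+ QZ.{u}), γ.comp g = β := by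
  refine (exact_iff_char (NcTensor.map R (LinearMap.id (M := E)) f).toAddMonoidHom
    (NcTensor.map R (LinearMap.id (M := E)) g).toAddMonoidHom ?_).trans
    ⟨fun h β hβ => ?_, fun h χ hχ => ?_⟩
  · intro z
    induction z using NcTensor.induction with
    | h0 => simp
    | h1 e m =>
      change NcTensor.tmul R E M₃ e (g (f m)) = 0
      rw [w, ← zero_smul R (0 : M₃), ← NcTensor.smul_tmul]
      simp [NcTensor.tmul]
    | h2 x y hx hy => rw [map_add, map_add, hx, hy, add_zero]
  · obtain ⟨ξ, hξ⟩ := h (ncLift β) (fun z => by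
      refine nc_hom_ext (f := (ncLift β).comp (NcTensor.map R (LinearMap.id (M := E)) f).toAddMonoidHom)
        (g := 0) (fun e m => ?_) z
      exact DFunLike.congr_fun (LinearMap.congr_fun hβ m) e)
    refine ⟨ncUnlift ξ, LinearMap.ext fun m => AddMonoidHom.ext fun e => ?_⟩
    exact hξ (NcTensor.tmul R E M₂ e m)
  · obtain ⟨γ, hγ⟩ := h (ncUnlift χ) (LinearMap.ext fun m => AddMonoidHom.ext fun e =>
      hχ (NcTensor.tmul R E M₁ e m))
    refine ⟨ncLift γ, fun z => ?_⟩
    refine nc_hom_ext (f := (ncLift γ).comp (NcTensor.map R (LinearMap.id (M := E)) g).toAddMonoidHom)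
        (g := χ) (fun e m => ?_) z
    exact DFunLike.congr_fun (LinearMap.congr_fun hγ m) e

end NcDual

section RepDual

variable {V : Type u} [Quiver.{u} V] {R : Type u} [Ring R]

/-- Naturality can be checked on arrows. -/
def natMk {C : Type*} [Category* C] {X Y : Paths V ⥤ C}
    (t : ∀ i : V, X.obj (vtx i) ⟶ Y.obj (vtx i))
    (h : ∀ (i j : V) (a : i ⟶ j), X.map a.toPath ≫ t j = t i ≫ Y.map a.toPath) : X ⟶ Y where
  app i := t i
  naturality i j p := by
    induction p using Paths.induction_fixed_source with
    | id => simp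
    | comp p q ih =>
      refine (congrArg (· ≫ t _) (X.map_comp p _)).trans ?_
      refine (Category.assoc _ _ _).trans ?_
      refine (congrArg (X.map p ≫ ·) (h _ _ q)).trans ?_
      refine (Category.assoc _ _ _).symm.trans ?_
      refine (congrArg (· ≫ Y.map _) ih).trans ?_
      refine (Category.assoc _ _ _).trans ?_
      exact congrArg (t _ ≫ ·) (Y.map_comp p _).symm

lemma homRepObjOp_map (Y : RepR V R) (G : Type u) [AddCommGroup G] {i j : V} (a : i ⟶ j) :
    (HomRepObjOp V R Y G).map (X := vtx' i) (Y := vtx' j) a.toPath =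
    ModuleCat.ofHom (precompHomOp (G := G) ((Y.map a.op.toPath).hom : ↑(Y.obj (vtx' (op j))) →ₗ[Rᵐᵒᵖ] ↑(Y.obj (vtx' (op i))))) :=
  Paths.lift_toPath _ a

open scoped Classical in
lemma RepTensor.induction {Y : RepR V R} {X : RepL V R} {p : RepTensor Y X → Prop} (h0 : p 0)
    (h1 : ∀ (i : V) y x, p (Submodule.Quotient.mk (DirectSum.of _ i (NcTensor.tmul R _ _ y x))))
    (h2 : ∀ x y, p x → p y → p (x + y)) (z) : p z := by
  obtain ⟨z, rfl⟩ := Submodule.Quotient.mk_surjective _ z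
  induction z using DirectSum.induction_on with
  | zero => exact h0
  | of i z =>
    induction z using NcTensor.induction with
    | h0 => simpa using h0
    | h1 e m => exact h1 i e m
    | h2 x y hx hy => rw [map_add, Submodule.Quotient.mk_add]; exact h2 _ _ hx hy
  | add x y hx hy => exact h2 _ _ hx hy

/-- The generators. -/
noncomputable def RepTensor.tmul {Y : RepR V R} {X : RepL V R} (i : V)
    (y : ↑(Y.obj (vtx' (op i)))) (x : ↑(X.obj (vtx' i))) : RepTensor Y X :=
  open scoped Classical in
  Submodule.Quotient.mk (DirectSum.of _ i (NcTensor.tmul R _ _ y x))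

lemma RepTensor.tmul_rel {Y : RepR V R} {X : RepL V R} {i j : V} (a : i ⟶ j)
    (y : ↑(Y.obj (vtx' (op j)))) (x : ↑(X.obj (vtx' i))) :
    RepTensor.tmul i (Y.map a.op.toPath y) x = RepTensor.tmul j y (X.map a.toPath x) :=
  (Submodule.Quotient.eq _).2 (Submodule.subset_span ⟨i, j, a, y, x, rfl⟩)

open scoped Classical in
lemma RepTensor.map_tmul {Y Y' : RepR V R} {X X' : RepL V R}
    (g : Y ⟶ Y') (f : X ⟶ X') (i : V) (y) (x) :
    RepTensor.map g f (RepTensor.tmul i y x) =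
      RepTensor.tmul i (g.app (vtx' (op i)) y) (f.app (vtx' i) x) := by
  refine congrArg Submodule.Quotient.mk ?_
  exact (DirectSum.toModule_lof ℤ (M := fun i : V =>
          NcTensor R (↑(Y.obj (vtx' (op i)))) (↑(X.obj (vtx' i)))) i _)

/-- The value at a vertex of a morphism into a dual representation. -/
noncomputable def dualApp {Y : RepR V R} {X : RepL V R} {G : Type u} [AddCommGroup G]
    (β : X ⟶ HomRepObjOp V R Y G) (i : V) :
    ↑(X.obj (vtx' i)) →ₗ[R] (↑(Y.obj (vtx' (op i))) →+ G) := (β.app (vtx' i)).hom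

lemma dualApp_arrow {Y : RepR V R} {X : RepL V R} {G : Type u} [AddCommGroup G]
    (β : X ⟶ HomRepObjOp V R Y G) {i j : V} (a : i ⟶ j) (y : ↑(Y.obj (vtx' (op j)))) (x) :
    dualApp β j (X.map a.toPath x) y = dualApp β i x (Y.map a.op.toPath y) := by
  have h := β.naturality (X := vtx' i) (Y := vtx' j) a.toPath
  rw [homRepObjOp_map] at h
  exact congrArg (fun t : ↑(Y.obj (vtx' (op j))) →+ G => t y)
    (LinearMap.congr_fun (congrArg ModuleCat.Hom.hom h) x)

/-- Build a morphism into a dual representation. -/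
noncomputable def dualMk {Y : RepR V R} {X : RepL V R} {G : Type u} [AddCommGroup G]
    (t : ∀ i : V, ↑(X.obj (vtx' i)) →ₗ[R] (↑(Y.obj (vtx' (op i))) →+ G))
    (h : ∀ (i j : V) (a : i ⟶ j) (y : ↑(Y.obj (vtx' (op j)))) (x),
      t j (X.map a.toPath x) y = t i x (Y.map a.op.toPath y)) :
    X ⟶ HomRepObjOp V R Y G :=
  natMk (fun i => (ModuleCat.ofHom (t i) : X.obj (vtx' i) ⟶ ModuleCat.of R _)) fun i j a => by
    rw [homRepObjOp_map]
    refine ModuleCat.hom_ext (LinearMap.ext fun x => AddMonoidHom.ext fun y => h i j a y x)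

open scoped Classical in
/-- Maps out of the tensor product. -/
noncomputable def repLift {Y : RepR V R} {X : RepL V R} {G : Type u} [AddCommGroup G]
    (β : X ⟶ HomRepObjOp V R Y G) : RepTensor Y X →+ G :=
  (Submodule.liftQ (repTensorRel Y X)
    (DirectSum.toAddMonoid fun i => ncLift (dualApp β i) : repTensorBase Y X →+ G).toIntLinearMap (by
    refine Submodule.span_le.2 ?_
    rintro z ⟨i, j, a, y, x, rfl⟩
    simp only [SetLike.mem_coe, LinearMap.mem_ker, AddMonoidHom.coe_toIntLinearMap]
    refine (map_sub (DirectSum.toAddMonoid fun i => ncLift (dualApp β i)) _ _).trans ?_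
    rw [DirectSum.toAddMonoid_of, DirectSum.toAddMonoid_of, ncLift_tmul, ncLift_tmul,
      dualApp_arrow, sub_self])).toAddMonoidHom

open scoped Classical in
@[simp] lemma repLift_tmul {Y : RepR V R} {X : RepL V R} {G : Type u} [AddCommGroup G]
    (β : X ⟶ HomRepObjOp V R Y G) (i : V) (y) (x) :
    repLift β (RepTensor.tmul i y x) = dualApp β i x y :=
  (DirectSum.toAddMonoid_of (fun i => ncLift (dualApp β i)) i _).trans rfl

open scoped Classical in
/-- The morphism corresponding to a map out of the tensor product. -/
noncomputable def repUnlift {Y : RepR V R} {X : RepL V R} {G : Type u} [AddCommGroup G]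
    (χ : RepTensor Y X →+ G) : X ⟶ HomRepObjOp V R Y G :=
  dualMk (fun i => ncUnlift (χ.comp ((repTensorRel Y X).mkQ.toAddMonoidHom.comp
    (DirectSum.of (fun i => NcTensor R (↑(Y.obj (vtx' (op i)))) (↑(X.obj (vtx' i)))) i))))
    fun i j a y x => congrArg χ (RepTensor.tmul_rel a y x).symm

lemma dualApp_repUnlift {Y : RepR V R} {X : RepL V R} {G : Type u} [AddCommGroup G]
    (χ : RepTensor Y X →+ G) (i : V) (y) (x) :
    dualApp (repUnlift χ) i x y = χ (RepTensor.tmul i y x) := rfl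

lemma rep_hom_ext {Y : RepR V R} {X : RepL V R} {G : Type u} [AddCommGroup G]
    {f g : RepTensor Y X →+ G} (h : ∀ (i : V) y x, f (RepTensor.tmul i y x) =
    g (RepTensor.tmul i y x)) (z) : f z = g z := by
  induction z using RepTensor.induction with
  | h0 => simp
  | h1 i y x => exact h i y x
  | h2 x y hx hy => rw [map_add, map_add, hx, hy]

lemma dual_ext {Y : RepR V R} {X : RepL V R} {G : Type u} [AddCommGroup G]
    {f g : X ⟶ HomRepObjOp V R Y G} (h : ∀ (i : V) x y, dualApp f i x y = dualApp g i x y) :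
    f = g := by
  ext i x
  exact AddMonoidHom.ext fun y => h i x y

lemma rep_exact_iff {Y : RepR V R} {X₁ X₂ X₃ : RepL V R} (f : X₁ ⟶ X₂) (g : X₂ ⟶ X₃)
    (w : f ≫ g = 0) :
    Function.Exact (RepTensor.map (𝟙 Y) f) (RepTensor.map (𝟙 Y) g) ↔
    ∀ β : X₂ ⟶ HomRepObjOp V R Y QZ.{u}, f ≫ β = 0 →
      ∃ γ : X₃ ⟶ HomRepObjOp V R Y QZ.{u}, g ≫ γ = β := by
  refine (exact_iff_char (RepTensor.map (𝟙 Y) f).toAddMonoidHom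
    (RepTensor.map (𝟙 Y) g).toAddMonoidHom ?_).trans
    ⟨fun h β hβ => ?_, fun h χ hχ => ?_⟩
  · refine fun z => rep_hom_ext (f := ((RepTensor.map (𝟙 Y) g).toAddMonoidHom.comp
      (RepTensor.map (𝟙 Y) f).toAddMonoidHom)) (g := 0) (fun i y x => ?_) z
    change RepTensor.map (𝟙 Y) g (RepTensor.map (𝟙 Y) f (RepTensor.tmul i y x)) = 0
    rw [RepTensor.map_tmul, RepTensor.map_tmul]
    have : g.app (vtx' i) (f.app (vtx' i) x) = 0 :=
      LinearMap.congr_fun (congrArg ModuleCat.Hom.hom (NatTrans.congr_app w (vtx' i))) x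
    rw [this]
    refine congrArg Submodule.Quotient.mk ?_
    simp [NcTensor.tmul]
  · obtain ⟨ξ, hξ⟩ := h (repLift β) (fun z => by
      refine rep_hom_ext (f := (repLift β).comp (RepTensor.map (𝟙 Y) f).toAddMonoidHom)
        (g := 0) (fun i y x => ?_) z
      change repLift β (RepTensor.map (𝟙 Y) f (RepTensor.tmul i y x)) = 0
      rw [RepTensor.map_tmul, repLift_tmul]
      exact congrArg (fun t : ↑(Y.obj (vtx' (op i))) →+ QZ.{u} => t y) (LinearMap.congr_fun
        (congrArg ModuleCat.Hom.hom (NatTrans.congr_app hβ (vtx' i))) x))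
    refine ⟨repUnlift ξ, dual_ext fun i x y => ?_⟩
    change ξ (RepTensor.tmul i y (g.app (vtx' i) x)) = _
    have := hξ (RepTensor.tmul i y x)
    rw [repLift_tmul] at this
    rw [← this]
    change _ = ξ (RepTensor.map (𝟙 Y) g (RepTensor.tmul i y x))
    rw [RepTensor.map_tmul]; rfl
  · obtain ⟨γ, hγ⟩ := h (repUnlift χ) (dual_ext fun i x y => by
      have := hχ (RepTensor.tmul i y x)
      change χ (RepTensor.map (𝟙 Y) f (RepTensor.tmul i y x)) = 0 at this
      rw [RepTensor.map_tmul] at this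
      exact this)
    refine ⟨repLift γ, fun z => ?_⟩
    refine rep_hom_ext (f := (repLift γ).comp (RepTensor.map (𝟙 Y) g).toAddMonoidHom)
        (g := χ) (fun i y x => ?_) z
    change repLift γ (RepTensor.map (𝟙 Y) g (RepTensor.tmul i y x)) = _
    rw [RepTensor.map_tmul, repLift_tmul, ← dualApp_repUnlift, ← hγ]
    rfl

end RepDual
end QuiverGF

namespace QuiverGF

section Bridge
variable (V : Type u) [Quiver.{u} V] (R : Type u) [Ring R]

/-- Duals of injective representations. -/
def TQ : Set (RepL V R) := {N | ∃ E : RepR V R, Injective E ∧ N = HomRepObjOp V R E QZ.{u}}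

/-- Duals of injective right modules. -/
def TR : Set (ModuleCat.{u} R) :=
  {N | ∃ E : ModuleCat.{u} Rᵐᵒᵖ, Injective E ∧ N = ModuleCat.of R (E →+ QZ.{u})}

theorem isPGFRep_iff (X : RepL V R) : IsPGFRep V R X ↔ X ∈ AbsPGF (TQ V R) := by
  constructor
  · rintro ⟨P, d, hP, hd, ⟨e⟩, h⟩
    refine absPGF_iso e (absPGF_of_desc P d hP hd ?_ 0)
    rintro _ ⟨E, hE, rfl⟩ n β hβ
    exact (rep_exact_iff (d (n + 1)) (d n) (hd n).1).1 (h E hE n) β hβ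
  · intro h
    obtain ⟨P, d, hP, hd, e, h⟩ := absPGF_exists_desc h
    exact ⟨P, d, hP, hd, e, fun E hE n => (rep_exact_iff (d (n + 1)) (d n) (hd n).1).2
      (h _ ⟨E, hE, rfl⟩ n)⟩

theorem isPGFModule_iff (M : ModuleCat.{u} R) : IsPGFModule R M ↔ M ∈ AbsPGF (TR R) := by
  constructor
  · rintro ⟨P, d, hP, hd, ⟨e⟩, h⟩
    have hd' : ∀ n, ∃ w : d n ≫ d (n + 1) = 0, (ShortComplex.mk (d n) (d (n + 1)) w).Exact :=
      fun n => ⟨ModuleCat.hom_ext (LinearMap.ext fun x => (hd n).apply_apply_eq_zero x),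
        (ShortComplex.ShortExact.moduleCat_exact_iff_function_exact _).2 (hd n)⟩
    refine absPGF_iso (e.toModuleIso ≪≫ (ModuleCat.kernelIsoKer (d 0)).symm)
      (absPGF_of_asc P d hP hd' ?_ 0)
    rintro _ ⟨E, hE, rfl⟩ n β hβ
    obtain ⟨γ, hγ⟩ := (nc_exact_iff (d n).hom (d (n + 1)).hom (hd n).apply_apply_eq_zero).1
      (h E hE n) β.hom (congrArg ModuleCat.Hom.hom hβ)
    exact ⟨ModuleCat.ofHom γ, ModuleCat.hom_ext hγ⟩
  · intro h
    obtain ⟨P, d, hP, hd, ⟨e⟩, h⟩ := absPGF_exists_asc h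
    have hd' : ∀ n, Function.Exact (d n) (d (n + 1)) := fun n =>
      (ShortComplex.ShortExact.moduleCat_exact_iff_function_exact _).1 (hd n).2
    refine ⟨P, d, hP, hd', ⟨(e ≪≫ ModuleCat.kernelIsoKer (d 0)).toLinearEquiv⟩, fun E hE n => ?_⟩
    refine (nc_exact_iff (d n).hom (d (n + 1)).hom (hd' n).apply_apply_eq_zero).2 fun β hβ => ?_
    obtain ⟨γ, hγ⟩ := h _ ⟨E, hE, rfl⟩ n (ModuleCat.ofHom β) (ModuleCat.hom_ext hβ)
    exact ⟨γ.hom, congrArg ModuleCat.Hom.hom hγ⟩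

end Bridge
end QuiverGF

namespace QuiverGF

section Cocycle
variable {V : Type w} [Quiver.{w} V] {A : Type u} [Category.{v} A] [Abelian A]

/-- The extension of representations attached to a cocycle. -/
noncomputable def cocycleExt (N P : Paths V ⥤ A)
    (c : ∀ (i j : V), (i ⟶ j) → (P.obj (vtx i) ⟶ N.obj (vtx j))) : Paths V ⥤ A :=
  Paths.lift
    { obj := fun i => N.obj (vtx i) ⊞ P.obj (vtx i)
      map := fun {i j} a => biprod.desc (N.map a.toPath ≫ biprod.inl)
        (biprod.lift (c i j a) (P.map a.toPath)) }

lemma biprod_aux {N N' P P' : A} (n : N ⟶ N') (p : P ⟶ P') (c : P ⟶ N') :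
    biprod.desc (n ≫ biprod.inl) (biprod.lift c p) ≫ biprod.snd = biprod.snd ≫ p ∧
    biprod.desc (n ≫ biprod.inl) (biprod.lift c p) ≫ biprod.fst = biprod.fst ≫ n + biprod.snd ≫ c := by
  constructor <;> apply biprod.hom_ext' <;> simp

lemma comp_aux {X X' P P' N N' E E' : A} {x : X ⟶ X'} {m : X ⟶ P} {m' : X' ⟶ P'} {p : P ⟶ P'}
    {ψ : P ⟶ N} {ψ' : P' ⟶ N'} {n : N ⟶ N'} {f : N ⟶ E} {f' : N' ⟶ E'} {e : E ⟶ E'} {c : P ⟶ N'}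
    (e1 : x ≫ m' = m ≫ p) (e2 : n ≫ f' = f ≫ e) (e3 : p ≫ ψ' = ψ ≫ n + c) :
    x ≫ m' ≫ ψ' ≫ f' = (m ≫ ψ ≫ f) ≫ e + (m ≫ c) ≫ f' := by
  rw [← Category.assoc, e1, Category.assoc, ← Category.assoc p, e3]
  simp only [Preadditive.add_comp, Preadditive.comp_add, Category.assoc, e2]

theorem cocycle_solve (N P : Paths V ⥤ A) [Projective P]
    (c : ∀ (i j : V), (i ⟶ j) → (P.obj (vtx i) ⟶ N.obj (vtx j))) :
    ∃ ψ : ∀ i : V, P.obj (vtx i) ⟶ N.obj (vtx i), ∀ (i j : V) (a : i ⟶ j),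
      P.map a.toPath ≫ ψ j = ψ i ≫ N.map a.toPath + c i j a := by
  have hmap : ∀ (i j : V) (a : i ⟶ j), (cocycleExt N P c).map (X := vtx i) (Y := vtx j) a.toPath =
      biprod.desc (N.map a.toPath ≫ biprod.inl) (biprod.lift (c i j a) (P.map a.toPath)) :=
    fun i j a => Paths.lift_toPath _ a
  let π : cocycleExt N P c ⟶ P := natMk (fun i => (biprod.snd : N.obj (vtx i) ⊞ P.obj (vtx i) ⟶ _))
    fun i j a => by
      rw [hmap]
      exact (biprod_aux _ _ _).1
  have hπ : ∀ i : V, π.app (vtx i) = (biprod.snd : N.obj (vtx i) ⊞ P.obj (vtx i) ⟶ _) := fun _ => rfl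
  have : ∀ i, Epi (π.app i) := fun i => by
    change Epi (biprod.snd : N.obj i ⊞ P.obj i ⟶ _)
    infer_instance
  have := NatTrans.epi_of_epi_app π
  let s := Projective.factorThru (𝟙 P) π
  have hs : s ≫ π = 𝟙 P := Projective.factorThru_comp _ _
  let s' : ∀ i : V, P.obj (vtx i) ⟶ N.obj (vtx i) ⊞ P.obj (vtx i) := fun i => s.app (vtx i)
  have hs' : ∀ i, s' i ≫ biprod.snd = 𝟙 _ := fun i => NatTrans.congr_app hs (vtx i)
  refine ⟨fun i => s' i ≫ biprod.fst, fun i j a => ?_⟩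
  have h : P.map a.toPath ≫ s' j = s' i ≫ biprod.desc (N.map a.toPath ≫ biprod.inl)
      (biprod.lift (c i j a) (P.map a.toPath)) := by
    rw [← hmap]; exact s.naturality (X := vtx i) (Y := vtx j) a.toPath
  have h2 : biprod.desc (N.map a.toPath ≫ biprod.inl) (biprod.lift (c i j a) (P.map a.toPath)) ≫
      biprod.fst = biprod.fst ≫ N.map a.toPath + biprod.snd ≫ c i j a :=
    (biprod_aux _ _ _).2
  rw [← Category.assoc, h, Category.assoc, h2, Preadditive.comp_add, ← Category.assoc,
    ← Category.assoc, hs', Category.id_comp]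

lemma SES.eval {C : Type*} [Category* C] {X Y Z : C ⥤ A} {f : X ⟶ Y} {g : Y ⟶ Z} (s : SES f g)
    (i : C) : SES (f.app i) (g.app i) := by
  obtain ⟨w, s⟩ := s
  exact ⟨NatTrans.congr_app w i, s.map_of_exact ((evaluation C A).obj i)⟩

theorem natural_lift {N E B X P : Paths V ⥤ A} {f : N ⟶ E} {g : E ⟶ B} (s : SES f g) (φ : X ⟶ B)
    (m : X ⟶ P) [Projective P]
    (h1 : ∀ i : V, ∃ t : X.obj (vtx i) ⟶ E.obj (vtx i), t ≫ g.app (vtx i) = φ.app (vtx i))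
    (h2 : ∀ (i j : V) (c : X.obj (vtx i) ⟶ N.obj (vtx j)),
      ∃ c' : P.obj (vtx i) ⟶ N.obj (vtx j), m.app (vtx i) ≫ c' = c) :
    ∃ l : X ⟶ E, l ≫ g = φ := by
  choose t ht using h1
  have h3 : ∀ (i j : V) (a : i ⟶ j), ∃ c : P.obj (vtx i) ⟶ N.obj (vtx j),
      (m.app (vtx i) ≫ c) ≫ f.app (vtx j) = X.map a.toPath ≫ t j - t i ≫ E.map a.toPath := by
    intro i j a
    obtain ⟨c', hc'⟩ := (s.eval (vtx j)).lift (X.map a.toPath ≫ t j - t i ≫ E.map a.toPath) (by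
      have e1 : E.map a.toPath ≫ g.app (vtx j) = g.app (vtx i) ≫ B.map a.toPath :=
        g.naturality (X := vtx i) (Y := vtx j) a.toPath
      have e2 : X.map a.toPath ≫ φ.app (vtx j) = φ.app (vtx i) ≫ B.map a.toPath :=
        φ.naturality (X := vtx i) (Y := vtx j) a.toPath
      rw [Preadditive.sub_comp, Category.assoc, Category.assoc, ht, e1, e2, ← Category.assoc, ht,
        sub_self])
    obtain ⟨c, hc⟩ := h2 i j c'
    exact ⟨c, by rw [hc, hc']⟩
  choose c hc using h3
  obtain ⟨ψ, hψ⟩ := cocycle_solve N P c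
  refine ⟨natMk (fun i => t i - m.app (vtx i) ≫ ψ i ≫ f.app (vtx i)) fun i j a => ?_, ?_⟩
  · have e1 : X.map a.toPath ≫ m.app (vtx j) = m.app (vtx i) ≫ P.map a.toPath :=
      m.naturality (X := vtx i) (Y := vtx j) a.toPath
    have e2 : N.map a.toPath ≫ f.app (vtx j) = f.app (vtx i) ≫ E.map a.toPath :=
      f.naturality (X := vtx i) (Y := vtx j) a.toPath
    have e3 : X.map a.toPath ≫ m.app (vtx j) ≫ ψ j ≫ f.app (vtx j) =
        (m.app (vtx i) ≫ ψ i ≫ f.app (vtx i)) ≫ E.map a.toPath +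
        (m.app (vtx i) ≫ c i j a) ≫ f.app (vtx j) :=
      comp_aux e1 e2 (hψ i j a)
    rw [Preadditive.comp_sub, e3, hc, Preadditive.sub_comp]
    abel
  · ext i
    change (t i - m.app (vtx i) ≫ ψ i ≫ f.app (vtx i)) ≫ g.app (vtx i) = φ.app (vtx i)
    rw [Preadditive.sub_comp, Category.assoc, Category.assoc, (s.eval (vtx i)).w]
    simpa using ht i

theorem ext1Zero_rep {X P X' N : Paths V ⥤ A} {m : X ⟶ P} {p : P ⟶ X'} (s : SES m p) [Projective P]
    (h1 : ∀ i j : V, ext1Zero (X.obj (vtx i)) (N.obj (vtx j)))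
    (h2 : ∀ i j : V, ext1Zero (X'.obj (vtx i)) (N.obj (vtx j))) : ext1Zero X N := by
  refine ext1Zero_of_lift fun _ _ _ _ t φ => ?_
  exact natural_lift t φ m (fun i => (h1 i i).lift (t.eval (vtx i)) _)
    fun i j c => (h2 i j).extend (s.eval (vtx i)) c

theorem injective_coker [EnoughProjectives (Paths V ⥤ A)] {H I0 I1 : Paths V ⥤ A} {f : H ⟶ I0}
    {g : I0 ⟶ I1} (s : SES f g) (hH : ∀ i : V, Injective (H.obj (vtx i))) [Injective I0] :
    Injective I1 := by
  refine ⟨fun {B' B} φ k _ => ?_⟩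
  have sq := IsPullback.of_hasPullback (Projective.π B) k
  have hm : Mono (pullback.fst (Projective.π B) k) := inferInstance
  have he : Epi (pullback.snd (Projective.π B) k) := inferInstance
  have hm' : ∀ i, Mono ((pullback.fst (Projective.π B) k).app i) := fun i => inferInstance
  obtain ⟨l, hl⟩ := natural_lift s (pullback.snd (Projective.π B) k ≫ φ)
    (pullback.fst (Projective.π B) k)
    (fun i => (ext1Zero_injective _ _).lift (s.eval (vtx i)) _)
    (fun i j c => ⟨Injective.factorThru c _, Injective.comp_factorThru _ _⟩)
  obtain ⟨r, hr⟩ := (SES.ker (Projective.π B)).desc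
    (Injective.factorThru l (pullback.fst (Projective.π B) k) ≫ g) (by
      have : kernel.ι (Projective.π B) = pullback.lift (kernel.ι (Projective.π B)) 0
        ((kernel.condition _).trans zero_comp.symm) ≫ pullback.fst (Projective.π B) k :=
          (pullback.lift_fst _ _ _).symm
      rw [this, Category.assoc, ← Category.assoc (pullback.fst _ _), Injective.comp_factorThru, hl,
        ← Category.assoc, pullback.lift_snd, zero_comp])
  refine ⟨r, ?_⟩
  rw [← cancel_epi (pullback.snd (Projective.π B) k), ← Category.assoc, ← pullback.condition,
    Category.assoc, hr, ← Category.assoc, Injective.comp_factorThru, hl]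

end Cocycle
end QuiverGF

namespace QuiverGF

section RepCat
variable {V : Type u} [Quiver.{u} V] {S : Type u} [Ring S]

/-- The left adjoint of evaluation at `c`. -/
noncomputable abbrev fL (c : Paths V) : ModuleCat.{u} S ⥤ (Paths V ⥤ ModuleCat.{u} S) :=
  evaluationLeftAdjoint (ModuleCat.{u} S) c

/-- The adjunction. -/
noncomputable abbrev fLadj (c : Paths V) :
    fL (S := S) c ⊣ (evaluation (Paths V) (ModuleCat.{u} S)).obj c :=
  evaluationAdjunctionRight (ModuleCat.{u} S) c

lemma sigma_const_mono (J : Type u) {M N : ModuleCat.{u} S} (f : M ⟶ N) [Mono f] :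
    Mono (Limits.Sigma.desc fun h : J => f ≫ Limits.Sigma.ι (fun _ : J => N) h) := by
  have h : (Limits.Sigma.desc fun h : J => f ≫ Limits.Sigma.ι (fun _ : J => N) h) =
      Limits.Sigma.map (fun _ : J => f) := by
    apply Limits.Sigma.hom_ext
    intro h
    simp
  rw [h]
  have : ∀ _ : J, Mono f := fun _ => inferInstance
  infer_instance

lemma fL_mono (c : Paths V) {M N : ModuleCat.{u} S} (f : M ⟶ N) [Mono f] : Mono ((fL c).map f) := by
  have : ∀ d, Mono (((fL c).map f).app d) := fun d => sigma_const_mono (c ⟶ d) f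
  exact NatTrans.mono_of_mono_app _

instance (c : Paths V) : (fL (S := S) c).PreservesMonomorphisms := ⟨fun f _ => fL_mono c f⟩

lemma fL_projective (c : Paths V) (M : ModuleCat.{u} S) [h : Projective M] :
    Projective ((fL c).obj M) := (fLadj c).map_projective M h

lemma eval_injective (c : Paths V) (X : Paths V ⥤ ModuleCat.{u} S) [h : Injective X] :
    Injective (X.obj c) := (fLadj c).map_injective X h

/-- The standard projective cover. -/
noncomputable abbrev projObj (X : Paths V ⥤ ModuleCat.{u} S) : Paths V ⥤ ModuleCat.{u} S :=
  ∐ fun c : Paths V => (fL c).obj (Projective.over (X.obj c))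

/-- The projection. -/
noncomputable def projMap (X : Paths V ⥤ ModuleCat.{u} S) : projObj X ⟶ X :=
  Limits.Sigma.desc fun c => ((fLadj c).homEquiv _ _).symm (Projective.π (X.obj c))

instance (X : Paths V ⥤ ModuleCat.{u} S) : Projective (projObj X) := by
  have := fun c => fL_projective c (Projective.over (X.obj c))
  infer_instance

lemma projMap_epi (X : Paths V ⥤ ModuleCat.{u} S) : Epi (projMap X) := by
  have : ∀ c, Epi ((projMap X).app c) := fun c => by
    have h1 : Limits.Sigma.ι (fun c : Paths V => (fL c).obj (Projective.over (X.obj c))) c ≫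
      projMap X = ((fLadj c).homEquiv _ _).symm (Projective.π (X.obj c)) :=
        Limits.Sigma.ι_desc _ _
    have h2 := ((fLadj c).homEquiv (Projective.over (X.obj c)) X).apply_symm_apply
      (Projective.π (X.obj c))
    rw [← h1, Adjunction.homEquiv_unit, Functor.map_comp, ← Category.assoc] at h2
    exact epi_of_epi_fac h2
  exact NatTrans.epi_of_epi_app _

instance : EnoughProjectives (Paths V ⥤ ModuleCat.{u} S) :=
  ⟨fun X => ⟨{ p := projObj X, f := projMap X, epi := projMap_epi X }⟩⟩

lemma eval_projective (d : Paths V) (X : Paths V ⥤ ModuleCat.{u} S) [Projective X] :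
    Projective (X.obj d) := by
  have h1 : Projective ((projObj X).obj d) := by
    have e := PreservesCoproduct.iso ((evaluation (Paths V) (ModuleCat.{u} S)).obj d)
      (fun c : Paths V => (fL c).obj (Projective.over (X.obj c)))
    refine Projective.of_iso e.symm ?_
    have : ∀ c, Projective (((evaluation (Paths V) (ModuleCat.{u} S)).obj d).obj
      ((fL c).obj (Projective.over (X.obj c)))) := fun c => by
        change Projective (∐ fun _ : c ⟶ d => Projective.over (X.obj c))
        infer_instance
    infer_instance
  have := projMap_epi X
  have h := Projective.factorThru_comp (𝟙 X) (projMap X)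
  exact projective_of_retract ((Projective.factorThru (𝟙 X) (projMap X)).app d)
    ((projMap X).app d) (NatTrans.congr_app h d)

lemma fL_SES (c : Paths V) {X Y Z : ModuleCat.{u} S} {f : X ⟶ Y} {g : Y ⟶ Z} (s : SES f g) :
    SES ((fL c).map f) ((fL c).map g) := by
  have := s.mono
  have := s.epi
  have : (fL (S := S) c).IsLeftAdjoint := ⟨_, ⟨fLadj c⟩⟩
  refine SES.of_coker inferInstance inferInstance ?_ fun R k hk => ?_
  · rw [← Functor.map_comp, s.w]
    have := (fLadj (S := S) c).left_adjoint_additive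
    exact (fL c).map_zero _ _
  · obtain ⟨l, hl⟩ := s.desc ((fLadj c).homEquiv _ _ k) (by
      rw [← Adjunction.homEquiv_naturality_left, hk, Adjunction.homEquiv_unit]
      exact comp_zero)
    refine ⟨((fLadj c).homEquiv _ _).symm l, ?_⟩
    rw [← Adjunction.homEquiv_naturality_left_symm, hl, Equiv.symm_apply_apply]

/-- `Ext¹(f_c M, N) = 0` iff `Ext¹(M, N(c)) = 0`. -/
lemma fL_ext_iff (c : Paths V) (M : ModuleCat.{u} S) (N : Paths V ⥤ ModuleCat.{u} S) :
    ext1Zero ((fL c).obj M) N ↔ ext1Zero M (N.obj c) := by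
  have s := SES.ker (Projective.π M)
  have s' := fL_SES c s
  have := fL_projective c (Projective.over M)
  constructor
  · refine fun h => ext1Zero_of_extend s fun φ => ?_
    obtain ⟨l, hl⟩ := h.extend s' (((fLadj c).homEquiv _ _).symm φ)
    refine ⟨(fLadj c).homEquiv _ _ l, ?_⟩
    rw [← Adjunction.homEquiv_naturality_left, hl, Equiv.apply_symm_apply]
  · refine fun h => ext1Zero_of_extend s' fun φ => ?_
    obtain ⟨l, hl⟩ := h.extend s ((fLadj c).homEquiv _ _ φ)
    refine ⟨((fLadj c).homEquiv _ _).symm l, ?_⟩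
    rw [← Adjunction.homEquiv_naturality_left_symm, hl, Equiv.symm_apply_apply]

instance : AB5OfSize.{u, u} (Paths V ⥤ ModuleCat.{u} S) := ⟨fun _ _ _ => inferInstance⟩

instance : IsGrothendieckAbelian.{u} (Paths V ⥤ ModuleCat.{u} S) where
  hasFilteredColimitsOfSize := inferInstance
  ab5OfSize := inferInstance
  hasSeparator := HasSeparator.of_equivalence (opOpEquivalence (Paths V)).congrLeft

example : EnoughInjectives (Paths V ⥤ ModuleCat.{u} S) := inferInstance

end RepCat
section App
variable {V : Type u} [Quiver.{u} V] {R : Type u} [Ring R]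

/-- `f_c M` is PGF if `M` is. -/
lemma fL_absPGF (c : Paths V) {M : ModuleCat.{u} R} (hM : M ∈ AbsPGF (TR R)) :
    (fL c).obj M ∈ AbsPGF (TQ V R) := by
  refine ⟨(fL c).obj '' (AbsPGF (TR R)), ?_, ⟨M, hM, rfl⟩, ?_⟩
  · rintro _ ⟨M, hM, rfl⟩
    obtain ⟨⟨Y, hY, P, f, g, hP, h⟩, ⟨Z, hZ, P', f', g', hP', h'⟩⟩ := absPGF_twoSided _ M hM
    exact ⟨⟨_, ⟨Y, hY, rfl⟩, _, _, _, fL_projective c P, fL_SES c h⟩,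
      ⟨_, ⟨Z, hZ, rfl⟩, _, _, _, fL_projective c P', fL_SES c h'⟩⟩
  · rintro _ ⟨M, hM, rfl⟩ _ ⟨E, hE, rfl⟩
    rw [fL_ext_iff]
    exact absPGF_ext hM ⟨_, eval_injective (S := Rᵐᵒᵖ) (V := Vᵒᵖ) (op c) E, rfl⟩

lemma rep_perp_sub : rightPerp (AbsPGF (TQ V R)) ⊆ RepClass (rightPerp (AbsPGF (TR R))) := by
  intro N hN i M hM
  exact (fL_ext_iff (vtx i) M N).1 (hN _ (fL_absPGF _ hM))

/-- If vertex values of PGF representations are PGF, the right perp is computed vertexwise. -/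
lemma rep_perp_eq (h : ∀ X ∈ AbsPGF (TQ V R), ∀ i : V, X.obj (vtx i) ∈ AbsPGF (TR R)) :
    RepClass (rightPerp (AbsPGF (TR R))) = rightPerp (AbsPGF (TQ V R)) := by
  refine Set.Subset.antisymm (fun N hN X hX => ?_) rep_perp_sub
  obtain ⟨⟨Y, hY, P, f, g, hP, s⟩, -⟩ := absPGF_twoSided _ X hX
  exact ext1Zero_rep s (fun i j => hN j _ (h X hX i)) (fun i j => hN j _ (h Y hY i))

lemma vertex_absPGF (h : ∀ X ∈ AbsPGF (TQ V R), ∀ i : V, ∀ N ∈ TR R, ext1Zero (X.obj (vtx i)) N) :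
    ∀ X ∈ AbsPGF (TQ V R), ∀ i : V, X.obj (vtx i) ∈ AbsPGF (TR R) := by
  intro X hX i
  refine ⟨{M | ∃ X ∈ AbsPGF (TQ V R), M = X.obj (vtx i)}, ?_, ⟨X, hX, rfl⟩, ?_⟩
  · rintro _ ⟨M, hM, rfl⟩
    obtain ⟨⟨Y, hY, P, f, g, hP, h⟩, ⟨Z, hZ, P', f', g', hP', h'⟩⟩ := absPGF_twoSided _ M hM
    exact ⟨⟨_, ⟨Y, hY, rfl⟩, _, _, _, eval_projective (vtx i) P, h.eval (vtx i)⟩,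
      ⟨_, ⟨Z, hZ, rfl⟩, _, _, _, eval_projective (vtx i) P', h'.eval (vtx i)⟩⟩
  · rintro _ ⟨X, hX, rfl⟩ N hN
    exact h X hX i N hN

end App
end QuiverGF

namespace QuiverGF

lemma SES.of_eval {C : Type*} [Category* C] {A : Type*} [Category* A] [Abelian A]
    {X Y Z : C ⥤ A} {f : X ⟶ Y} {g : Y ⟶ Z}
    (s : ∀ i, SES (f.app i) (g.app i)) : SES f g := by
  have hm := fun i => (s i).mono
  have he := fun i => (s i).epi
  refine SES.of_ker (NatTrans.mono_of_mono_app f) (NatTrans.epi_of_epi_app g)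
    (NatTrans.ext (funext fun i => (s i).w)) fun W k hk => ?_
  have h : ∀ i, ∃ l : W.obj i ⟶ X.obj i, l ≫ f.app i = k.app i := fun i =>
    (s i).lift (k.app i) (NatTrans.congr_app hk i)
  choose l hl using h
  refine ⟨⟨l, fun i j a => ?_⟩, NatTrans.ext (funext hl)⟩
  rw [← cancel_mono (f.app j), Category.assoc, hl, Category.assoc, f.naturality, ← Category.assoc,
    hl, k.naturality]

section Dual
variable {V : Type u} [Quiver.{u} V] {R : Type u} [Ring R]

/-- Dual of a morphism. -/
noncomputable def dualMap {Y Y' : RepR V R} (θ : Y ⟶ Y') :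
    HomRepObjOp V R Y' QZ.{u} ⟶ HomRepObjOp V R Y QZ.{u} :=
  natMk (fun i => ModuleCat.ofHom (precompHomOp (R := R) (G := QZ.{u})
      ((θ.app (vtx' (op i))).hom : ↑(Y.obj (vtx' (op i))) →ₗ[Rᵐᵒᵖ] ↑(Y'.obj (vtx' (op i)))))) fun i j a => by
    rw [homRepObjOp_map, homRepObjOp_map]
    refine ModuleCat.hom_ext (LinearMap.ext fun x => AddMonoidHom.ext fun y => ?_)
    refine congrArg (DFunLike.coe (F := ↑(Y'.obj (vtx' (op i))) →+ QZ.{u}) x) ?_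
    exact (LinearMap.congr_fun (congrArg ModuleCat.Hom.hom
      (θ.naturality (X := vtx' (op j)) (Y := vtx' (op i)) a.op.toPath)) y).symm

lemma mod_SES {S : Type u} [Ring S] {X Y Z : ModuleCat.{u} S} {f : X ⟶ Y} {g : Y ⟶ Z} :
    SES f g ↔ Function.Injective f ∧ Function.Exact f g ∧ Function.Surjective g := by
  constructor
  · rintro ⟨w, s⟩
    exact ⟨(ModuleCat.mono_iff_injective f).1 s.mono_f,
      (ShortComplex.ShortExact.moduleCat_exact_iff_function_exact _).1 s.exact,
      (ModuleCat.epi_iff_surjective g).1 s.epi_g⟩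
  · rintro ⟨h1, h2, h3⟩
    have w : f ≫ g = 0 := ModuleCat.hom_ext (LinearMap.ext fun x => h2.apply_apply_eq_zero x)
    exact ⟨w, { exact := (ShortComplex.ShortExact.moduleCat_exact_iff_function_exact _).2 h2
                mono_f := (ModuleCat.mono_iff_injective f).2 h1
                epi_g := (ModuleCat.epi_iff_surjective g).2 h3 }⟩

lemma char_SES {X Y Z : Type u} [AddCommGroup X] [AddCommGroup Y] [AddCommGroup Z]
    [Module Rᵐᵒᵖ X] [Module Rᵐᵒᵖ Y] [Module Rᵐᵒᵖ Z] (f : X →ₗ[Rᵐᵒᵖ] Y) (g : Y →ₗ[Rᵐᵒᵖ] Z)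
    (hf : Function.Injective f) (he : Function.Exact f g) (hg : Function.Surjective g) :
    SES (ModuleCat.ofHom (precompHomOp (R := R) (G := QZ.{u}) g))
      (ModuleCat.ofHom (precompHomOp (R := R) (G := QZ.{u}) f)) := by
  refine mod_SES.2 ⟨fun χ χ' h => ?_, fun χ => ⟨fun h => ?_, ?_⟩, fun χ => ?_⟩
  · refine AddMonoidHom.ext fun z => ?_
    obtain ⟨y, rfl⟩ := hg z
    exact DFunLike.congr_fun (F := Y →+ QZ.{u}) h y
  · obtain ⟨ξ, hξ⟩ := char_factor g.toAddMonoidHom χ (fun b hb => by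
      obtain ⟨a, rfl⟩ := (he b).1 hb
      exact DFunLike.congr_fun (F := X →+ QZ.{u}) h a)
    exact ⟨ξ, AddMonoidHom.ext hξ⟩
  · rintro ⟨ξ, rfl⟩
    refine AddMonoidHom.ext fun x => ?_
    change (ξ : Z →+ QZ.{u}) (g (f x)) = 0
    rw [he.apply_apply_eq_zero, map_zero]
  · obtain ⟨ξ, hξ⟩ := char_extend f.toAddMonoidHom hf χ
    exact ⟨ξ, AddMonoidHom.ext hξ⟩

lemma dual_SES {X Y Z : RepR V R} {f : X ⟶ Y} {g : Y ⟶ Z} (s : SES f g) :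
    SES (dualMap g) (dualMap f) := by
  refine SES.of_eval fun i => ?_
  obtain ⟨h1, h2, h3⟩ := mod_SES.1 (s.eval (vtx' (op i)))
  exact char_SES _ _ h1 h2 h3

/-- `Ext¹(X, H⁺) = 0` for `X` PGF and `H` vertexwise injective. -/
lemma ext_dual_of_vertex_injective {X : RepL V R} (hX : X ∈ AbsPGF (TQ V R)) (H : RepR V R)
    (hH : ∀ i : Vᵒᵖ, Injective (H.obj (vtx i))) : ext1Zero X (HomRepObjOp V R H QZ.{u}) := by
  have s := SES.coker (Injective.ι H)
  have hI : Injective (cokernel (Injective.ι H)) := injective_coker s hH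
  obtain ⟨-, ⟨Z, hZ, P', f', g', hP', h'⟩⟩ := absPGF_twoSided _ X hX
  exact ext1Zero_quot h' (dual_SES s) (absPGF_ext hZ ⟨_, hI, rfl⟩)
    (absPGF_ext hX ⟨_, inferInstance, rfl⟩)

lemma pi_injective {S : Type u} [Ring S] (J : Type u) (E : ModuleCat.{u} S) [Injective E] :
    Injective (ModuleCat.of S (J → E)) := by
  have : Injective (∏ᶜ fun _ : J => E) := inferInstance
  exact Injective.of_iso (ModuleCat.piIsoPi (fun _ : J => E)) this

end Dual

section PathRep
variable {V : Type u} [Quiver.{u} V]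

/-- Paths to `i`. -/
inductive PathTo (i : V) : V → Type u
  | nil : PathTo i i
  | cons {j k : V} (a : j ⟶ k) (p : PathTo i k) : PathTo i j

/-- Discriminator for the trivial path. -/
def PathTo.isNil {i : V} : ∀ {j : V}, PathTo i j → Prop
  | _, PathTo.nil => True
  | _, PathTo.cons _ _ => False

lemma PathTo.cons_ne_nil {i j : V} {a : i ⟶ j} {p : PathTo i j} :
    PathTo.cons a p ≠ PathTo.nil := fun h => (congrArg PathTo.isNil h).mpr trivial

lemma PathTo.cons_inj {i j k : V} (a : j ⟶ k) :
    Function.Injective (PathTo.cons a : PathTo i k → PathTo i j) := by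
  intro p q h
  injection h

variable {R : Type u} [Ring R]

/-- Extension by zero along `cons a`. -/
noncomputable def consExt (E : Type u) [AddCommGroup E] [Module R E] (i : V) {j k : V} (a : j ⟶ k) :
    (PathTo i k → E) →ₗ[R] (PathTo i j → E) where
  toFun h := Function.extend (PathTo.cons a) h 0
  map_add' h h' := by
    have := Function.extend_add (PathTo.cons a) h h' (0 : PathTo i j → E) 0
    rwa [add_zero] at this
  map_smul' r h := by
    have := Function.extend_smul r (PathTo.cons a) h (0 : PathTo i j → E)
    rwa [smul_zero] at this

/-- The path representation. -/
noncomputable def pathRep (i : V) (E : ModuleCat.{u} Rᵐᵒᵖ) : RepR V R :=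
  Paths.lift
    { obj := fun x => ModuleCat.of Rᵐᵒᵖ (PathTo i x.unop → E)
      map := fun {_ _} a => ModuleCat.ofHom (consExt (R := Rᵐᵒᵖ) E i a.unop) }

lemma pathRep_map (i : V) (E : ModuleCat.{u} Rᵐᵒᵖ) {j k : V} (a : j ⟶ k) :
    (pathRep i E).map (X := vtx' (op k)) (Y := vtx' (op j)) a.op.toPath =
      ModuleCat.ofHom (consExt (R := Rᵐᵒᵖ) E i a) := Paths.lift_toPath _ a.op

variable (X : RepL V R) (i : V) (E : ModuleCat.{u} Rᵐᵒᵖ)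
  (φ : ↑(X.obj (vtx' i)) →ₗ[R] (E →+ QZ.{u}))

open scoped Classical in
/-- The base term of the recursion. -/
noncomputable def baseT (j : V) : ↑(X.obj (vtx' j)) →ₗ[R] ((PathTo i j → E) →+ QZ.{u}) :=
  if h : i = j then by
    subst h
    exact (precompHomOp (R := R) (LinearMap.proj PathTo.nil)).comp φ
  else 0

lemma baseT_self : baseT X i E φ i =
    (precompHomOp (R := R) (LinearMap.proj PathTo.nil)).comp φ := by
  simp [baseT]

lemma baseT_apply (j : V) (x) (h : PathTo i j → E) (hh : ∀ e : i = j, h (e ▸ PathTo.nil) = 0) :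
    baseT X i E φ j x h = 0 := by
  unfold baseT
  split_ifs with e
  · subst e
    change φ x (h PathTo.nil) = 0
    rw [show h PathTo.nil = 0 from hh rfl, map_zero]
  · rfl

open scoped Classical in
theorem exists_t (hV : LeftRooted V) (A : Finset (Σ j : V, Σ k : V, (j ⟶ k))) :
    ∃ t : ∀ j : V, ↑(X.obj (vtx' j)) →ₗ[R] ((PathTo i j → E) →+ QZ.{u}),
      ∀ j x h, t j x h = baseT X i E φ j x h +
        ∑ b ∈ A.preimage (Sigma.mk j) sigma_mk_injective.injOn,
          t b.1 (X.map b.2.toPath x) (fun p => h (PathTo.cons b.2 p)) := by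
  have wf : WellFounded (fun k j : V => Nonempty (j ⟶ k)) := by
    rw [wellFounded_iff_isEmpty_descending_chain]
    exact ⟨fun f => hV ⟨f.1, f.2⟩⟩
  let F : ∀ j : V, (∀ k : V, Nonempty (j ⟶ k) →
      (↑(X.obj (vtx' k)) →ₗ[R] ((PathTo i k → E) →+ QZ.{u}))) →
      (↑(X.obj (vtx' j)) →ₗ[R] ((PathTo i j → E) →+ QZ.{u})) := fun j rec =>
    baseT X i E φ j + ∑ b ∈ A.preimage (Sigma.mk j) sigma_mk_injective.injOn,
      (precompHomOp (R := R) (LinearMap.funLeft Rᵐᵒᵖ E (PathTo.cons b.2))).comp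
        ((rec b.1 ⟨b.2⟩).comp (X.map b.2.toPath).hom)
  refine ⟨wf.fix F, fun j x h => ?_⟩
  rw [wf.fix_eq]
  simp only [F, LinearMap.add_apply, LinearMap.sum_apply, AddMonoidHom.add_apply,
    AddMonoidHom.finsetSum_apply]
  rfl

open scoped Classical in
/-- Relations using arrows of a finite set only. -/
noncomputable def relA (Y : RepR V R) (X : RepL V R) (A : Finset (Σ j : V, Σ k : V, (j ⟶ k))) :
    Submodule ℤ (repTensorBase Y X) :=
  Submodule.span ℤ {z | ∃ (i j : V) (a : i ⟶ j) (y : ↑(Y.obj (vtx' (op j)))) (x : ↑(X.obj (vtx' i))),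
    (⟨i, j, a⟩ : Σ j : V, Σ k : V, (j ⟶ k)) ∈ A ∧
    z = DirectSum.of _ i (NcTensor.tmul R _ _ (Y.map a.op.toPath y) x)
      - DirectSum.of _ j (NcTensor.tmul R _ _ y (X.map a.toPath x))}

lemma relA_mono (Y : RepR V R) (X : RepL V R) {A B : Finset (Σ j : V, Σ k : V, (j ⟶ k))}
    (h : A ⊆ B) : relA Y X A ≤ relA Y X B :=
  Submodule.span_mono (by rintro z ⟨i, j, a, y, x, ha, hz⟩; exact ⟨i, j, a, y, x, h ha, hz⟩)

open scoped Classical in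
lemma mem_relA (Y : RepR V R) (X : RepL V R) {z : repTensorBase Y X} (hz : z ∈ repTensorRel Y X) :
    ∃ A, z ∈ relA Y X A := by
  induction hz using Submodule.span_induction with
  | mem z hz =>
    obtain ⟨i, j, a, y, x, hz⟩ := hz
    exact ⟨{⟨i, j, a⟩}, Submodule.subset_span ⟨i, j, a, y, x, by simp, hz⟩⟩
  | zero => exact ⟨∅, Submodule.zero_mem _⟩
  | add x y _ _ hx hy =>
    obtain ⟨A, hA⟩ := hx
    obtain ⟨B, hB⟩ := hy
    exact ⟨A ∪ B, Submodule.add_mem _ (relA_mono Y X Finset.subset_union_left hA)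
      (relA_mono Y X Finset.subset_union_right hB)⟩
  | smul r x _ hx =>
    obtain ⟨A, hA⟩ := hx
    exact ⟨A, Submodule.smul_mem _ _ hA⟩

open scoped Classical in
lemma tA_kills (A : Finset (Σ j : V, Σ k : V, (j ⟶ k)))
    (t : ∀ j : V, ↑(X.obj (vtx' j)) →ₗ[R] ((PathTo i j → E) →+ QZ.{u}))
    (ht : ∀ j x h, t j x h = baseT X i E φ j x h +
        ∑ b ∈ A.preimage (Sigma.mk j) sigma_mk_injective.injOn,
          t b.1 (X.map b.2.toPath x) (fun p => h (PathTo.cons b.2 p)))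
    {j k : V} (a : j ⟶ k) (ha : (⟨j, k, a⟩ : Σ j : V, Σ k : V, (j ⟶ k)) ∈ A)
    (y : PathTo i k → E) (x) :
    t j x (consExt (R := Rᵐᵒᵖ) E i a y) = t k (X.map a.toPath x) y := by
  have hb := baseT_apply X i E φ j x (consExt (R := Rᵐᵒᵖ) E i a y) (fun e => by
    subst e
    exact Function.extend_apply' _ _ _ (by rintro ⟨q, hq⟩; exact PathTo.cons_ne_nil hq))
  rw [ht, hb, zero_add, Finset.sum_eq_single (⟨k, a⟩ : Σ k : V, (j ⟶ k))]
  · congr 1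
    funext p
    exact (PathTo.cons_inj a).extend_apply y 0 p
  · rintro ⟨k', b⟩ - hne
    have : (fun p => (consExt (R := Rᵐᵒᵖ) E i a y) (PathTo.cons b p)) = 0 := by
      funext p
      refine Function.extend_apply' _ _ _ ?_
      rintro ⟨q, hq⟩
      apply hne
      injection hq with _ h2 h3 _
      subst h2
      rw [eq_of_heq h3]
    rw [this, map_zero]
  · intro h
    exact absurd (Finset.mem_preimage.2 ha) h

/-- Inclusion of the coefficient at the trivial path. -/
noncomputable def singleNil : E →ₗ[Rᵐᵒᵖ] ↑((pathRep i E).obj (vtx' (op i))) :=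
  open scoped Classical in
  (LinearMap.single Rᵐᵒᵖ (fun _ : PathTo i i => (E : Type u)) PathTo.nil :
    E →ₗ[Rᵐᵒᵖ] (PathTo i i → E))

open scoped Classical in
/-- The comparison map. -/
noncomputable def iotaB : NcTensor R E ↑(X.obj (vtx' i)) →+ repTensorBase (pathRep i E) X :=
  (DirectSum.of (fun j : V => NcTensor R ↑((pathRep i E).obj (vtx' (op j))) ↑(X.obj (vtx' j))) i).comp
    (NcTensor.map R (singleNil i E) (LinearMap.id (M := ↑(X.obj (vtx' i))))).toAddMonoidHom

open scoped Classical in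
theorem iota_inj (hV : LeftRooted V) (z : NcTensor R E ↑(X.obj (vtx' i)))
    (hz : iotaB X i E z ∈ repTensorRel (pathRep i E) X) : ncLift φ z = 0 := by
  obtain ⟨A, hA⟩ := mem_relA _ _ hz
  obtain ⟨t, ht⟩ := exists_t X i E φ hV A
  let T : repTensorBase (pathRep i E) X →+ QZ.{u} := DirectSum.toAddMonoid fun j =>
    ncLift (E := ↑((pathRep i E).obj (vtx' (op j)))) (t j)
  have hT : ∀ w ∈ relA (pathRep i E) X A, T w = 0 := by
    intro w hw
    induction hw using Submodule.span_induction with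
    | mem w hw =>
      obtain ⟨j, k, a, y, x, ha, rfl⟩ := hw
      refine (map_sub T _ _).trans ?_
      simp only [T]
      rw [DirectSum.toAddMonoid_of, DirectSum.toAddMonoid_of]
      refine sub_eq_zero.2 (Eq.trans ?_ (tA_kills X i E φ A t ht a ha y x))
      exact congrArg (fun w => t j x w)
        (LinearMap.congr_fun (congrArg ModuleCat.Hom.hom (pathRep_map i E a)) y)
    | zero => exact map_zero T
    | add x y _ _ hx hy => exact (map_add T _ _).trans (by rw [hx, hy, add_zero])
    | smul r x _ hx => exact (map_zsmul T r x).trans (by rw [hx, smul_zero])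
  rw [← hT _ hA]
  refine nc_hom_ext (f := ncLift φ) (g := T.comp (iotaB X i E)) (fun e x => ?_) z
  have : T (iotaB X i E (NcTensor.tmul R _ _ e x)) = t i x (Pi.single PathTo.nil e) :=
    (DirectSum.toAddMonoid_of (fun j =>
      ncLift (E := ↑((pathRep i E).obj (vtx' (op j)))) (t j)) i _).trans rfl
  refine Eq.trans ?_ this.symm
  rw [ht, baseT_self, Finset.sum_eq_zero, add_zero]
  · change φ x e = φ x (Pi.single (M := fun _ : PathTo i i => (E : Type u)) PathTo.nil e PathTo.nil)
    rw [Pi.single_eq_same]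
  · intro b _
    have : (fun p => Pi.single (M := fun _ : PathTo i i => (E : Type u)) PathTo.nil e
        (PathTo.cons b.2 p)) = 0 := by
      funext p
      exact Pi.single_eq_of_ne (M := fun _ : PathTo i i => (E : Type u)) PathTo.cons_ne_nil e
    rw [this, map_zero]

theorem vertex_ext (hV : LeftRooted V) : ∀ X ∈ AbsPGF (TQ V R), ∀ i : V, ∀ N ∈ TR R,
    ext1Zero (X.obj (vtx i)) N := by
  classical
  rintro X hX i _ ⟨E, hE, rfl⟩
  obtain ⟨-, ⟨K, hK, P, m, p, hP, s⟩⟩ := absPGF_twoSided _ X hX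
  have hPi := eval_projective (vtx i) P
  refine ext1Zero_of_extend (s.eval (vtx i)) fun φ => ?_
  have hH := ext_dual_of_vertex_injective hX (pathRep i E) (fun j => pi_injective _ E)
  obtain ⟨ξ, hξ⟩ := char_factor
    (NcTensor.map R (LinearMap.id (M := E)) (m.app (vtx' i)).hom).toAddMonoidHom
    (ncLift φ.hom) (fun z hz => by
      refine iota_inj K i E φ.hom hV z ?_
      rw [← Submodule.Quotient.mk_eq_zero]
      by_contra hne
      obtain ⟨ρ, hρ⟩ := char_sep hne
      obtain ⟨l, hl⟩ := hH.extend s (repUnlift ρ)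
      apply hρ
      have h1 : ∀ w, repLift l (RepTensor.map (𝟙 _) m w) = ρ w := by
        intro w
        refine rep_hom_ext (f := (repLift l).comp (RepTensor.map (𝟙 _) m).toAddMonoidHom)
          (g := ρ) (fun j y x => ?_) w
        change repLift l (RepTensor.map (𝟙 _) m (RepTensor.tmul j y x)) = _
        rw [RepTensor.map_tmul, repLift_tmul, ← dualApp_repUnlift, ← hl]
        rfl
      have h2 : RepTensor.map (𝟙 _) m (Submodule.Quotient.mk (iotaB K i E z)) =
          Submodule.Quotient.mk (iotaB P i E
            (NcTensor.map R (LinearMap.id (M := E)) (m.app (vtx' i)).hom z)) := by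
        refine nc_hom_ext (f := (RepTensor.map (𝟙 _) m).toAddMonoidHom.comp
          ((repTensorRel (pathRep i E) K).mkQ.toAddMonoidHom.comp (iotaB K i E)))
          (g := ((repTensorRel (pathRep i E) P).mkQ.toAddMonoidHom.comp (iotaB P i E)).comp
            (NcTensor.map R (LinearMap.id (M := E)) (m.app (vtx' i)).hom).toAddMonoidHom)
          (fun e x => ?_) z
        exact RepTensor.map_tmul (𝟙 _) m i (singleNil i E e) x
      rw [← h1, h2]
      have hz' : NcTensor.map R (LinearMap.id (M := E)) (m.app (vtx' i)).hom z = 0 := hz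
      rw [hz', map_zero]
      exact map_zero (repLift l))
  refine ⟨ModuleCat.ofHom (ncUnlift ξ), ModuleCat.hom_ext (LinearMap.ext fun x =>
    AddMonoidHom.ext fun e => ?_)⟩
  exact hξ (NcTensor.tmul R E _ e x)

end PathRep
end QuiverGF

namespace QuiverGF

section Sys
open scoped Classical
variable {R : Type u} [Ring R] {B : Type u} (m : B → B →₀ R)
variable {E : Type u} [AddCommGroup E] [Module Rᵐᵒᵖ E]
variable {N : Type u} [AddCommGroup N] [Module R N]

/-- Row vector times matrix. -/
noncomputable def vE : (B →₀ E) →+ (B →₀ E) := Finsupp.liftAddHom fun b =>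
  { toFun := fun e => (m b).mapRange (fun r => MulOpposite.op r • e) (by simp)
    map_zero' := by ext; simp
    map_add' := fun x y => by ext; simp }

lemma vE_single (b : B) (e : E) (c : B) :
    vE m (Finsupp.single b e) c = MulOpposite.op (m b c) • e := by
  simp [vE]

/-- Matrix times column vector. -/
noncomputable def dst (f : B → N) (b : B) : N := Finsupp.linearCombination R f (m b)

lemma dst_add (f g : B → N) : dst m (f + g) = dst m f + dst m g := by
  funext b
  simp [dst, Finsupp.linearCombination_apply, Finsupp.sum_add]

lemma dst_sub (f g : B → N) : dst m (f - g) = dst m f - dst m g := by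
  rw [eq_sub_iff_add_eq, ← dst_add, sub_add_cancel]

lemma dst_congr {f g : B → N} {b : B} (h : ∀ c, m b c ≠ 0 → f c = g c) : dst m f b = dst m g b := by
  simp only [dst, Finsupp.linearCombination_apply]
  exact Finset.sum_congr rfl fun c hc => congrArg (_ • ·) (h c (Finsupp.mem_support_iff.1 hc))

lemma dst_zero_of {f : B → N} {b : B} (h : ∀ c, m b c ≠ 0 → f c = 0) : dst m f b = 0 := by
  rw [dst_congr m (g := 0) h]; simp [dst]

/-- The matrix squares to zero. -/
def Sq : Prop := ∀ b, Finsupp.linearCombination R m (m b) = 0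

lemma dst_dst (h : Sq m) (f : B → N) : dst m (dst m f) = 0 := by
  funext b
  have : dst m (dst m f) b = Finsupp.linearCombination R f (Finsupp.linearCombination R m (m b)) := by
    simp only [dst, Finsupp.linearCombination_apply (R := R) (v := m), Finsupp.sum, map_sum, map_smul]
    rw [Finsupp.linearCombination_apply]
    rfl
  rw [this, h b, map_zero]; rfl

/-- Vanishing off a set. -/
def Off {X : Type*} [Zero X] (C : Set B) (f : B → X) : Prop := ∀ b, b ∉ C → f b = 0

/-- Closed subsets. -/
def Cl (C : Set B) : Prop := ∀ b ∈ C, Off C (m b)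

lemma pair_adj {G : Type u} [AddCommGroup G] (β : E →+ N →+ G)
    (hβ : ∀ e (r : R) n, β (MulOpposite.op r • e) n = β e (r • n)) (f : B → N) (y : B →₀ E) :
    (vE m y).sum (fun c e => β e (f c)) = y.sum (fun b e => β e (dst m f b)) := by
  induction y using Finsupp.induction_linear with
  | zero => simp
  | add x y hx hy =>
    rw [map_add, Finsupp.sum_add_index', Finsupp.sum_add_index', hx, hy] <;> simp
  | single b e =>
    rw [Finsupp.sum_single_index (by simp)]
    simp only [vE, Finsupp.liftAddHom_apply_single, AddMonoidHom.coe_mk, ZeroHom.coe_mk]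
    rw [Finsupp.sum_mapRange_index (by simp)]
    simp [dst, Finsupp.linearCombination_apply, Finsupp.sum, hβ]

lemma vE_map {E' : Type u} [AddCommGroup E'] [Module Rᵐᵒᵖ E'] (φ : E →ₗ[Rᵐᵒᵖ] E') (y : B →₀ E) :
    vE m (y.mapRange φ (map_zero φ)) = (vE m y).mapRange φ (map_zero φ) := by
  induction y using Finsupp.induction_linear with
  | zero => simp
  | add x y hx hy =>
    rw [Finsupp.mapRange_add (by simp), map_add, hx, hy, map_add, Finsupp.mapRange_add (by simp)]
  | single b e =>
    rw [Finsupp.mapRange_single]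
    ext c
    simp [vE_single]

lemma vE_vE (h : Sq m) (y : B →₀ E) : vE m (vE m y) = 0 := by
  induction y using Finsupp.induction_linear with
  | zero => simp
  | add x y hx hy => rw [map_add, map_add, hx, hy, add_zero]
  | single b e =>
    ext d
    have : ∀ z : B →₀ R, vE m (z.mapRange (fun r => MulOpposite.op r • e) (by simp)) =
        (Finsupp.linearCombination R m z).mapRange (fun r => MulOpposite.op r • e) (by simp) := by
      intro z
      induction z using Finsupp.induction_linear with
      | zero => simp
      | add x y hx hy =>
        rw [Finsupp.mapRange_add (by simp [add_smul]), map_add, hx, hy, map_add,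
          Finsupp.mapRange_add (by simp [add_smul])]
      | single b r =>
        ext d
        simp [vE_single, mul_smul]
    have h2 := this (m b)
    rw [h b] at h2
    have h3 : (vE m (Finsupp.single b e) : B →₀ E) =
        (m b).mapRange (fun r => MulOpposite.op r • e) (by simp) := by
      ext c; simp [vE_single]
    rw [h3, h2]; simp

variable {m}

lemma Off.vE' {C : Set B} (hC : Cl m C) {y : B →₀ E} (hy : Off C y) : Off C (vE m y) := by
  intro c hc
  have : vE m y = y.sum fun b e => vE m (Finsupp.single b e) := by
    conv_lhs => rw [← Finsupp.sum_single y]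
    rw [Finsupp.sum, map_sum]; rfl
  rw [this, Finsupp.sum, Finsupp.finsetSum_apply]
  refine Finset.sum_eq_zero fun b hb => ?_
  rw [vE_single, hC b (by by_contra h; exact Finsupp.mem_support_iff.1 hb (hy b h)) c hc]
  simp

/-- Cutting down to a subset. -/
noncomputable def cut {X : Type*} [Zero X] (D : Set B) (y : B →₀ X) : B →₀ X := y.filter (· ∈ D)

lemma cut_apply {X : Type*} [Zero X] (D : Set B) (y : B →₀ X) (b : B) :
    cut D y b = if b ∈ D then y b else 0 := Finsupp.filter_apply _ _ _

lemma cut_apply_pos {X : Type*} [Zero X] {D : Set B} (y : B →₀ X) {b : B} (h : b ∈ D) :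
    cut D y b = y b := by rw [cut_apply, if_pos h]

lemma cut_apply_neg {X : Type*} [Zero X] {D : Set B} (y : B →₀ X) {b : B} (h : b ∉ D) :
    cut D y b = 0 := by rw [cut_apply, if_neg h]

lemma cut_add (D : Set B) (y z : B →₀ E) : cut D (y + z) = cut D y + cut D z :=
  Finsupp.filter_add

lemma cut_sub (D : Set B) (y z : B →₀ E) : cut D (y - z) = cut D y - cut D z :=
  Finsupp.filter_sub _ _ _

lemma cut_zero (D : Set B) : cut D (0 : B →₀ E) = 0 := Finsupp.filter_zero _

lemma cut_single (D : Set B) (b : B) (e : E) :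
    cut D (Finsupp.single b e) = if b ∈ D then Finsupp.single b e else 0 := by
  split_ifs with h
  · exact Finsupp.filter_single_of_pos _ h
  · exact Finsupp.filter_single_of_neg _ h

variable (m)

/-- Truncation. -/
noncomputable def tr (D : Set B) (b : B) : B →₀ R := if b ∈ D then cut D (m b) else 0

variable {m}

lemma tr_apply (D : Set B) (b c : B) : tr m D b c = if b ∈ D ∧ c ∈ D then m b c else 0 := by
  by_cases hb : b ∈ D <;> by_cases hc : c ∈ D <;> simp [tr, hb, hc, cut_apply]

lemma tr_tr {C D : Set B} (h : C ⊆ D) : tr (tr m D) C = tr m C := by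
  funext b; ext c
  rw [tr_apply, tr_apply, tr_apply]
  by_cases hb : b ∈ C <;> by_cases hc : c ∈ C <;> simp [hb, hc, h _]

lemma vE_tr (D : Set B) (y : B →₀ E) :
    vE (tr m D) y = cut D (vE m (cut D y)) := by
  induction y using Finsupp.induction_linear with
  | zero => rw [cut_zero, map_zero, map_zero, cut_zero]
  | add x y hx hy => rw [map_add, hx, hy, cut_add, map_add, cut_add]
  | single b e =>
    ext c
    rw [vE_single, tr_apply, cut_apply]
    by_cases hb : b ∈ D <;> by_cases hc : c ∈ D <;>
      simp [hb, hc, cut_single, vE_single]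

lemma off_filter (D : Set B) (y : B →₀ E) : Off D (cut D y) :=
  fun b hb => cut_apply_neg _ hb

lemma Off.cut {D : Set B} {y : B →₀ E} (h : Off D y) : cut D y = y :=
by
  ext b
  by_cases hb : b ∈ D
  · rw [cut_apply_pos _ hb]
  · rw [cut_apply_neg _ hb, h b hb]

lemma vE_tr_closed {C : Set B} (hC : Cl m C) {y : B →₀ E} (hy : Off C y) :
    vE (tr m C) y = vE m y := by
  rw [vE_tr, hy.cut, (hy.vE' hC).cut]

lemma tr_closed {C : Set B} (hC : Cl m C) {b : B} (hb : b ∈ C) : tr m C b = m b := by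
  ext c
  rw [tr_apply]
  by_cases hc : c ∈ C
  · simp [hb, hc]
  · simp [hc, hC b hb c hc]

lemma filter_compl_of (C D : Set B) (h : Disjoint C D) {y : B →₀ E} (hy : Off C y) :
    cut D y = 0 := by
  ext b
  rw [cut_apply]
  split_ifs with hb
  · exact hy b fun hc => Set.disjoint_left.1 h hc hb
  · rfl

variable (m) (E) in
/-- Exactness on a subset. -/
def Ex (D : Set B) : Prop := ∀ y : B →₀ E, Off D y → vE m y = 0 → ∃ x, vE m x = y

variable (m) (N) in
/-- Hom-exactness on a subset. -/
def Nex (D : Set B) : Prop := ∀ f : B → N, Off D f → dst m f = 0 → ∃ g, dst m g = f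

lemma Ex.tr_iff {C : Set B} (hC : Cl m C) : Ex (tr m C) E C ↔
    ∀ y : B →₀ E, Off C y → vE m y = 0 → ∃ x : B →₀ E, Off C x ∧ vE m x = y := by
  constructor
  · intro h y hy h0
    obtain ⟨x, hx⟩ := h y hy (by rw [vE_tr_closed hC hy, h0])
    refine ⟨cut C x, off_filter _ _, ?_⟩
    rw [← hx, vE_tr, ((off_filter C x).vE' hC).cut]
  · intro h y hy h0
    obtain ⟨x, hx, hx'⟩ := h y hy (by rw [← h0, vE_tr_closed hC hy])
    exact ⟨x, by rw [vE_tr_closed hC hx, hx']⟩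

lemma split_compl (C : Set B) (y : B →₀ E) :
    cut C y + cut Cᶜ y = y := by
  ext b
  by_cases hb : b ∈ C <;> simp [cut_apply, hb]

theorem Ex.quot (hm : Sq m) {C : Set B} (hC : Cl m C) (h1 : Ex (tr m C) E C) (h : Ex m E Set.univ) :
    Ex (tr m Cᶜ) E Cᶜ := by
  intro y hy h0
  rw [vE_tr, hy.cut] at h0
  have hz : Off C (vE m y) := fun b hb => by
    have := DFunLike.congr_fun h0 b
    rwa [cut_apply_pos _ hb] at this
  obtain ⟨w, hw, hw'⟩ := (Ex.tr_iff hC).1 h1 _ hz (vE_vE m hm y)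
  obtain ⟨x, hx⟩ := h (y - w) (fun b hb => absurd trivial hb) (by rw [map_sub, hw', sub_self])
  refine ⟨x, ?_⟩
  have h2 := congrArg (fun z : B →₀ E => cut Cᶜ z) hx
  rw [← split_compl C x, map_add, cut_add, cut_sub,
    filter_compl_of C Cᶜ disjoint_compl_right ((off_filter C x).vE' hC),
    filter_compl_of C Cᶜ disjoint_compl_right hw, hy.cut, zero_add, sub_zero] at h2
  rw [vE_tr, h2]

lemma off_union {C C1 : Set B} {y : B →₀ E} (hy : Off (C ∪ C1) y) (h : cut C1 y = 0) :
    Off C y := by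
  intro b hb
  by_cases h1 : b ∈ C1
  · have := DFunLike.congr_fun h b
    rwa [cut_apply_pos _ h1] at this
  · exact hy b (by simp [hb, h1])

theorem Ex.ext (hm : Sq m) {C C1 : Set B} (hC : Cl m C) (hC' : Cl m (C ∪ C1)) (hd : Disjoint C C1)
    (h : Ex (tr m C) E C) (h1 : Ex (tr m C1) E C1) : Ex (tr m (C ∪ C1)) E (C ∪ C1) := by
  rw [Ex.tr_iff hC']
  intro y hy h0
  have hf : cut C y + cut C1 y = y := by
    ext b
    rw [Finsupp.add_apply, cut_apply, cut_apply]
    by_cases hb : b ∈ C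
    · simp [hb, Set.disjoint_left.1 hd hb]
    · by_cases hb1 : b ∈ C1
      · simp [hb, hb1]
      · simp [hb, hb1, hy b (by simp [hb, hb1])]
  obtain ⟨x1, hx1⟩ := h1 (cut C1 y) (off_filter _ _) (by
    rw [vE_tr, (off_filter C1 y).cut]
    have := congrArg (fun z : B →₀ E => cut C1 z) (congrArg (vE m) hf)
    rw [h0, map_add, cut_add, filter_compl_of C C1 hd ((off_filter C y).vE' hC),
      zero_add] at this
    rw [this, cut_zero])
  rw [vE_tr] at hx1
  set x := cut C1 x1 with hx
  have hxo : Off (C ∪ C1) x := fun b hb => off_filter C1 x1 b fun h => hb (Or.inr h)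
  have hy' : Off C (y - vE m x) := off_union (C1 := C1)
    (fun b hb => by rw [Finsupp.sub_apply, hy b hb, hxo.vE' hC' b hb, sub_zero])
    (by rw [cut_sub, hx1, sub_self])
  obtain ⟨x0, hx0, hx0'⟩ := (Ex.tr_iff hC).1 h _ hy' (by rw [map_sub, h0, vE_vE m hm, sub_zero])
  refine ⟨x0 + x, fun b hb => ?_, by rw [map_add, hx0', sub_add_cancel]⟩
  rw [Finsupp.add_apply, hxo b hb, hx0 b fun h => hb (Or.inl h), add_zero]

end Sys
end QuiverGF

namespace QuiverGF

section Zorn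
open scoped Classical
variable {R : Type u} [Ring R] {B : Type u} {m : B → B →₀ R}
variable {N : Type u} [AddCommGroup N] [Module R N]

lemma vE_ring (y : B →₀ R) : vE m y = Finsupp.linearCombination R m y := by
  induction y using Finsupp.induction_linear with
  | zero => simp
  | add x y hx hy => rw [map_add, hx, hy, map_add]
  | single b r => ext c; simp [vE_single]

lemma Sq.tr_compl (hm : Sq m) {C : Set B} (hC : Cl m C) : Sq (tr m Cᶜ) := by
  intro b
  rw [← vE_ring]
  by_cases hb : b ∈ Cᶜ
  · have h1 : tr m Cᶜ b = cut Cᶜ (m b) := if_pos hb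
    rw [h1, vE_tr, (off_filter Cᶜ (m b)).cut]
    have h2 : vE m (m b) = 0 := by rw [vE_ring]; exact hm b
    rw [← split_compl C (m b), map_add] at h2
    have h3 := congrArg (fun z : B →₀ R => cut Cᶜ z) h2
    rw [cut_add, filter_compl_of C Cᶜ disjoint_compl_right ((off_filter C (m b)).vE' hC),
      zero_add] at h3
    rw [h3, cut_zero]
  · have h1 : tr m Cᶜ b = 0 := if_neg hb
    rw [h1, map_zero]

lemma lc_cut (D : Set B) (g : B → N) (z : B →₀ R) :
    Finsupp.linearCombination R g (cut D z) = Finsupp.linearCombination R (D.indicator g) z := by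
  induction z using Finsupp.induction_linear with
  | zero => rw [cut_zero, map_zero, map_zero]
  | add x y hx hy => rw [cut_add, map_add, hx, hy, map_add]
  | single b r =>
    rw [cut_single]
    split_ifs with h <;> simp [h]

lemma dst_tr (D : Set B) (g : B → N) (b : B) :
    dst (tr m D) g b = if b ∈ D then dst m (D.indicator g) b else 0 := by
  split_ifs with h
  · have h1 : tr m D b = cut D (m b) := if_pos h
    rw [dst, h1, lc_cut]; rfl
  · have h1 : tr m D b = 0 := if_neg h
    rw [dst, h1, map_zero]

variable (m) in
/-- Partial solutions. -/
structure PSol (𝓔 : Set (ModuleCat.{u} Rᵐᵒᵖ)) (f : B → N) where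
  /-- domain -/
  C : Set B
  /-- solution -/
  h : B → N
  cl : Cl m C
  ex : ∀ E ∈ 𝓔, Ex (tr m C) E C
  sol : ∀ b ∈ C, dst m h b = f b

theorem zorn_nex (𝓔 : Set (ModuleCat.{u} Rᵐᵒᵖ)) (hm : Sq m) (h : ∀ E ∈ 𝓔, Ex m E Set.univ)
    (P : ∀ (m : B → B →₀ R) (D : Set B), Sq m → tr m D = m → (∀ E ∈ 𝓔, Ex m E D) → D.Nonempty →
      ∃ C1 ⊆ D, C1.Nonempty ∧ Cl m C1 ∧ (∀ E ∈ 𝓔, Ex (tr m C1) E C1) ∧ Nex (tr m C1) N C1) :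
    Nex m N Set.univ := by
  intro f _ hf
  let r : PSol m 𝓔 f → PSol m 𝓔 f → Prop := fun s t => s.C ⊆ t.C ∧ ∀ b ∈ s.C, t.h b = s.h b
  obtain ⟨s, hs⟩ : ∃ s, ∀ t, r s t → r t s := by
    refine exists_maximal_of_chains_bounded (r := r) (fun c hc => ?_)
      (fun hab hbc => ⟨hab.1.trans hbc.1, fun b hb => (hbc.2 b (hab.1 hb)).trans (hab.2 b hb)⟩)
    let C : Set B := {b | ∃ s ∈ c, b ∈ s.C}
    let H : B → N := fun b => if hb : ∃ s ∈ c, b ∈ s.C then hb.choose.h b else 0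
    have hH : ∀ s ∈ c, ∀ b ∈ s.C, H b = s.h b := by
      intro s hs b hb
      have hb' : ∃ s ∈ c, b ∈ s.C := ⟨s, hs, hb⟩
      have e : H b = hb'.choose.h b := dif_pos hb'
      obtain ⟨h1, h2⟩ := hb'.choose_spec
      rw [e]
      by_cases hne : hb'.choose = s
      · rw [hne]
      · rcases hc h1 hs hne with h3 | h3
        · exact (h3.2 b h2).symm
        · exact h3.2 b hb
    have hcl : Cl m C := by
      rintro b ⟨s, hs, hb⟩ d hd
      exact s.cl b hb d fun h => hd ⟨s, hs, h⟩
    refine ⟨⟨C, H, hcl, fun E hE => ?_, ?_⟩, fun s hs => ⟨fun b hb => ⟨s, hs, hb⟩, hH s hs⟩⟩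
    · rw [Ex.tr_iff hcl]
      intro y hy h0
      rcases c.eq_empty_or_nonempty with rfl | hne
      · refine ⟨0, fun b _ => rfl, ?_⟩
        ext b
        rw [map_zero]
        exact (hy b (by rintro ⟨s, hs, _⟩; exact hs)).symm
      · have : ∃ s ∈ c, ∀ b ∈ y.support, b ∈ s.C := by
          have hC : ∀ b ∈ y.support, b ∈ C := fun b hb => by
            by_contra h; exact Finsupp.mem_support_iff.1 hb (hy b h)
          revert hC
          generalize y.support = K
          induction K using Finset.induction_on with
          | empty => intro _; obtain ⟨s, hs⟩ := hne; exact ⟨s, hs, by simp⟩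
          | insert a K _ ih =>
            intro hC
            obtain ⟨s, hs, h1⟩ := ih fun b hb => hC b (Finset.mem_insert_of_mem hb)
            obtain ⟨t, ht, h2⟩ := hC a (Finset.mem_insert_self _ _)
            have hst : s.C ⊆ t.C ∨ t.C ⊆ s.C := by
              by_cases hne : s = t
              · left; rw [hne]
              · exact (hc hs ht hne).imp (fun h => h.1) (fun h => h.1)
            rcases hst with h3 | h3
            · refine ⟨t, ht, fun b hb => ?_⟩
              rcases Finset.mem_insert.1 hb with rfl | hb
              · exact h2
              · exact h3 (h1 b hb)
            · refine ⟨s, hs, fun b hb => ?_⟩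
              rcases Finset.mem_insert.1 hb with rfl | hb
              · exact h3 h2
              · exact h1 b hb
        obtain ⟨s, hs, hy'⟩ := this
        obtain ⟨x, hx, hx'⟩ := (Ex.tr_iff s.cl).1 (s.ex E hE) y
          (fun b hb => by by_contra h; exact hb (hy' b (Finsupp.mem_support_iff.2 h))) h0
        exact ⟨x, fun b hb => hx b fun h => hb ⟨s, hs, h⟩, hx'⟩
    · rintro b ⟨s, hs, hb⟩
      rw [← s.sol b hb]
      exact dst_congr m fun c hc => hH s hs c (by by_contra h; exact hc (s.cl b hb c h))
  suffices hC : s.C = Set.univ from ⟨s.h, funext fun b => s.sol b (hC ▸ trivial)⟩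
  by_contra hC
  have hC := Set.nonempty_compl.2 hC
  obtain ⟨C1, hCD, hC1, hcl, hex, hN⟩ := P (tr m s.Cᶜ) s.Cᶜ (hm.tr_compl s.cl) (tr_tr le_rfl)
    (fun E hE => (s.ex E hE).quot hm s.cl (h E hE)) hC
  rw [tr_tr hCD] at hN
  simp only [tr_tr hCD] at hex
  have hdis : Disjoint s.C C1 := Set.disjoint_left.2 fun b hb hb1 => hCD hb1 hb
  have hcl' : Cl m (s.C ∪ C1) := by
    rintro b (hb | hb) d hd
    · exact s.cl b hb d fun h => hd (Or.inl h)
    · have h1 := hcl b hb d fun h => hd (Or.inr h)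
      rwa [tr_apply, if_pos ⟨hCD hb, fun h => hd (Or.inl h)⟩] at h1
  let f' := f - dst m s.h
  have hf' : dst m f' = 0 := by rw [dst_sub, hf, dst_dst m hm, sub_zero]
  have hf0 : ∀ b ∈ s.C, f' b = 0 := fun b hb => by
    change f b - dst m s.h b = 0
    rw [s.sol b hb, sub_self]
  obtain ⟨g, hg⟩ := hN (C1.indicator f') (fun b hb => Set.indicator_of_notMem hb _) (by
    funext b
    rw [dst_tr]
    split_ifs with hb
    · rw [show (0 : B → N) b = dst m f' b by rw [hf']]
      refine dst_congr m fun c hc => ?_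
      by_cases h1 : c ∈ C1
      · simp [h1]
      · have h2 : c ∈ s.C := by
          by_contra h2
          exact hc (hcl' b (Or.inr hb) c (by simp [h1, h2]))
        simp [h1, hf0 c h2]
    · rfl)
  have key := hs ⟨s.C ∪ C1, s.h + C1.indicator g, hcl',
    fun E hE => (s.ex E hE).ext hm s.cl hcl' hdis (hex E hE), ?_⟩
    ⟨Set.subset_union_left, fun b hb => by simp [Set.disjoint_left.1 hdis hb]⟩
  · obtain ⟨b, hb⟩ := hC1
    exact hCD hb (key.1 (Or.inr hb))
  · intro b hb
    rw [dst_add, Pi.add_apply]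
    rcases hb with hb | hb
    · rw [s.sol b hb, dst_zero_of m (f := C1.indicator g), add_zero]
      intro c hc
      have h2 : c ∈ s.C := by by_contra h2; exact hc (s.cl b hb c h2)
      simp [Set.disjoint_left.1 hdis h2]
    · have := congrFun hg b
      rw [dst_tr, if_pos hb, Set.indicator_of_mem (by simpa using hb)] at this
      rw [this]
      exact add_sub_cancel _ _

end Zorn
end QuiverGF

namespace QuiverGF

section Unif
open scoped Classical
variable {R : Type u} [Ring R] {B : Type u} {m : B → B →₀ R}
variable {N : Type u} [AddCommGroup N] [Module R N]

variable (R) in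
/-- The class of injective right modules. -/
def InjR : Set (ModuleCat.{u} Rᵐᵒᵖ) := {E | Injective E}

lemma pi_injective' {S : Type u} [Ring S] {J : Type u} (E : J → ModuleCat.{u} S)
    (h : ∀ j, Injective (E j)) : Injective (ModuleCat.of S (∀ j, E j)) := by
  have : Injective (∏ᶜ E) := inferInstance
  exact Injective.of_iso (ModuleCat.piIsoPi E) this

theorem uniform {D : Set B} (h : ∀ E ∈ InjR R, Ex m E D) (K : Finset B) :
    ∃ L : Finset B, ∀ E ∈ InjR R, ∀ y : B →₀ E, Off D y → Off (K : Set B) y → vE m y = 0 →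
      ∃ x : B →₀ E, Off (L : Set B) x ∧ vE m x = y := by
  by_contra hcon
  push Not at hcon
  choose E hE y hyD hyK hy0 hx using hcon
  have hP := pi_injective' E hE
  let Y : B →₀ (∀ L, E L) := Finsupp.onFinset K (fun b L => y L b) (fun b hb => by
    by_contra hbK
    exact hb (funext fun L => hyK L b hbK))
  have hY : ∀ L, Y.mapRange (LinearMap.proj (R := Rᵐᵒᵖ) (φ := fun L => (E L : Type u)) L)
      (map_zero _) = y L := fun L => by ext b; rfl
  obtain ⟨x, hx'⟩ := h _ hP Y (fun b hb => funext fun L => hyD L b hb) (by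
    refine Finsupp.ext fun b => funext fun L => ?_
    have := vE_map m (LinearMap.proj (R := Rᵐᵒᵖ) (φ := fun L => (E L : Type u)) L) Y
    rw [hY, hy0] at this
    exact (DFunLike.congr_fun this b).symm)
  refine hx x.support (x.mapRange (LinearMap.proj (R := Rᵐᵒᵖ) (φ := fun L => (E L : Type u))
    x.support) (map_zero _)) (fun b hb => ?_) ?_
  · rw [Finsupp.mapRange_apply, Finsupp.notMem_support_iff.1 (by simpa using hb), map_zero]
  · rw [vE_map]
    refine Eq.trans ?_ (hY x.support)
    rw [← hx']

/-- Evaluation pairing. -/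
noncomputable def evR (N : Type u) [AddCommGroup N] : (N →+ QZ.{u}) →+ N →+ QZ.{u} :=
  AddMonoidHom.id _

theorem star {D : Set B} (h : ∀ E ∈ InjR R, Ex m E D)
    (hN : Injective (ModuleCat.of Rᵐᵒᵖ (N →+ QZ.{u}))) (K : Finset B) (hK : (K : Set B) ⊆ D) :
    ∃ L : Finset B, ∀ f : B → N, (∀ b ∈ L, dst m f b = 0) → ∃ g : B → N, ∀ b ∈ K, dst m g b = f b := by
  obtain ⟨L, hL⟩ := uniform h K
  refine ⟨L, fun f hf => ?_⟩
  let Φ : (B → N) →+ (K → N) :=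
    { toFun := fun g b => dst m g b
      map_zero' := funext fun b => dst_zero_of m fun _ _ => rfl
      map_add' := fun g g' => funext fun b => congrFun (dst_add m g g') b }
  by_cases hr : (fun b : K => f b) ∈ Φ.range
  · obtain ⟨g, hg⟩ := hr
    exact ⟨g, fun b hb => congrFun hg ⟨b, hb⟩⟩
  · exfalso
    obtain ⟨χ, hχ, hχ0⟩ := char_sep_mod _ hr
    let yf : B → (N →+ QZ.{u}) := fun b =>
      if hb : b ∈ K then χ.comp (AddMonoidHom.single (fun _ : K => N) ⟨b, hb⟩) else 0
    let y : B →₀ (N →+ QZ.{u}) := Finsupp.onFinset K yf (fun b hb => by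
      by_contra hbK; exact hb (dif_neg hbK))
    have hyK : Off (K : Set B) y := fun b hb => dif_neg (by simpa using hb)
    have hp : ∀ f : B → N, y.sum (fun b e => evR N e (f b)) = χ (fun b : K => f b) := by
      intro f
      rw [Finsupp.onFinset_sum _ (by simp), ← Finset.sum_coe_sort]
      rw [show (fun b : K => f b) = ∑ b : K, Pi.single b (f b) from (Finset.univ_sum_single _).symm,
        map_sum]
      refine Finset.sum_congr rfl fun b _ => ?_
      have : yf b = χ.comp (AddMonoidHom.single (fun _ : K => N) b) := dif_pos b.2
      rw [this]; rfl
    have hadj := fun (x : B →₀ (N →+ QZ.{u})) (f : B → N) =>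
      pair_adj m (evR N) (fun _ _ _ => rfl) f x
    obtain ⟨x, hx, hx'⟩ := hL _ hN y (fun b hb => hyK b fun h => hb (hK h)) hyK (by
      refine Finsupp.ext fun c => DFunLike.ext _ _ fun n => ?_
      have h1 := hadj y (Pi.single c n)
      rw [hp] at h1
      refine Eq.trans ?_ (h1.trans (hχ0 _ ⟨Pi.single c n, rfl⟩))
      rw [Finsupp.sum, Finset.sum_eq_single c]
      · rw [Pi.single_eq_same]; rfl
      · intro b _ hb
        rw [Pi.single_eq_of_ne hb, map_zero]
      · intro hc
        rw [Finsupp.notMem_support_iff.1 hc, map_zero]; rfl)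
    apply hχ
    rw [← hp, ← hx', hadj, Finsupp.sum]
    refine Finset.sum_eq_zero fun b hb => ?_
    rw [hf b (by by_contra h; exact Finsupp.mem_support_iff.1 hb (hx b (by simpa using h))), map_zero]

theorem nex_countable {D : Set B} (hm : Sq m) (htr : tr m D = m) (hD : D.Countable)
    (h : ∀ E ∈ InjR R, Ex m E D)
    (hN : Injective (ModuleCat.of Rᵐᵒᵖ (N →+ QZ.{u}))) : Nex m N D := by
  intro f hfD hf
  have hst : ∀ K : Finset B, ∃ L : Finset B, ∀ f : B → N, (∀ b ∈ L, dst m f b = 0) →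
      ∃ g : B → N, ∀ b ∈ K, b ∈ D → dst m g b = f b := by
    intro K
    obtain ⟨L, hL⟩ := star (N := N) h hN (K.filter (· ∈ D)) (by intro b hb; simp at hb; exact hb.2)
    exact ⟨L, fun f hf => (hL f hf).imp fun g hg b hb hbD => hg b (by simp [hb, hbD])⟩
  choose L hL using hst
  have hm0 : ∀ b, b ∉ D → m b = 0 := fun b hb => by rw [← htr]; exact if_neg hb
  have hL' : ∀ (K : Finset B) (f : B → N), Off D f → (∀ b ∈ L K, dst m f b = 0) →
      ∃ g : B → N, ∀ b ∈ K, dst m g b = f b := by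
    intro K f hf hf'
    obtain ⟨g, hg⟩ := hL K f hf'
    refine ⟨g, fun b hb => ?_⟩
    by_cases hbD : b ∈ D
    · exact hg b hb hbD
    · rw [dst, hm0 b hbD, map_zero, hf b hbD]
  rcases D.eq_empty_or_nonempty with hDe | hDn
  · subst hDe
    exact ⟨0, by rw [funext fun b => hfD b (by simp)]; funext b; exact dst_zero_of m fun _ _ => rfl⟩
  obtain ⟨en, hen⟩ := hD.exists_eq_range hDn
  let K : ℕ → Finset B := fun n => Nat.rec ∅ (fun n K => K ∪ L K ∪ {en n}) n
  have hKs : ∀ n, K (n + 1) = K n ∪ L (K n) ∪ {en n} := fun n => rfl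
  have hKm : Monotone K := monotone_nat_of_le_succ fun n => by
    rw [hKs]; exact Finset.subset_union_left.trans Finset.subset_union_left
  have hKL : ∀ n, L (K n) ⊆ K (n + 1) := fun n => by
    rw [hKs]; exact Finset.subset_union_right.trans Finset.subset_union_left
  have hKD : ∀ b ∈ D, ∃ n, b ∈ K n := by
    intro b hb
    rw [hen] at hb
    obtain ⟨n, rfl⟩ := hb
    exact ⟨n + 1, by rw [hKs]; simp⟩
  have hstep : ∀ (n : ℕ) (g : {g : B → N // ∀ b ∈ K (n + 1), dst m g b = f b}),
      ∃ g' : {g : B → N // ∀ b ∈ K (n + 2), dst m g b = f b}, ∀ b ∈ K n, b ∈ D → g'.1 b = g.1 b := by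
    rintro n ⟨g, hg⟩
    obtain ⟨k, hk⟩ := hL' (K (n + 2)) f hfD fun b _ => congrFun hf b
    obtain ⟨v, hv⟩ := hL (K n) (g - k) fun b hb => by
      rw [dst_sub, Pi.sub_apply, hg b (hKL n hb), hk b (hKm (Nat.le_succ _) (hKL n hb)), sub_self]
    refine ⟨⟨k + dst m v, fun b hb => ?_⟩, fun b hb hbD => ?_⟩
    · rw [dst_add, dst_dst m hm, add_zero, hk b hb]
    · change k b + dst m v b = g b
      rw [hv b hb hbD]; simp
  choose nx hnx using hstep
  obtain ⟨g0, hg0⟩ := hL' (K 1) f hfD fun b _ => congrFun hf b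
  let G : ∀ n : ℕ, {g : B → N // ∀ b ∈ K (n + 1), dst m g b = f b} := fun n =>
    Nat.rec ⟨g0, hg0⟩ (fun n g => nx n g) n
  have hG : ∀ n, ∀ b ∈ K n, b ∈ D → (G (n + 1)).1 b = (G n).1 b := fun n => hnx n (G n)
  have hG' : ∀ n k, ∀ b ∈ K n, b ∈ D → (G (n + k)).1 b = (G n).1 b := by
    intro n k b hb hbD
    induction k with
    | zero => rfl
    | succ k ih => rw [← ih]; exact hG (n + k) b (hKm (Nat.le_add_right _ _) hb) hbD
  choose! nn hnn using hKD
  have hfin : ∀ n b, b ∈ D → nn b ≤ n → (G n).1 b = (G (nn b)).1 b := by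
    intro n b hb hn
    obtain ⟨k, rfl⟩ := Nat.exists_eq_add_of_le hn
    exact hG' _ _ b (hnn b hb) hb
  refine ⟨fun b => (G (nn b)).1 b, funext fun b => ?_⟩
  by_cases hbD : b ∈ D
  · obtain ⟨n, hn⟩ : ∃ n, n = nn b + (m b).support.sup nn := ⟨_, rfl⟩
    have hn1 : nn b ≤ n + 1 := by omega
    rw [← (G n).2 b (hKm hn1 (hnn b hbD))]
    refine dst_congr m fun c hc => (hfin n c ?_ ?_).symm
    · by_contra h
      rw [← htr, tr_apply, if_neg (fun h' => h h'.2)] at hc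
      exact hc rfl
    · have : nn c ≤ (m b).support.sup nn := Finset.le_sup (Finsupp.mem_support_iff.2 hc)
      omega
  · rw [dst, hm0 b hbD, map_zero, hfD b hbD]

/-- Closure lemma. -/
theorem closure_small (κ : Cardinal.{u}) (hκ : Cardinal.aleph0 ≤ κ) (c : Finset B → Set B)
    (hc : ∀ K, Cardinal.mk (c K) ≤ κ) (b : B) :
    ∃ C : Set B, b ∈ C ∧ (∀ K : Finset B, (K : Set B) ⊆ C → c K ⊆ C) ∧ Cardinal.mk C ≤ κ := by
  let st : Set B → Set B := fun C => C ∪ ⋃ K : Finset ↥C, c (K.map (Function.Embedding.subtype (· ∈ C)))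
  let S : ℕ → Set B := fun n => st^[n] {b}
  have hS : ∀ n, S (n + 1) = S n ∪ ⋃ K : Finset ↥(S n),
      c (K.map (Function.Embedding.subtype (· ∈ S n))) := fun n => Function.iterate_succ_apply' st n {b}
  have hmono : Monotone S := monotone_nat_of_le_succ fun n => by
    rw [hS]; exact Set.subset_union_left
  have hcard : ∀ n, Cardinal.mk (S n) ≤ κ := by
    intro n
    induction n with
    | zero => exact (Cardinal.mk_singleton b).le.trans (Cardinal.one_le_aleph0.trans hκ)
    | succ n ih =>
      rw [hS]
      refine (Cardinal.mk_union_le _ _).trans (Cardinal.add_le_of_le hκ ih ?_)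
      refine (Cardinal.mk_iUnion_le _).trans (Cardinal.mul_le_of_le hκ ?_ (ciSup_le' fun K => hc _))
      have : Cardinal.mk (Finset (S n)) ≤ Cardinal.mk (List (S n)) :=
        Cardinal.mk_le_of_surjective (f := fun l : List (S n) => l.toFinset) fun s =>
          ⟨s.toList, Finset.toList_toFinset s⟩
      exact this.trans ((Cardinal.mk_list_le_max _).trans (max_le hκ ih))
  refine ⟨⋃ n, S n, Set.mem_iUnion.2 ⟨0, rfl⟩, fun K hK => ?_, ?_⟩
  · have : ∃ n, (K : Set B) ⊆ S n := by
      choose! f hf using fun b (hb : b ∈ K) => Set.mem_iUnion.1 (hK hb)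
      exact ⟨K.sup f, fun b hb => hmono (Finset.le_sup hb) (hf b hb)⟩
    obtain ⟨n, hn⟩ := this
    refine Set.Subset.trans ?_ (Set.subset_iUnion S (n + 1))
    rw [hS]
    refine Set.Subset.trans ?_ Set.subset_union_right
    refine Set.Subset.trans ?_ (Set.subset_iUnion _ (K.subtype (· ∈ S n)))
    rw [Finset.subtype_map_of_mem (fun x hx => hn hx)]
  · refine le_trans ?_ (Cardinal.mul_le_of_le hκ (a := Cardinal.aleph0) hκ le_rfl)
    have h2 := Cardinal.mk_iUnion_le_lift S
    simp only [Cardinal.mk_nat, Cardinal.lift_aleph0, Cardinal.lift_uzero] at h2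
    refine h2.trans (mul_le_mul_right (ciSup_le' fun n => ?_) _)
    exact hcard n

end Unif
end QuiverGF

namespace QuiverGF

section Gen
open scoped Classical
variable {R : Type u} [Ring R] {B : Type u} {m : B → B →₀ R}
variable {N : Type u} [AddCommGroup N] [Module R N]

theorem good_of_closed {D : Set B} (htr : tr m D = m) (h : ∀ E ∈ InjR R, Ex m E D) :
    ∃ c : Finset B → Set B, (∀ K, (c K).Countable ∧ c K ⊆ D) ∧ ∀ C ⊆ D,
      (∀ K : Finset B, (K : Set B) ⊆ C → c K ⊆ C) → Cl m C ∧ ∀ E ∈ InjR R, Ex (tr m C) E C := by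
  choose L hL using uniform h
  refine ⟨fun K => ↑(L K ∪ K.biUnion fun b => (m b).support) ∩ D, fun K =>
    ⟨(Finset.countable_toSet _).mono Set.inter_subset_left, Set.inter_subset_right⟩,
    fun C hCD hC => ?_⟩
  have hcl : Cl m C := by
    intro b hb c hc
    by_contra h0
    apply hc
    refine hC {b} (by simpa using hb) ⟨?_, ?_⟩
    · simp [h0]
    · by_contra hD
      rw [← htr, tr_apply, if_neg fun h => hD h.2] at h0
      exact h0 rfl
  refine ⟨hcl, fun E hE => ?_⟩
  rw [Ex.tr_iff hcl]
  intro y hy h0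
  have hyC : (y.support : Set B) ⊆ C := fun b hb => by
    by_contra h'; exact Finsupp.mem_support_iff.1 hb (hy b h')
  obtain ⟨x, hx, hx'⟩ := hL y.support E hE y (fun b hb => hy b fun h' => hb (hCD h'))
    (fun b hb => by simpa using hb) h0
  refine ⟨cut D x, fun b hb => ?_, ?_⟩
  · by_cases hbD : b ∈ D
    · rw [cut_apply_pos _ hbD]
      exact hx b fun h' => hb (hC _ hyC ⟨Finset.mem_union_left _ h', hbD⟩)
    · exact cut_apply_neg _ hbD
  · rw [← hx', ← htr, vE_tr, vE_tr, (off_filter D x).cut]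

theorem nex_flat (hm : Sq m) (h : ∀ E ∈ InjR R, Ex m E Set.univ)
    (hN : Injective (ModuleCat.of Rᵐᵒᵖ (N →+ QZ.{u}))) : Nex m N Set.univ := by
  refine zorn_nex (InjR R) hm h fun m D hm htr h ⟨b, hb⟩ => ?_
  obtain ⟨c, hc, hg⟩ := good_of_closed htr h
  obtain ⟨C, hbC, hC, hcard⟩ := closure_small Cardinal.aleph0 le_rfl c
    (fun K => Cardinal.le_aleph0_iff_set_countable.2 (hc K).1) b
  obtain ⟨hcl, hex⟩ := hg (C ∩ D) Set.inter_subset_right fun K hK => Set.subset_inter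
    (hC K fun x hx => (hK hx).1) (hc K).2
  refine ⟨C ∩ D, Set.inter_subset_right, ⟨b, hbC, hb⟩, hcl, hex, ?_⟩
  refine nex_countable ?_ (tr_tr le_rfl)
    ((Cardinal.le_aleph0_iff_set_countable.1 hcard).mono Set.inter_subset_left) hex hN
  intro d
  by_cases hd : d ∈ C ∩ D
  · rw [tr_closed hcl hd, ← hm d]
    simp only [Finsupp.linearCombination_apply]
    refine Finset.sum_congr rfl fun e he => congrArg (_ • ·) (tr_closed hcl ?_)
    by_contra h'
    exact Finsupp.mem_support_iff.1 he (hcl d hd e h')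
  · rw [show tr m (C ∩ D) d = 0 from if_neg hd, map_zero]

section Transport
variable {S : Type u} {j : S → B} {m' : S → S →₀ R}
variable {E : Type u} [AddCommGroup E] [Module Rᵐᵒᵖ E]

lemma vE_mapDomain (hm : ∀ s, (m' s).mapDomain j = m (j s)) (hj : Function.Injective j) (y : S →₀ E) :
    (vE m' y).mapDomain j = vE m (y.mapDomain j) := by
  induction y using Finsupp.induction_linear with
  | zero => simp
  | add x y hx hy => rw [map_add, Finsupp.mapDomain_add, hx, hy, Finsupp.mapDomain_add, map_add]
  | single s e =>
    rw [Finsupp.mapDomain_single]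
    have h1 : ∀ {B : Type u} (m : B → B →₀ R) (b : B), vE m (Finsupp.single b e) =
        (m b).mapRange (fun r => MulOpposite.op r • e) (by simp) := by
      intro B m b; ext c; simp [vE_single]
    rw [h1, h1, ← hm]
    ext c
    by_cases hc : c ∈ Set.range j
    · obtain ⟨t, rfl⟩ := hc
      rw [Finsupp.mapDomain_apply hj, Finsupp.mapRange_apply, Finsupp.mapRange_apply,
        Finsupp.mapDomain_apply hj]
    · rw [Finsupp.mapDomain_of_notMem_range _ _ hc, Finsupp.mapRange_apply,
        Finsupp.mapDomain_of_notMem_range _ _ hc]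
      simp

lemma exists_mapDomain {X : Type u} [AddCommMonoid X] (hj : Function.Injective j) {y : B →₀ X}
    (hy : Off (Set.range j) y) : ∃ x : S →₀ X, x.mapDomain j = y :=
  ⟨y.comapDomain j hj.injOn, Finsupp.mapDomain_comapDomain j hj y fun b hb => by
    by_contra h; exact Finsupp.mem_support_iff.1 hb (hy b h)⟩

lemma Ex.transport (hm : ∀ s, (m' s).mapDomain j = m (j s)) (hj : Function.Injective j)
    (htr : tr m (Set.range j) = m) (h : Ex m E (Set.range j)) : Ex m' E Set.univ := by
  intro y _ h0
  obtain ⟨x, hx⟩ := h (y.mapDomain j) (fun b hb => Finsupp.mapDomain_of_notMem_range _ _ hb)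
    (by rw [← vE_mapDomain hm hj, h0, Finsupp.mapDomain_zero])
  obtain ⟨x', hx'⟩ := exists_mapDomain hj (off_filter (Set.range j) x)
  refine ⟨x', Finsupp.mapDomain_injective hj ?_⟩
  rw [vE_mapDomain hm hj, hx', ← hx, ← htr, vE_tr, vE_tr, (off_filter _ x).cut]

lemma Nex.transport (hm : ∀ s, (m' s).mapDomain j = m (j s)) (hj : Function.Injective j)
    (htr : tr m (Set.range j) = m) (h : Nex m' N Set.univ) : Nex m N (Set.range j) := by
  intro f hf h0
  have hd : ∀ (f : B → N) s, dst m' (f ∘ j) s = dst m f (j s) := by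
    intro f s
    rw [dst, dst, ← hm, Finsupp.linearCombination_mapDomain]
  obtain ⟨g, hg⟩ := h (f ∘ j) (fun b hb => absurd trivial hb) (by
    funext s; rw [hd, h0]; rfl)
  refine ⟨Function.extend j g 0, funext fun b => ?_⟩
  by_cases hb : b ∈ Set.range j
  · obtain ⟨s, rfl⟩ := hb
    rw [← hd, Function.extend_comp hj, hg]; rfl
  · rw [hf b hb, ← htr, dst_tr, if_neg hb]

lemma Sq.transport (hm : ∀ s, (m' s).mapDomain j = m (j s)) (hj : Function.Injective j)
    (h : Sq m) : Sq m' := by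
  intro s
  rw [← vE_ring]
  apply Finsupp.mapDomain_injective hj
  rw [vE_mapDomain hm hj, hm, vE_ring, h, Finsupp.mapDomain_zero]

end Transport

variable (R) in
/-- The index cardinal. -/
noncomputable def kap : Cardinal.{u} := max Cardinal.aleph0 (Cardinal.mk R)

variable (R) in
/-- Small systems. -/
def GSys : Type u := {s : Σ S : Set (kap R).out, (S → S →₀ R) // Sq s.2 ∧
  (∀ E ∈ InjR R, Ex s.2 E Set.univ) ∧ Ex s.2 R Set.univ}

theorem nex_of_small (hN : ∀ s : GSys R, Nex s.1.2 N Set.univ) (hm : Sq m)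
    (h : ∀ E ∈ InjR R, Ex m E Set.univ) (hR : Ex m R Set.univ) : Nex m N Set.univ := by
  have hmem : ModuleCat.of Rᵐᵒᵖ R ∈ InjR R ∪ {ModuleCat.of Rᵐᵒᵖ R} := Or.inr rfl
  refine zorn_nex (InjR R ∪ {ModuleCat.of Rᵐᵒᵖ R}) hm ?_ fun m D hm htr h ⟨b, hb⟩ => ?_
  · rintro E (hE | rfl)
    · exact h E hE
    · exact hR
  obtain ⟨c, hc, hg⟩ := good_of_closed htr fun E hE => h E (Or.inl hE)
  have hR : Ex m R D := h _ hmem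
  have hR' : ∀ y : B →₀ R, ∃ x : B →₀ R, Off D x ∧ (Off D y → vE m y = 0 → vE m x = y) := by
    intro y
    by_cases hy : Off D y ∧ vE m y = 0
    · obtain ⟨x, hx⟩ := hR y hy.1 hy.2
      refine ⟨cut D x, off_filter _ _, fun _ _ => ?_⟩
      rw [← hx, ← htr, vE_tr, vE_tr, (off_filter D x).cut]
    · exact ⟨0, fun _ _ => rfl, fun h1 h2 => absurd ⟨h1, h2⟩ hy⟩
  choose X hXD hX using hR'
  let ya : ∀ K : Finset B, (K → R) → (B →₀ R) := fun K a =>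
    Finsupp.onFinset K (fun b => if h : b ∈ K then a ⟨b, h⟩ else 0) (fun b hb => by
      by_contra h; exact hb (dif_neg h))
  let c' : Finset B → Set B := fun K => c K ∪ ⋃ a : K → R, ((X (ya K a)).support : Set B)
  have hκ : Cardinal.aleph0 ≤ kap R := le_max_left _ _
  obtain ⟨C, hbC, hC, hcard⟩ := closure_small (kap R) hκ c' (fun K => by
    refine (Cardinal.mk_union_le _ _).trans (Cardinal.add_le_of_le hκ
      ((Cardinal.le_aleph0_iff_set_countable.2 (hc K).1).trans hκ) ?_)
    refine (Cardinal.mk_iUnion_le _).trans (Cardinal.mul_le_of_le hκ ?_ (ciSup_le' fun a => ?_))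
    · have h1 : Cardinal.mk (K → R) = Cardinal.mk R ^ (K.card) := by simp
      rw [h1]
      exact (Cardinal.power_le_power_right (le_max_right _ _)).trans (Cardinal.power_nat_le hκ)
    · exact (Cardinal.le_aleph0_iff_set_countable.2 (Finset.countable_toSet _)).trans hκ) b
  obtain ⟨hcl, hex⟩ := hg (C ∩ D) Set.inter_subset_right fun K hK => Set.subset_inter
    (Set.subset_union_left.trans (hC K fun x hx => (hK hx).1)) (hc K).2
  have hexR : Ex (tr m (C ∩ D)) R (C ∩ D) := by
    rw [Ex.tr_iff hcl]
    intro y hy h0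
    have hyC : (y.support : Set B) ⊆ C := fun b hb => by
      by_contra h'; exact Finsupp.mem_support_iff.1 hb (hy b fun h => h' h.1)
    have hyy : ya y.support (fun b => y b) = y := by
      ext b
      change (if h : b ∈ y.support then y b else 0) = y b
      split_ifs with h
      · rfl
      · exact (Finsupp.notMem_support_iff.1 h).symm
    refine ⟨X y, fun b hb => ?_, hX y (fun b hb => hy b fun h => hb h.2) h0⟩
    by_contra hne
    have hbD : b ∈ D := by by_contra h; exact hne (hXD y b h)
    refine hb ⟨hC _ hyC (Or.inr (Set.mem_iUnion.2 ⟨fun b => y b, ?_⟩)), hbD⟩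
    rw [hyy]
    exact Finsupp.mem_support_iff.2 hne
  refine ⟨C ∩ D, Set.inter_subset_right, ⟨b, hbC, hb⟩, hcl, ?_, ?_⟩
  · rintro E (hE | rfl)
    · exact hex E hE
    · exact hexR
  · have hcard' : Cardinal.mk ↥(C ∩ D) ≤ Cardinal.mk (kap R).out := by
      rw [Cardinal.mk_out]
      exact (Cardinal.mk_le_mk_of_subset Set.inter_subset_left).trans hcard
    obtain ⟨e⟩ := hcard'
    let ee := Equiv.ofInjective e e.injective
    let j : Set.range e → B := fun s => (ee.symm s : B)
    have hj : Function.Injective j := Subtype.val_injective.comp ee.symm.injective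
    have hr : Set.range j = C ∩ D := by
      rw [show j = Subtype.val ∘ ee.symm from rfl, Set.range_comp, ee.symm.range_eq_univ,
        Set.image_univ, Subtype.range_coe]
    have hsq : Sq (tr m (C ∩ D)) := by
      intro d
      by_cases hd : d ∈ C ∩ D
      · rw [tr_closed hcl hd, ← hm d]
        simp only [Finsupp.linearCombination_apply]
        refine Finset.sum_congr rfl fun e he => congrArg (_ • ·) (tr_closed hcl ?_)
        by_contra h'
        exact Finsupp.mem_support_iff.1 he (hcl d hd e h')
      · rw [show tr m (C ∩ D) d = 0 from if_neg hd, map_zero]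
    choose m' hm' using fun s : Set.range e => exists_mapDomain hj (y := tr m (C ∩ D) (j s))
      (by rw [hr]; intro b hb; rw [tr_apply, if_neg fun h => hb h.2])
    have htr' : tr (tr m (C ∩ D)) (Set.range j) = tr m (C ∩ D) := by rw [hr]; exact tr_tr le_rfl
    generalize tr m (C ∩ D) = m0 at *
    rw [← hr] at hex hexR ⊢
    exact Nex.transport hm' hj htr' (hN ⟨⟨Set.range e, m'⟩, hsq.transport hm' hj,
      fun E hE => (hex E hE).transport hm' hj htr', hexR.transport hm' hj htr'⟩)

end Gen
end QuiverGF

namespace QuiverGF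

section HExs
open scoped Classical
variable {R : Type u} [Ring R] {B : Type u} {m : B → B →₀ R}
variable {N : Type u} [AddCommGroup N] [Module R N]

/-- Hom-exactness of an endomorphism. -/
def HEx {F : Type u} [AddCommGroup F] [Module R F] (D : F →ₗ[R] F)
    (N : Type u) [AddCommGroup N] [Module R N] : Prop :=
  ∀ f : F →ₗ[R] N, (∀ x, f (D x) = 0) → ∃ g : F →ₗ[R] N, ∀ x, g (D x) = f x

/-- Exactness of an endomorphism. -/
def DEx {F : Type u} [AddCommGroup F] [Module R F] (D : F →ₗ[R] F) : Prop :=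
  (∀ x, D (D x) = 0) ∧ ∀ x, D x = 0 → ∃ y, D y = x

lemma lc_single (f : B → N) (b : B) : Finsupp.linearCombination R f (Finsupp.single b 1) = f b := by
  simp

lemma hom_eq_lc (f : (B →₀ R) →ₗ[R] N) :
    f = Finsupp.linearCombination R (fun b => f (Finsupp.single b 1)) := by
  ext b; simp

lemma nex_iff : Nex m N Set.univ ↔ HEx (Finsupp.linearCombination R m) N := by
  have key : ∀ (f : B → N) x, Finsupp.linearCombination R f (Finsupp.linearCombination R m x) =
      Finsupp.linearCombination R (dst m f) x := by
    intro f x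
    have : (Finsupp.linearCombination R f).comp (Finsupp.linearCombination R m) =
      Finsupp.linearCombination R (dst m f) := by ext b; simp [dst]
    exact LinearMap.congr_fun this x
  constructor
  · intro h f hf
    obtain ⟨g, hg⟩ := h (fun b => f (Finsupp.single b 1)) (fun b hb => absurd trivial hb) (by
      funext b
      have := hf (Finsupp.single b 1)
      rw [hom_eq_lc f, key] at this
      simpa using this)
    refine ⟨Finsupp.linearCombination R g, fun x => ?_⟩
    rw [key, hg, ← hom_eq_lc f]
  · intro h f _ hf
    obtain ⟨g, hg⟩ := h (Finsupp.linearCombination R f) (fun x => by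
      rw [key, hf]; simp)
    refine ⟨fun b => g (Finsupp.single b 1), funext fun b => ?_⟩
    have := hg (Finsupp.single b 1)
    rw [hom_eq_lc g, key] at this
    simpa using this

lemma sq_ex_iff : (Sq m ∧ Ex m R Set.univ) ↔ DEx (Finsupp.linearCombination R m) := by
  constructor
  · rintro ⟨h, h'⟩
    refine ⟨fun x => ?_, fun x hx => ?_⟩
    · have : (Finsupp.linearCombination R m).comp (Finsupp.linearCombination R m) = 0 := by
        ext1 b; ext1; simpa using h b
      exact LinearMap.congr_fun this x
    · obtain ⟨y, hy⟩ := h' x (fun b hb => absurd trivial hb) (by rw [vE_ring, hx])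
      exact ⟨y, by rw [← vE_ring, hy]⟩
  · rintro ⟨h, h'⟩
    refine ⟨fun b => by simpa using h (Finsupp.single b 1), fun x _ hx => ?_⟩
    obtain ⟨y, hy⟩ := h' x (by rw [← vE_ring, hx])
    exact ⟨y, by rw [vE_ring, hy]⟩

lemma ex_iff_nex {E : Type u} [AddCommGroup E] [Module Rᵐᵒᵖ E] :
    Ex m E Set.univ ↔ Nex m (E →+ QZ.{u}) Set.univ := by
  let ev : E →+ (E →+ QZ.{u}) →+ QZ.{u} :=
    AddMonoidHom.flip (AddMonoidHom.id (E →+ QZ.{u}))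
  have hev : ∀ e (r : R) n, ev (MulOpposite.op r • e) n = ev e (r • n) := fun _ _ _ => rfl
  have hlift : ∀ (f : B → (E →+ QZ.{u})) (y : B →₀ E),
      y.sum (fun b e => ev e (f b)) = Finsupp.liftAddHom f y := fun _ _ => rfl
  have hadj := pair_adj m ev hev
  simp only [hlift] at hadj
  constructor
  · intro h f _ hf
    obtain ⟨ξ, hξ⟩ := char_factor (vE m) (Finsupp.liftAddHom f : (B →₀ E) →+ QZ.{u}) (fun y hy => by
      obtain ⟨x, rfl⟩ := h y (fun b hb => absurd trivial hb) hy
      rw [hadj, hf]; simp)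
    refine ⟨fun b => ξ.comp (Finsupp.singleAddHom b), ?_⟩
    set g := fun b => ξ.comp (Finsupp.singleAddHom (M := E) b) with hg
    have hgξ : Finsupp.liftAddHom g = ξ := by ext; simp [g]
    apply (Finsupp.liftAddHom (α := B) (M := E) (N := QZ.{u})).injective
    ext1 b
    ext1 e
    rw [AddMonoidHom.comp_apply, AddMonoidHom.comp_apply, ← hadj, hgξ, hξ]
  · intro h y _ hy
    by_contra hcon
    obtain ⟨χ, h1, h2⟩ := char_sep_mod (vE m).range (a := y) (by
      rintro ⟨x, hx⟩; exact hcon ⟨x, hx⟩)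
    set f := fun b => χ.comp (Finsupp.singleAddHom (M := E) b) with hf
    have hfχ : Finsupp.liftAddHom f = χ := by ext; simp [f]
    obtain ⟨g, hg⟩ := h f (fun b hb => absurd trivial hb) (by
      apply (Finsupp.liftAddHom (α := B) (M := E) (N := QZ.{u})).injective
      ext1 b
      ext1 e
      rw [AddMonoidHom.comp_apply, AddMonoidHom.comp_apply, ← hadj, hfχ, h2 _ ⟨_, rfl⟩]
      simp)
    apply h1
    rw [← hfχ, ← hg, ← hadj, hy, map_zero]

/-! Free covers. -/
variable {P : Type u} [AddCommGroup P] [Module R P] {F : Type u} [AddCommGroup F] [Module R F]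

/-- Enlarged differential. -/
noncomputable def big (D : P →ₗ[R] P) (i : P →ₗ[R] F) (s : F →ₗ[R] P) : F × F →ₗ[R] F × F :=
  LinearMap.prod (i ∘ₗ D ∘ₗ s ∘ₗ LinearMap.fst R F F)
    (i ∘ₗ D ∘ₗ s ∘ₗ LinearMap.snd R F F + (LinearMap.id - i ∘ₗ s) ∘ₗ LinearMap.fst R F F)

lemma big_apply (D : P →ₗ[R] P) (i : P →ₗ[R] F) (s : F →ₗ[R] P) (a b : F) :
    big D i s (a, b) = (i (D (s a)), i (D (s b)) + (a - i (s a))) := rfl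

lemma big_DEx {D : P →ₗ[R] P} {i : P →ₗ[R] F} {s : F →ₗ[R] P} (h : ∀ p, s (i p) = p) (hD : DEx D) :
    DEx (big D i s) := by
  refine ⟨fun ⟨a, b⟩ => ?_, fun ⟨a, b⟩ hab => ?_⟩
  · simp [big_apply, h, hD.1]
  · rw [big_apply, Prod.mk_eq_zero] at hab
    have h1 : D (s a) = 0 := by rw [← h (D (s a)), hab.1, map_zero]
    have h2 : D (s b) = 0 := by
      have := congrArg s hab.2
      simpa [h] using this
    obtain ⟨p, hp⟩ := hD.2 _ h1
    obtain ⟨p', hp'⟩ := hD.2 _ h2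
    have h3 : a = i (s a) := by
      have := hab.2
      rwa [h2, map_zero, zero_add, sub_eq_zero] at this
    refine ⟨(i p + (b - i (s b)), i p'), ?_⟩
    rw [big_apply]
    ext1
    · simp [h, hp, ← h3]
    · simp [h, hp']

lemma big_HEx {D : P →ₗ[R] P} {i : P →ₗ[R] F} {s : F →ₗ[R] P} (h : ∀ p, s (i p) = p) :
    HEx (big D i s) N ↔ HEx D N := by
  constructor
  · intro H f hf
    obtain ⟨g, hg⟩ := H (f ∘ₗ s ∘ₗ LinearMap.fst R F F) (fun ⟨a, b⟩ => by simp [big_apply, h, hf])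
    refine ⟨g ∘ₗ LinearMap.inl R F F ∘ₗ i, fun p => ?_⟩
    have := hg (i p, 0)
    simpa [big_apply, h] using this
  · intro H f hf
    let α := f ∘ₗ LinearMap.inl R F F
    let β := f ∘ₗ LinearMap.inr R F F
    have hαβ : ∀ a b, f (a, b) = α a + β b := fun a b => by
      simp [α, β, ← map_add]
    have h0 : ∀ a b, α (i (D (s a))) + β (i (D (s b)) + (a - i (s a))) = 0 := fun a b => by
      rw [← hαβ, ← big_apply, hf]
    have h1 : ∀ p, β (i (D p)) = 0 := fun p => by simpa [h] using h0 0 (i p)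
    have h2 : ∀ p, α (i (D p)) = 0 := fun p => by simpa [h] using h0 (i p) 0
    have h3 : ∀ a, β a = β (i (s a)) := fun a => by
      have := h0 a 0
      rw [h2] at this
      simpa [sub_eq_zero] using this
    obtain ⟨g, hg⟩ := H (α ∘ₗ i) h2
    obtain ⟨k, hk⟩ := H (β ∘ₗ i) h1
    refine ⟨(g ∘ₗ s) ∘ₗ LinearMap.fst R F F +
      (k ∘ₗ s + α ∘ₗ (LinearMap.id - i ∘ₗ s)) ∘ₗ LinearMap.snd R F F, fun ⟨a, b⟩ => ?_⟩
    rw [big_apply, hαβ, h3 b]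
    simp only [LinearMap.add_apply, LinearMap.comp_apply, LinearMap.fst_apply, LinearMap.snd_apply,
      LinearMap.sub_apply, LinearMap.id_apply, map_add, map_sub, h, hg, hk]
    abel

variable {F' : Type u} [AddCommGroup F'] [Module R F']

/-- Conjugation. -/
def cj (e : F ≃ₗ[R] F') (D : F →ₗ[R] F) : F' →ₗ[R] F' := e.toLinearMap ∘ₗ D ∘ₗ e.symm.toLinearMap

lemma cj_apply (e : F ≃ₗ[R] F') (D : F →ₗ[R] F) (x : F') : cj e D x = e (D (e.symm x)) := rfl

lemma conj_DEx (e : F ≃ₗ[R] F') {D : F →ₗ[R] F} (h : DEx D) : DEx (cj e D) := by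
  refine ⟨fun x => by simp [cj_apply, h.1], fun x hx => ?_⟩
  obtain ⟨y, hy⟩ := h.2 (e.symm x) (by simpa [cj_apply] using hx)
  exact ⟨e y, by simp [cj_apply, hy]⟩

lemma conj_HEx' (e : F ≃ₗ[R] F') {D : F →ₗ[R] F} (h : HEx D N) : HEx (cj e D) N := by
  intro f hf
  obtain ⟨g, hg⟩ := h (f ∘ₗ e.toLinearMap) (fun x => by
    simpa [cj_apply] using hf (e x))
  exact ⟨g ∘ₗ e.symm.toLinearMap, fun x => by
    simpa [cj_apply] using hg (e.symm x)⟩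

lemma conj_HEx (e : F ≃ₗ[R] F') {D : F →ₗ[R] F} : HEx (cj e D) N ↔ HEx D N := by
  refine ⟨fun h => ?_, conj_HEx' e⟩
  have := conj_HEx' e.symm h
  convert this using 1
  ext x; simp [cj_apply]

lemma exists_free [hP : Module.Projective R P] {D : P →ₗ[R] P} (hD : DEx D) :
    ∃ m : (P ⊕ P) → (P ⊕ P) →₀ R, DEx (Finsupp.linearCombination R m) ∧
      ∀ (N : Type u) [AddCommGroup N] [Module R N], HEx (Finsupp.linearCombination R m) N ↔ HEx D N := by
  obtain ⟨i, hi⟩ := hP.out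
  let e := (Finsupp.sumFinsuppLEquivProdFinsupp (α := P) (β := P) (M := R) R).symm
  refine ⟨fun b => cj e (big D i (Finsupp.linearCombination R id)) (Finsupp.single b 1), ?_⟩
  rw [← hom_eq_lc]
  exact ⟨conj_DEx e (big_DEx hi hD), fun N _ _ => (conj_HEx e).trans (big_HEx hi)⟩

end HExs
end QuiverGF

namespace QuiverGF

section Sums
open scoped Classical
variable {R : Type u} [Ring R]
variable {N : Type u} [AddCommGroup N] [Module R N]
variable {P : ℤ → Type u} [∀ n, AddCommGroup (P n)] [∀ n, Module R (P n)]
variable (d : ∀ n, P n →ₗ[R] P (n + 1))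

/-- Total differential. -/
noncomputable def tot : (⨁ n, P n) →ₗ[R] (⨁ n, P n) :=
  DirectSum.toModule R ℤ _ fun n => DirectSum.lof R ℤ P (n + 1) ∘ₗ d n

lemma tot_lof (n : ℤ) (x : P n) : tot d (DirectSum.lof R ℤ P n x) =
    DirectSum.lof R ℤ P (n + 1) (d n x) := by
  simp [tot]

lemma tot_apply (x : ⨁ n, P n) (n : ℤ) : tot d x (n + 1) = d n (x n) := by
  have : (DirectSum.component R ℤ P (n + 1)) ∘ₗ tot d = d n ∘ₗ DirectSum.component R ℤ P n := by
    refine DirectSum.linearMap_ext _ fun k => LinearMap.ext fun y => ?_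
    simp only [LinearMap.comp_apply, tot_lof]
    by_cases h : k = n
    · subst h; rw [DirectSum.component.lof_self, DirectSum.component.lof_self]
    · rw [DirectSum.component.of, DirectSum.component.of, dif_neg, dif_neg h, map_zero]
      omega
  exact LinearMap.congr_fun this x

lemma tot_DEx (h : ∀ n, Function.Exact (d n) (d (n + 1))) : DEx (tot d) := by
  refine ⟨fun x => ?_, fun x hx => ?_⟩
  · have : tot d ∘ₗ tot d = 0 := by
      refine DirectSum.linearMap_ext _ fun k => LinearMap.ext fun y => ?_
      simp [tot_lof, (h k).apply_apply_eq_zero]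
    exact LinearMap.congr_fun this x
  · have hk : ∀ k, DirectSum.lof R ℤ P k (x k) ∈ LinearMap.range (tot d) := by
      intro k
      obtain ⟨n, rfl⟩ : ∃ n, k = n + 1 := ⟨k - 1, by ring⟩
      obtain ⟨y, hy⟩ := (h n (x (n + 1))).1 (by rw [← tot_apply, hx]; rfl)
      exact ⟨DirectSum.lof R ℤ P n y, by rw [tot_lof, hy]⟩
    have : x ∈ LinearMap.range (tot d) := by
      rw [← DirectSum.sum_support_of x]
      exact Submodule.sum_mem _ fun k _ => hk k
    exact this

lemma tot_HEx : HEx (tot d) N ↔ ∀ n (f : P (n + 1) →ₗ[R] N), (∀ x, f (d n x) = 0) →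
    ∃ g : P (n + 1 + 1) →ₗ[R] N, ∀ x, g (d (n + 1) x) = f x := by
  constructor
  · intro H n f hf
    obtain ⟨g, hg⟩ := H (f ∘ₗ DirectSum.component R ℤ P (n + 1)) (fun x => by
      have := tot_apply d x n
      simp only [LinearMap.comp_apply, DirectSum.component]
      erw [this, hf])
    refine ⟨g ∘ₗ DirectSum.lof R ℤ P _, fun x => ?_⟩
    have := hg (DirectSum.lof R ℤ P _ x)
    rw [tot_lof, LinearMap.comp_apply, DirectSum.component.lof_self] at this
    exact this
  · intro H f hf
    have h1 : ∀ n, ∃ g : P (n + 1) →ₗ[R] N, ∀ x, g (d n x) = f (DirectSum.lof R ℤ P n x) := by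
      intro k
      obtain ⟨n, rfl⟩ : ∃ n, k = n + 1 := ⟨k - 1, by ring⟩
      exact H n (f ∘ₗ DirectSum.lof R ℤ P (n + 1)) fun x => by
        rw [LinearMap.comp_apply, ← tot_lof, hf]
    have h2 : ∀ k, ∃ g : P k →ₗ[R] N, ∀ n, n + 1 = k → ∀ x y,
        DirectSum.lof R ℤ P k y = DirectSum.lof R ℤ P (n + 1) (d n x) →
          g y = f (DirectSum.lof R ℤ P n x) := by
      intro k
      obtain ⟨n, rfl⟩ : ∃ n, k = n + 1 := ⟨k - 1, by ring⟩
      obtain ⟨g, hg⟩ := h1 n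
      refine ⟨g, fun n' hn' x y hxy => ?_⟩
      obtain rfl : n' = n := by omega
      have := congrArg (DirectSum.component R ℤ P (n' + 1)) hxy
      rw [DirectSum.component.lof_self, DirectSum.component.lof_self] at this
      rw [this, hg]
    choose g hg using h2
    refine ⟨DirectSum.toModule R ℤ N g, fun x => ?_⟩
    have : DirectSum.toModule R ℤ N g ∘ₗ tot d = f := by
      refine DirectSum.linearMap_ext _ fun k => LinearMap.ext fun y => ?_
      simp only [LinearMap.comp_apply, tot_lof, DirectSum.toModule_lof]
      exact hg _ k rfl y _ rfl
    exact LinearMap.congr_fun this x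

theorem pgf_transfer {X : ModuleCat.{u} R} (hX : X ∈ AbsPGF (TR R)) (N : ModuleCat.{u} R)
    (hN : ∀ (B : Type u) (m : B → B →₀ R), Sq m → (∀ E ∈ InjR R, Ex m E Set.univ) →
      Ex m R Set.univ → Nex m N Set.univ) : ext1Zero X N := by
  obtain ⟨P, d, hP, hd, ⟨e⟩, h⟩ := absPGF_exists_asc hX
  have hd' : ∀ n, Function.Exact (d n).hom (d (n + 1)).hom := fun n =>
      (ShortComplex.ShortExact.moduleCat_exact_iff_function_exact _).1 (hd n).2
  have hD := tot_DEx (fun n => (d n).hom) hd'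
  have : ∀ n, Module.Projective R (P n) := fun n => (IsProjective.iff_projective (P n)).2 (hP n)
  have hproj : Module.Projective R (⨁ n, P n) := inferInstance
  obtain ⟨m, hm, hmN⟩ := exists_free hD
  have hm' := sq_ex_iff.2 hm
  have hH : ∀ N' : ModuleCat.{u} R, HEx (tot fun n => (d n).hom) N' ↔
      ∀ (n : ℤ) (β : P (n + 1) ⟶ N'), d n ≫ β = 0 → ∃ γ : P (n + 1 + 1) ⟶ N', d (n + 1) ≫ γ = β := by
    intro N'
    rw [tot_HEx]
    constructor
    · intro H n β hβ
      obtain ⟨g, hg⟩ := H n β.hom fun x => LinearMap.congr_fun (congrArg ModuleCat.Hom.hom hβ) x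
      exact ⟨ModuleCat.ofHom g, ModuleCat.hom_ext (LinearMap.ext hg)⟩
    · intro H n f hf
      obtain ⟨g, hg⟩ := H n (ModuleCat.ofHom f) (ModuleCat.hom_ext (LinearMap.ext hf))
      exact ⟨g.hom, fun x => LinearMap.congr_fun (congrArg ModuleCat.Hom.hom hg) x⟩
  have hfin := hN _ m hm'.1 (fun E hE => ex_iff_nex.2 (nex_iff.2 ((hmN _).2
    ((hH (ModuleCat.of R (E →+ QZ.{u}))).2 (h _ ⟨E, hE, rfl⟩))))) hm'.2
  have hfin' := (hH N).1 ((hmN N).1 (nex_iff.1 hfin))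
  refine absPGF_ext (T := TR R ∪ {N}) (absPGF_iso e (absPGF_of_asc P d hP hd ?_ 0)) (Or.inr rfl)
  rintro N' (hN' | rfl)
  · exact h N' hN'
  · exact hfin'

lemma dual_inj_of_proj (N : ModuleCat.{u} R) [hN : Projective N] :
    Injective (ModuleCat.of Rᵐᵒᵖ (N →+ QZ.{u})) := by
  have hp := (IsProjective.iff_projective N).2 hN
  obtain ⟨i, hi⟩ := hp.out
  refine ⟨fun {A A'} φ f hf => ?_⟩
  have hinj := (ModuleCat.mono_iff_injective f).1 hf
  have h1 : ∀ j : N, ∃ ξ : A' →+ QZ.{u}, ∀ a, ξ (f a) = (φ a : N →+ QZ.{u}) j := fun j => by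
    obtain ⟨ξ, hξ⟩ := char_extend f.hom.toAddMonoidHom hinj
      ((AddMonoidHom.eval j).comp φ.hom.toAddMonoidHom)
    exact ⟨ξ, fun a => hξ a⟩
  choose ξ hξ using h1
  let ψ : A' →ₗ[Rᵐᵒᵖ] (N →+ QZ.{u}) :=
    { toFun := fun a => 
        { toFun := fun n => (i n).sum fun j r => ξ j (MulOpposite.op r • a)
          map_zero' := by simp
          map_add' := fun n n' => by
            rw [map_add, Finsupp.sum_add_index']
            · simp
            · intros; simp [add_smul] }
      map_add' := fun a a' => by
        ext1 n
        simp [Finsupp.sum_add]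
      map_smul' := fun r a => by
        ext1 n
        simp only [AddMonoidHom.coe_mk, ZeroHom.coe_mk, RingHom.id_apply, op_smul_addHom_apply,
          map_smul]
        rw [Finsupp.sum_smul_index (by simp)]
        simp [mul_smul] }
  refine ⟨ModuleCat.ofHom ψ, ModuleCat.hom_ext (LinearMap.ext fun a => AddMonoidHom.ext fun n => ?_)⟩
  change (i n).sum (fun j r => ξ j (MulOpposite.op r • f a)) = (φ a : N →+ QZ.{u}) n
  conv_rhs => rw [← hi n, Finsupp.linearCombination_apply, Finsupp.sum, map_sum]
  refine Finset.sum_congr rfl fun j _ => ?_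
  dsimp only
  have h3 : MulOpposite.op (i n j) • f a = f (MulOpposite.op (i n j) • a) := (map_smul f.hom _ _).symm
  have h4 : φ (MulOpposite.op (i n j) • a) = MulOpposite.op (i n j) • φ a := map_smul φ.hom _ _
  rw [h3, hξ, h4]
  rfl

theorem proj_perp (N : ModuleCat.{u} R) [hN : Projective N] : N ∈ rightPerp (AbsPGF (TR R)) :=
  fun _ hX => pgf_transfer hX N fun _ _ hm h _ => nex_flat hm h (dual_inj_of_proj N)

/-- The free module of a small system. -/
noncomputable abbrev gF (s : GSys R) : ModuleCat.{u} R := ModuleCat.of R (s.1.1 →₀ R)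

/-- The differential of a small system. -/
noncomputable def gd (s : GSys R) : gF s ⟶ gF s := ModuleCat.ofHom (Finsupp.linearCombination R s.1.2)

/-- The cycles of a small system. -/
noncomputable abbrev gZ (s : GSys R) : ModuleCat.{u} R := kernel (gd s)

/-- The inclusion of the cycles. -/
noncomputable def gi (s : GSys R) : gZ s ⟶ gF s := kernel.ι (gd s)

instance (s : GSys R) : Mono (gi s) := by unfold gi; infer_instance

instance (s : GSys R) : Projective (gF s) :=
  (IsProjective.iff_projective _).1 (inferInstanceAs (Module.Projective R (s.1.1 →₀ R)))

lemma gd_exact (s : GSys R) : ∃ w : gd s ≫ gd s = 0, (ShortComplex.mk (gd s) (gd s) w).Exact := by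
  have h := sq_ex_iff.1 ⟨s.2.1, s.2.2.2⟩
  refine ⟨ModuleCat.hom_ext (LinearMap.ext h.1),
    (ShortComplex.ShortExact.moduleCat_exact_iff_function_exact _).2 fun x => ⟨fun hx => h.2 x hx, ?_⟩⟩
  rintro ⟨y, rfl⟩
  exact h.1 y

lemma gZ_pgf (s : GSys R) : gZ s ∈ AbsPGF (TR R) := by
  refine absPGF_of_asc (fun _ => gF s) (fun _ => gd s) (fun _ => inferInstance)
    (fun _ => gd_exact s) ?_ 0
  rintro _ ⟨E, hE, rfl⟩ n β hβ
  obtain ⟨g, hg⟩ := nex_iff.1 (ex_iff_nex.1 (s.2.2.1 E hE)) β.hom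
    fun x => LinearMap.congr_fun (congrArg ModuleCat.Hom.hom hβ) x
  exact ⟨ModuleCat.ofHom g, ModuleCat.hom_ext (LinearMap.ext hg)⟩

lemma gi_ses (s : GSys R) : ∃ p : gF s ⟶ gZ s, SES (gi s) p ∧ p ≫ gi s = gd s := by
  obtain ⟨w, h⟩ := gd_exact s
  refine ⟨kernel.lift (gd s) (gd s) w, ?_, kernel.lift_ι _ _ _⟩
  have hepi : Epi (kernel.lift (gd s) (gd s) w) := h.epi_kernelLift
  refine SES.of_ker inferInstance hepi ?_ fun T k hk => ?_
  · rw [← cancel_mono (kernel.ι (gd s))]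
    simp [gi]
  · refine ⟨kernel.lift (gd s) k ?_, kernel.lift_ι _ _ _⟩
    rw [← kernel.lift_ι (gd s) (gd s) w, ← Category.assoc, hk, zero_comp]

theorem perp_of_ext (N : ModuleCat.{u} R)
    (h : ∀ (s : GSys R) (f : gZ s ⟶ N), ∃ g : gF s ⟶ N, gi s ≫ g = f) :
    N ∈ rightPerp (AbsPGF (TR R)) := by
  intro X hX
  refine pgf_transfer hX N fun B m hm hE hR => nex_of_small (fun s => nex_iff.2 fun f hf => ?_) hm hE hR
  obtain ⟨p, hp, hpi⟩ := gi_ses s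
  obtain ⟨f', rfl⟩ : ∃ f' : gF s ⟶ N, f'.hom = f := ⟨ModuleCat.ofHom f, rfl⟩
  have hf' : gi s ≫ f' = 0 := by
    have := hp.epi
    rw [← cancel_epi p, ← Category.assoc, hpi, comp_zero]
    exact ModuleCat.hom_ext (LinearMap.ext hf)
  obtain ⟨a, ha⟩ := hp.desc _ hf'
  obtain ⟨g, hg⟩ := h s a
  refine ⟨g.hom, fun x => ?_⟩
  have : gd s ≫ g = f' := by rw [← hpi, Category.assoc, hg, ha]
  exact LinearMap.congr_fun (congrArg ModuleCat.Hom.hom this) x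

end Sums
end QuiverGF

namespace QuiverGF

section SOA
open MorphismProperty ZeroObject IsGrothendieckAbelian
variable {C : Type u} [Category.{v} C] [Abelian C] [IsGrothendieckAbelian.{w} C]
variable {K : Type w} {A B : K → C} (i : ∀ k, A k ⟶ B k) [hi : ∀ k, Mono (i k)]

lemma soa_inst : HasSmallObjectArgument.{w} (MorphismProperty.ofHoms i) := by
  obtain ⟨κ, hκ', hκ⟩ := HasCardinalLT.exists_regular_cardinal_forall.{w} (fun k => Subobject (A k))
  have : Fact κ.IsRegular := ⟨hκ'⟩
  have : Nonempty κ.ord.ToType := by simpa using hκ'.ne_zero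
  have := WellFoundedLT.toOrderBot κ.ord.ToType
  exact ⟨κ, inferInstance, inferInstance,
    { preservesColimit {A' B' X Y} j hj f hf := by
        let hf' : (monomorphisms C).TransfiniteCompositionOfShape κ.ord.ToType f :=
          { toTransfiniteCompositionOfShape := hf.toTransfiniteCompositionOfShape
            map_mem j hj := by
              have := (hf.attachCells j hj).pushouts_coproducts
              simp only [ofHoms_homFamily] at this
              refine (?_ : _ ≤ monomorphisms C) _ this
              simp only [pushouts_le_iff, coproducts_le_iff]
              rw [ofHoms_le_iff]
              exact hi }
        have (j j' : κ.ord.ToType) (φ : j ⟶ j') : Mono (hf'.F.map φ) := hf'.mem_map φ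
        obtain ⟨k⟩ := hj
        exact preservesColimit_coyoneda_obj_of_mono (Y := hf'.F) (κ := κ) (hκ k) }⟩

theorem soa_pre [∀ k, Projective (B k)] (W : Set C)
    (hW : ∀ Y, (∀ k (f : A k ⟶ Y), ∃ g : B k ⟶ Y, i k ≫ g = f) → Y ∈ W)
    (hW' : ∀ N ∈ W, ∀ k, ext1Zero (cokernel (i k)) N) (M : C) :
    ∃ (Y X : C) (f : M ⟶ Y) (g : Y ⟶ X), SES f g ∧ Y ∈ W ∧ X ∈ leftPerp W := by
  have := soa_inst i
  let I := MorphismProperty.ofHoms i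
  let fac : MapFactorizationData I.rlp.llp I.rlp (0 : M ⟶ 0) :=
    (functorialFactorizationData I.rlp.llp I.rlp).factorizationData _
  have hmono : Mono fac.i := by
    have h1 : I.rlp.llp ≤ (monomorphisms C).rlp.llp :=
      antitone_llp (antitone_rlp ((ofHoms_le_iff _ _).2 hi))
    rw [llp_rlp_monomorphisms (isSeparator_separator C)] at h1
    exact h1 _ fac.hi
  refine ⟨fac.Z, cokernel fac.i, fac.i, cokernel.π fac.i, SES.coker _, hW _ fun k f => ?_, ?_⟩
  · have hl := fac.hp (i k) (ofHoms.mk k)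
    have sq : CommSq f (i k) fac.p (0 : B k ⟶ 0) := ⟨(isZero_zero C).eq_of_tgt _ _⟩
    exact ⟨sq.lift, sq.fac_left⟩
  · intro N hN E j q w s
    have sq' : SES j q := ⟨w, s⟩
    have hq : I.rlp q := by
      rintro _ _ _ ⟨k⟩
      refine ⟨fun {t b} sq => ?_⟩
      have := sq'.epi
      let l := Projective.factorThru b q
      have hl : l ≫ q = b := Projective.factorThru_comp _ _
      obtain ⟨φ, hφ⟩ := sq'.lift (i k ≫ l - t) (by rw [Preadditive.sub_comp, Category.assoc, hl, ← sq.w, sub_self])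
      obtain ⟨ψ, hψ⟩ := (hW' N hN k).extend (SES.coker (i k)) φ
      exact ⟨⟨⟨l - ψ ≫ j, by rw [Preadditive.comp_sub, ← Category.assoc, hψ, hφ, sub_sub_cancel],
        by rw [Preadditive.sub_comp, Category.assoc, w, comp_zero, sub_zero, hl]⟩⟩⟩
    have hl := fac.hi q hq
    have sq : CommSq (0 : M ⟶ E) fac.i q (cokernel.π fac.i) := ⟨by simp⟩
    refine ⟨cokernel.desc fac.i sq.lift sq.fac_left, ?_⟩
    rw [← cancel_epi (cokernel.π fac.i)]
    simp

end SOA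

section Final
variable (V : Type u) [Quiver.{u} V] (R : Type u) [Ring R]

theorem rep_pre (M : RepL V R) : ∃ (Y X : RepL V R) (f : M ⟶ Y) (g : Y ⟶ X), SES f g ∧
    Y ∈ RepClass (rightPerp (AbsPGF (TR R))) ∧ X ∈ leftPerp (RepClass (rightPerp (AbsPGF (TR R)))) := by
  have hproj : ∀ k : V × GSys R, Projective ((fL (vtx k.1)).obj (gF k.2)) := fun k => fL_projective _ _
  refine soa_pre (K := V × GSys R) (fun k => (fL (vtx k.1)).map (gi k.2)) (hi := fun k => fL_mono _ _) _ ?_ ?_ M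
  · intro Y hY i
    refine perp_of_ext _ fun s f => ?_
    obtain ⟨g, hg⟩ := hY (i, s) (((fLadj (vtx i)).homEquiv _ _).symm f)
    refine ⟨(fLadj (vtx i)).homEquiv _ _ g, ?_⟩
    rw [← (fLadj (vtx i)).homEquiv_naturality_left, hg, Equiv.apply_symm_apply]
  · intro N hN k
    obtain ⟨p, hp, _⟩ := gi_ses k.2
    have h1 := fL_SES (vtx k.1) hp
    have h2 : ext1Zero ((fL (vtx k.1)).obj (gZ k.2)) N := (fL_ext_iff _ _ _).2 (hN k.1 _ (gZ_pgf k.2))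
    have := fL_mono (vtx k.1) (gi k.2)
    obtain ⟨a, ha⟩ := (SES.coker ((fL (vtx k.1)).map (gi k.2))).desc _ h1.w
    obtain ⟨b, hb⟩ := h1.desc (cokernel.π ((fL (vtx k.1)).map (gi k.2))) (cokernel.condition _)
    refine ext1Zero.retract h2 a b ?_
    rw [← cancel_epi (cokernel.π _), ← Category.assoc, ha, hb, Category.comp_id]

variable {V R}
theorem main_aux (hV : LeftRooted V) :
    IsCotorsionPair {X : RepL V R | IsPGFRep V R X} (RepClass (rightPerp (AbsPGF (TR R)))) ∧
    IsCompleteCP {X : RepL V R | IsPGFRep V R X} (RepClass (rightPerp (AbsPGF (TR R)))) ∧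
    IsHereditaryCP {X : RepL V R | IsPGFRep V R X} (RepClass (rightPerp (AbsPGF (TR R)))) ∧
    {X : RepL V R | IsPGFRep V R X} ∩ RepClass (rightPerp (AbsPGF (TR R))) = {X | Projective X} := by
  have hG : {X : RepL V R | IsPGFRep V R X} = AbsPGF (TQ V R) := Set.ext (isPGFRep_iff V R)
  have hW := rep_perp_eq (vertex_absPGF (V := V) (R := R) (vertex_ext hV))
  have hpre := rep_pre V R
  have hP : ∀ P : RepL V R, Projective P → P ∈ rightPerp (AbsPGF (TQ V R)) := by
    intro P hP
    rw [← hW]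
    intro i
    have := eval_projective (vtx i) P
    exact proj_perp _
  rw [hG]
  rw [hW] at hpre ⊢
  have h2 := absPGF_twoSided (TQ V R)
  obtain ⟨hts, hc⟩ := abs_main h2 hP hpre
  have hT : TQ V R ⊆ rightPerp (AbsPGF (TQ V R)) := fun N hN X hX => absPGF_ext hX hN
  have hL : AbsPGF (TQ V R) = leftPerp (rightPerp (AbsPGF (TQ V R))) := by
    apply Set.Subset.antisymm
    · exact fun X hX N hN => hN X hX
    · exact fun X hX => ⟨_, hts, hX, fun Y hY N hN => hY N (hT hN)⟩
  refine ⟨⟨rfl, hL⟩, ?_, perp_hereditary h2 fun X hX N hN => hN X hX, ?_⟩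
  · rwa [← hL] at hc
  · apply Set.Subset.antisymm
    · rintro X ⟨hX, hXW⟩
      obtain ⟨⟨X', hX', P, f, g, hP', s⟩, _⟩ := h2 X hX
      obtain ⟨t, ht⟩ := hXW X' hX' _ f g s.1 s.2
      obtain ⟨r, hr⟩ := s.retraction ht
      exact projective_of_retract f r hr
    · intro X (hX : Projective X)
      refine ⟨?_, hP X hX⟩
      rw [hL]
      exact fun N _ => ext1Zero_projective X N

end Final
end QuiverGF

section Statements

open CategoryTheory CategoryTheory.Limits Opposite QuiverGF
open scoped DirectSum

theorem stmt17 (R : Type u) [Ring R] (V : Type u) [Quiver.{u} V] (hV : LeftRooted V) :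
    IsCotorsionPair {X : RepL V R | IsPGFRep V R X}
      (RepClass (V := V) (rightPerp {M : ModuleCat.{u} R | IsPGFModule R M})) ∧
    IsCompleteCP {X : RepL V R | IsPGFRep V R X}
      (RepClass (V := V) (rightPerp {M : ModuleCat.{u} R | IsPGFModule R M})) ∧
    IsHereditaryCP {X : RepL V R | IsPGFRep V R X}
      (RepClass (V := V) (rightPerp {M : ModuleCat.{u} R | IsPGFModule R M})) ∧
    {X : RepL V R | IsPGFRep V R X} ∩
        (RepClass (V := V) (rightPerp {M : ModuleCat.{u} R | IsPGFModule R M}))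
      = {X : RepL V R | Projective X} := by
  have h : {M : ModuleCat.{u} R | IsPGFModule R M} = AbsPGF (TR R) := Set.ext (isPGFModule_iff R)
  rw [h]
  exact main_aux hV

end Statements
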